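/- arXiv:1603.09218 — 2 statements merged into one kernel-verified Lean document; each statement's English description precedes it below -/
import Mathlib

section
/- The family of elements T^ε Y₁^{a₁} Y₂^{a₂} X₁^{b₁} X₂^{b₂}, with ε ∈ {0,1} and a₁, a₂, b₁, b₂ ∈ ℤ (negative exponents interpreted via the inverse generators), is a ℂ-vector-space basis of the double affine Hecke algebra H_{t,q}. -/
noncomputable section

/-- Generators of the double affine Hecke algebra of type GL₂:
`T, T⁻¹, X₁, X₁⁻¹, X₂, X₂⁻¹, Y₁, Y₁⁻¹, Y₂, Y₂⁻¹`. -/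
inductive DGen : Type
  | T | Ti | X1 | X1i | X2 | X2i | Y1 | Y1i | Y2 | Y2i

abbrev FD : Type := FreeAlgebra ℂ DGen

def gD : DGen → FD := FreeAlgebra.ι ℂ

/-- The defining relations of the double affine Hecke algebra `H_{t,q}` of type GL₂. -/
inductive DRel (q t : ℂ) : FD → FD → Prop
  | TTi : DRel q t (gD .T * gD .Ti) 1
  | TiT : DRel q t (gD .Ti * gD .T) 1
  | X1X1i : DRel q t (gD .X1 * gD .X1i) 1
  | X1iX1 : DRel q t (gD .X1i * gD .X1) 1
  | X2X2i : DRel q t (gD .X2 * gD .X2i) 1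
  | X2iX2 : DRel q t (gD .X2i * gD .X2) 1
  | Y1Y1i : DRel q t (gD .Y1 * gD .Y1i) 1
  | Y1iY1 : DRel q t (gD .Y1i * gD .Y1) 1
  | Y2Y2i : DRel q t (gD .Y2 * gD .Y2i) 1
  | Y2iY2 : DRel q t (gD .Y2i * gD .Y2) 1
  | TX1T : DRel q t (gD .T * gD .X1 * gD .T) (gD .X2)
  | TiY1Ti : DRel q t (gD .Ti * gD .Y1 * gD .Ti) (gD .Y2)
  | Xcomm : DRel q t (gD .X1 * gD .X2) (gD .X2 * gD .X1)
  | Ycomm : DRel q t (gD .Y1 * gD .Y2) (gD .Y2 * gD .Y1)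
  | YXX : DRel q t (gD .Y1 * (gD .X1 * gD .X2)) ((q ^ 2) • (gD .X1 * gD .X2 * gD .Y1))
  | X1iY2 : DRel q t (gD .X1i * gD .Y2) (gD .Y2 * gD .X1i * gD .Ti * gD .Ti)
  | hecke : DRel q t ((gD .T + algebraMap ℂ FD t⁻¹) * (gD .T - algebraMap ℂ FD t)) 0

/-- The double affine Hecke algebra `H_{t,q}` of type GL₂. -/
abbrev DAHA (q t : ℂ) : Type := RingQuot (DRel q t)

variable (q t : ℂ)

def T : DAHA q t := RingQuot.mkAlgHom ℂ (DRel q t) (gD .T)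
def Ti : DAHA q t := RingQuot.mkAlgHom ℂ (DRel q t) (gD .Ti)
def X1 : DAHA q t := RingQuot.mkAlgHom ℂ (DRel q t) (gD .X1)
def X1i : DAHA q t := RingQuot.mkAlgHom ℂ (DRel q t) (gD .X1i)
def X2 : DAHA q t := RingQuot.mkAlgHom ℂ (DRel q t) (gD .X2)
def X2i : DAHA q t := RingQuot.mkAlgHom ℂ (DRel q t) (gD .X2i)
def Y1 : DAHA q t := RingQuot.mkAlgHom ℂ (DRel q t) (gD .Y1)
def Y1i : DAHA q t := RingQuot.mkAlgHom ℂ (DRel q t) (gD .Y1i)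
def Y2 : DAHA q t := RingQuot.mkAlgHom ℂ (DRel q t) (gD .Y2)
def Y2i : DAHA q t := RingQuot.mkAlgHom ℂ (DRel q t) (gD .Y2i)

/-- Integer powers of an element `x` with designated inverse `xi`:
negative exponents are interpreted via the inverse generator. -/
def zp {M : Type*} [Monoid M] (x xi : M) : ℤ → M
  | Int.ofNat n => x ^ n
  | Int.negSucc n => xi ^ (n + 1)

/-- The PBW family `T^ε Y₁^{a₁} Y₂^{a₂} X₁^{b₁} X₂^{b₂}` of the DAHA,
indexed by `ε ∈ {0,1}` and `a₁, a₂, b₁, b₂ ∈ ℤ`. -/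
def pbwDAHA (q t : ℂ) : Fin 2 × ℤ × ℤ × ℤ × ℤ → DAHA q t :=
  fun x => T q t ^ (x.1 : ℕ) * zp (Y1 q t) (Y1i q t) x.2.1 * zp (Y2 q t) (Y2i q t) x.2.2.1 *
    zp (X1 q t) (X1i q t) x.2.2.2.1 * zp (X2 q t) (X2i q t) x.2.2.2.2

namespace PBW

/-! ### Spanning -/

section span
variable {E : Type*} [Ring E] [Algebra ℂ E]

def Pm (τ : Eˣ) : Submodule ℂ E := Submodule.span ℂ {1, (τ : E)}

def Am (x y : Eˣ) : Submodule ℂ E :=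
  Submodule.span ℂ (Set.range fun p : ℤ × ℤ => ((x ^ p.1 * y ^ p.2 : Eˣ) : E))

theorem one_mem_Pm (τ : Eˣ) : (1 : E) ∈ Pm τ := Submodule.subset_span (by simp)
theorem self_mem_Pm (τ : Eˣ) : (τ : E) ∈ Pm τ := Submodule.subset_span (by simp)
theorem mem_Am (x y : Eˣ) (a b : ℤ) : ((x ^ a * y ^ b : Eˣ) : E) ∈ Am x y :=
  Submodule.subset_span ⟨(a, b), rfl⟩
theorem one_mem_Am (x y : Eˣ) : (1 : E) ∈ Am x y := by simpa using mem_Am x y 0 0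
theorem x_mem_Am (x y : Eˣ) : (x : E) ∈ Am x y := by simpa using mem_Am x y 1 0
theorem y_mem_Am (x y : Eˣ) : (y : E) ∈ Am x y := by simpa using mem_Am x y 0 1
theorem xi_mem_Am (x y : Eˣ) : ((x⁻¹ : Eˣ) : E) ∈ Am x y := by simpa using mem_Am x y (-1) 0
theorem yi_mem_Am (x y : Eˣ) : ((y⁻¹ : Eˣ) : E) ∈ Am x y := by simpa using mem_Am x y 0 (-1)

theorem inv_eq {τ : Eˣ} {c : ℂ} (h : (τ * τ : E) = 1 + c • (τ : E)) :
    ((τ⁻¹ : Eˣ) : E) = τ - c • 1 := by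
  have : (τ : E) * ((τ : E) - c • 1) = 1 := by
    rw [mul_sub, h]; simp
  calc ((τ⁻¹ : Eˣ) : E) = ((τ⁻¹ : Eˣ) : E) * ((τ : E) * ((τ : E) - c • 1)) := by rw [this, mul_one]
    _ = _ := by rw [← mul_assoc, Units.inv_mul, one_mul]

theorem inv_mem_Pm {τ : Eˣ} {c : ℂ} (h : (τ * τ : E) = 1 + c • (τ : E)) :
    ((τ⁻¹ : Eˣ) : E) ∈ Pm τ := by
  rw [inv_eq h]
  exact sub_mem (self_mem_Pm τ) (Submodule.smul_mem _ _ (one_mem_Pm τ))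

theorem Pm_mul {τ : Eˣ} {c : ℂ} (h : (τ * τ : E) = 1 + c • (τ : E)) : Pm τ * Pm τ ≤ Pm τ := by
  conv_lhs => rw [Pm, Submodule.span_mul_span]
  rw [Submodule.span_le]
  rintro _ ⟨a, (rfl | rfl), b, (rfl | rfl), rfl⟩
  · simpa using one_mem_Pm τ
  · simpa using self_mem_Pm τ
  · simpa using self_mem_Pm τ
  · show (τ * τ : E) ∈ Pm τ
    rw [h]
    exact add_mem (one_mem_Pm τ) (Submodule.smul_mem _ _ (self_mem_Pm τ))

theorem Am_mul {x y : Eˣ} (h : x * y = y * x) : Am x y * Am x y ≤ Am x y := by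
  conv_lhs => rw [Am, Submodule.span_mul_span]
  rw [Submodule.span_le]
  rintro _ ⟨_, ⟨p, rfl⟩, _, ⟨r, rfl⟩, rfl⟩
  have hc : Commute x y := h
  have : (x ^ p.1 * y ^ p.2) * (x ^ r.1 * y ^ r.2) = x ^ (p.1 + r.1) * y ^ (p.2 + r.2) := by
    rw [zpow_add, zpow_add, mul_assoc, ← mul_assoc (y ^ p.2), ((hc.zpow_zpow r.1 p.2).eq).symm]
    simp only [mul_assoc]
  simp only [← Units.val_mul]
  rw [this]
  exact mem_Am _ _ _ _

theorem Am_mul_tau {τ x y : Eˣ} {c : ℂ} (hτ : (τ * τ : E) = 1 + c • (τ : E))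
    (hx : τ * x * τ = y) (h : x * y = y * x) : Am x y * Pm τ ≤ Pm τ * Am x y := by
  have hPA : Pm τ * Am x y * Am x y ≤ Pm τ * Am x y := by
    rw [mul_assoc]; exact mul_le_mul' le_rfl (Am_mul h)
  have hA : Am x y ≤ Pm τ * Am x y := fun z hz => by
    simpa using Submodule.mul_mem_mul (one_mem_Pm τ) hz
  -- powers of x
  have hxt : x * τ = τ⁻¹ * y := by rw [← hx]; group
  have hxt' : (x : E) * τ = ((τ : E) - c • 1) * y := by
    rw [← inv_eq hτ]; exact_mod_cast congrArg Units.val hxt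
  have hxi : x⁻¹ * τ⁻¹ = τ * y⁻¹ := by rw [← hx]; group
  have hxi' : ((x⁻¹ : Eˣ) : E) * τ = τ * ((y⁻¹ : Eˣ) : E) + c • ((x⁻¹ : Eˣ) : E) := by
    have h1 := congrArg Units.val hxi
    rw [Units.val_mul, Units.val_mul, inv_eq hτ, mul_sub] at h1
    rw [← h1]; simp
  have hpow : ∀ n : ℤ, ((x ^ n : Eˣ) : E) * τ ∈ Pm τ * Am x y := by
    have hxn : ∀ n : ℤ, ((x ^ n : Eˣ) : E) ∈ Am x y := fun n => by simpa using mem_Am x y n 0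
    intro n
    induction n using Int.induction_on with
    | zero => simpa using Submodule.mul_mem_mul (self_mem_Pm τ) (one_mem_Am x y)
    | succ n ih =>
      have : ((x ^ ((n:ℤ) + 1) : Eˣ) : E) * τ
          = (((x ^ (n:ℤ) : Eˣ) : E) * τ) * y - c • (((x ^ (n:ℤ) : Eˣ) : E) * y) := by
        rw [zpow_add_one, Units.val_mul, mul_assoc, hxt']
        simp [sub_mul, mul_sub, mul_assoc]
      rw [this]
      refine sub_mem (hPA (Submodule.mul_mem_mul ih (y_mem_Am x y))) (Submodule.smul_mem _ _ ?_)
      exact hPA (Submodule.mul_mem_mul (hA (hxn _)) (y_mem_Am x y))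
    | pred n ih =>
      have : ((x ^ (-(n:ℤ) - 1) : Eˣ) : E) * τ
          = (((x ^ (-(n:ℤ)) : Eˣ) : E) * τ) * ((y⁻¹ : Eˣ) : E)
            + c • ((x ^ (-(n:ℤ) - 1) : Eˣ) : E) := by
        rw [zpow_sub_one, Units.val_mul, mul_assoc, hxi', mul_add, mul_assoc, mul_smul_comm]
      rw [this]
      refine add_mem (hPA (Submodule.mul_mem_mul ih (yi_mem_Am x y))) (Submodule.smul_mem _ _ ?_)
      exact hA (hxn _)
  -- xy commutes with τ
  have hc : Commute (x * y) τ := by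
    show x * y * τ = τ * (x * y)
    rw [h]
    calc y * x * τ = (τ * x * τ) * (x * τ) := by rw [hx, mul_assoc]
      _ = τ * x * (τ * x * τ) := by simp only [mul_assoc]
      _ = _ := by rw [hx, ← h, mul_assoc]
  have hxy : Commute x y := h
  conv_lhs => rw [Am, Pm, Submodule.span_mul_span]
  rw [Submodule.span_le]
  rintro _ ⟨_, ⟨⟨a, b⟩, rfl⟩, z, (rfl | rfl), rfl⟩
  · simp only [mul_one]
    exact hA (mem_Am _ _ _ _)
  · have : x ^ a * y ^ b * τ = x ^ (a - b) * τ * (x ^ b * y ^ b) := by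
      rw [mul_assoc _ τ, ← hxy.mul_zpow, ← (hc.zpow_left b).eq, hxy.mul_zpow,
        zpow_sub]
      group
    show ((x ^ a * y ^ b : Eˣ) : E) * τ ∈ _
    rw [← Units.val_mul, this, Units.val_mul, Units.val_mul]
    exact hPA (Submodule.mul_mem_mul (hpow _) (mem_Am _ _ _ _))

theorem Am_mul_pi {x y π : Eˣ} {p : ℂ} (hp : p ≠ 0) (h : x * y = y * x)
    (h1 : π * y = x * π) (h2 : (π * x : E) = p • (y * π : E)) :
    (∀ z ∈ Am x y, z * (π : E) ∈ Submodule.span ℂ {(π : E)} * Am x y) ∧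
    (∀ z ∈ Am x y, z * ((π⁻¹ : Eˣ) : E) ∈ Submodule.span ℂ {((π⁻¹ : Eˣ) : E)} * Am x y) := by
  let pu : Eˣ := Units.map (algebraMap ℂ E).toMonoidHom (Units.mk0 p hp)
  have hpc : ∀ z : Eˣ, Commute pu z := fun z => Units.ext (Algebra.commutes p (z : E))
  have hpv : ∀ n : ℤ, ((pu ^ n : Eˣ) : E) = algebraMap ℂ E (p ^ n) := by
    intro n
    show (((Units.map (algebraMap ℂ E).toMonoidHom (Units.mk0 p hp)) ^ n : Eˣ) : E) = _
    rw [← map_zpow]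
    show algebraMap ℂ E ((Units.mk0 p hp ^ n : ℂˣ) : ℂ) = _
    rw [Units.val_zpow_eq_zpow_val, Units.val_mk0]
  have h2' : π * x = pu * y * π := by
    apply Units.ext
    rw [Units.val_mul, h2, Algebra.smul_def]
    simp [pu, mul_assoc]
  have hxy : Commute x y := h
  have e1 : SemiconjBy π⁻¹ x y := by
    show π⁻¹ * x = y * π⁻¹
    rw [inv_mul_eq_iff_eq_mul, ← mul_assoc, h1]; group
  have e2 : SemiconjBy π⁻¹ y (pu⁻¹ * x) := by
    show π⁻¹ * y = pu⁻¹ * x * π⁻¹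
    rw [inv_mul_eq_iff_eq_mul, ← mul_assoc, ← mul_assoc, ← ((hpc π).inv_left).eq, mul_assoc pu⁻¹, h2']
    group
  have e3 : SemiconjBy π y x := h1
  have e4 : SemiconjBy π x (pu * y) := h2'
  have key1 : ∀ a b : ℤ, x ^ a * y ^ b * π = π * (pu ^ (-b) * (x ^ b * y ^ a)) := by
    intro a b
    have s1 := e1.zpow_right a
    have s2 := e2.zpow_right b
    have s3 : π⁻¹ * (x ^ a * y ^ b) = y ^ a * (pu⁻¹ * x) ^ b * π⁻¹ := (s1.mul_right s2).eq
    have : x ^ a * y ^ b * π = π * (y ^ a * (pu⁻¹ * x) ^ b) := by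
      calc x ^ a * y ^ b * π = π * (π⁻¹ * (x ^ a * y ^ b)) * π := by group
        _ = _ := by rw [s3]; group
    rw [this, ((hpc x).inv_left).mul_zpow, inv_zpow, zpow_neg, ← mul_assoc (y ^ a),
      ← (((hpc (y ^ a)).zpow_left b).inv_left).eq, mul_assoc (pu ^ b)⁻¹,
      (hxy.zpow_zpow b a).eq]
  have key2 : ∀ a b : ℤ, x ^ a * y ^ b * π⁻¹ = π⁻¹ * (pu ^ a * (x ^ b * y ^ a)) := by
    intro a b
    have s3 : π * (x ^ a * y ^ b) = (pu * y) ^ a * x ^ b * π :=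
      ((e4.zpow_right a).mul_right (e3.zpow_right b)).eq
    have : x ^ a * y ^ b * π⁻¹ = π⁻¹ * ((pu * y) ^ a * x ^ b) := by
      calc x ^ a * y ^ b * π⁻¹ = π⁻¹ * (π * (x ^ a * y ^ b)) * π⁻¹ := by group
        _ = _ := by rw [s3]; group
    rw [this, (hpc y).mul_zpow, mul_assoc (pu ^ a), (hxy.zpow_zpow b a).eq]
  have gen : ∀ (ϖ : Eˣ) (r : ℤ × ℤ → ℤ) (hk : ∀ a b : ℤ, x ^ a * y ^ b * ϖ = ϖ * (pu ^ (r (a, b)) * (x ^ b * y ^ a))),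
      ∀ z ∈ Am x y, z * (ϖ : E) ∈ Submodule.span ℂ {(ϖ : E)} * Am x y := by
    intro ϖ r hk z hz
    have : Am x y * Submodule.span ℂ {(ϖ : E)} ≤ Submodule.span ℂ {(ϖ : E)} * Am x y := by
      conv_lhs => rw [Am, Submodule.span_mul_span]
      rw [Submodule.span_le]
      rintro _ ⟨_, ⟨⟨a, b⟩, rfl⟩, z, rfl, rfl⟩
      show ((x ^ a * y ^ b : Eˣ) : E) * ϖ ∈ _
      rw [← Units.val_mul, hk, Units.val_mul, Units.val_mul, hpv, ← Algebra.smul_def]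
      exact Submodule.mul_mem_mul (Submodule.mem_span_singleton_self _)
        (Submodule.smul_mem _ _ (mem_Am _ _ _ _))
    exact this (Submodule.mul_mem_mul hz (Submodule.mem_span_singleton_self _))
  exact ⟨gen π (fun p => -p.2) key1, gen π⁻¹ (fun p => p.1) key2⟩

end span

end PBW
set_option linter.unusedSimpArgs false

namespace PBW

theorem zp_unit {M : Type*} [Monoid M] (u : Mˣ) (n : ℤ) :
    zp (u : M) ((u⁻¹ : Mˣ) : M) n = ((u ^ n : Mˣ) : M) := by
  cases n with
  | ofNat n => simp [zp]
  | negSucc n => simp [zp, zpow_negSucc, ← inv_pow]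

section
variable (q t : ℂ)

abbrev mk : FD →ₐ[ℂ] DAHA q t := RingQuot.mkAlgHom ℂ (DRel q t)

def uT : (DAHA q t)ˣ := ⟨T q t, Ti q t,
  by (have h := RingQuot.mkAlgHom_rel ℂ (DRel.TTi (q := q) (t := t)); simp only [map_mul, map_one, map_smul] at h; exact h),
  by (have h := RingQuot.mkAlgHom_rel ℂ (DRel.TiT (q := q) (t := t)); simp only [map_mul, map_one, map_smul] at h; exact h)⟩
def uX1 : (DAHA q t)ˣ := ⟨X1 q t, X1i q t,
  by (have h := RingQuot.mkAlgHom_rel ℂ (DRel.X1X1i (q := q) (t := t)); simp only [map_mul, map_one, map_smul] at h; exact h),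
  by (have h := RingQuot.mkAlgHom_rel ℂ (DRel.X1iX1 (q := q) (t := t)); simp only [map_mul, map_one, map_smul] at h; exact h)⟩
def uX2 : (DAHA q t)ˣ := ⟨X2 q t, X2i q t,
  by (have h := RingQuot.mkAlgHom_rel ℂ (DRel.X2X2i (q := q) (t := t)); simp only [map_mul, map_one, map_smul] at h; exact h),
  by (have h := RingQuot.mkAlgHom_rel ℂ (DRel.X2iX2 (q := q) (t := t)); simp only [map_mul, map_one, map_smul] at h; exact h)⟩
def uY1 : (DAHA q t)ˣ := ⟨Y1 q t, Y1i q t,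
  by (have h := RingQuot.mkAlgHom_rel ℂ (DRel.Y1Y1i (q := q) (t := t)); simp only [map_mul, map_one, map_smul] at h; exact h),
  by (have h := RingQuot.mkAlgHom_rel ℂ (DRel.Y1iY1 (q := q) (t := t)); simp only [map_mul, map_one, map_smul] at h; exact h)⟩
def uY2 : (DAHA q t)ˣ := ⟨Y2 q t, Y2i q t,
  by (have h := RingQuot.mkAlgHom_rel ℂ (DRel.Y2Y2i (q := q) (t := t)); simp only [map_mul, map_one, map_smul] at h; exact h),
  by (have h := RingQuot.mkAlgHom_rel ℂ (DRel.Y2iY2 (q := q) (t := t)); simp only [map_mul, map_one, map_smul] at h; exact h)⟩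

theorem r_TX : uT q t * uX1 q t * uT q t = uX2 q t := by
  apply Units.ext
  (have h := RingQuot.mkAlgHom_rel ℂ (DRel.TX1T (q := q) (t := t)); simp only [map_mul, map_one, map_smul] at h; exact h)

theorem r_TY : uT q t * uY2 q t * uT q t = uY1 q t := by
  have : (uT q t)⁻¹ * uY1 q t * (uT q t)⁻¹ = uY2 q t := by
    apply Units.ext
    (have h := RingQuot.mkAlgHom_rel ℂ (DRel.TiY1Ti (q := q) (t := t)); simp only [map_mul, map_one, map_smul] at h; exact h)
  rw [← this]; group

theorem r_X : uX1 q t * uX2 q t = uX2 q t * uX1 q t := by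
  apply Units.ext
  (have h := RingQuot.mkAlgHom_rel ℂ (DRel.Xcomm (q := q) (t := t)); simp only [map_mul, map_one, map_smul] at h; exact h)

theorem r_Y : uY2 q t * uY1 q t = uY1 q t * uY2 q t := by
  apply Units.ext
  (have h := (RingQuot.mkAlgHom_rel ℂ (DRel.Ycomm (q := q) (t := t))).symm; simp only [map_mul, map_one, map_smul] at h; exact h)

theorem r_XY : uX1 q t * uY2 q t = uY2 q t * uT q t * uT q t * uX1 q t := by
  have : (uX1 q t)⁻¹ * uY2 q t = uY2 q t * (uX1 q t)⁻¹ * (uT q t)⁻¹ * (uT q t)⁻¹ := by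
    apply Units.ext
    (have h := RingQuot.mkAlgHom_rel ℂ (DRel.X1iY2 (q := q) (t := t)); simp only [map_mul, map_one, map_smul] at h; exact h)
  have h2 : uY2 q t = uX1 q t * (uY2 q t * (uX1 q t)⁻¹ * (uT q t)⁻¹ * (uT q t)⁻¹) := by
    rw [← this]; group
  have h3 := congrArg (fun z => z * uT q t * uT q t * uX1 q t) h2
  rw [eq_comm] at h3
  simpa [mul_assoc] using h3

theorem r_YXX : (Y1 q t * (X1 q t * X2 q t)) = (q ^ 2) • (X1 q t * X2 q t * Y1 q t) := by
  (have h := RingQuot.mkAlgHom_rel ℂ (DRel.YXX (q := q) (t := t)); simp only [map_mul, map_one, map_smul] at h; exact h)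

theorem r_H (ht : t ≠ 0) :
    (uT q t * uT q t : DAHA q t) = 1 + (t - t⁻¹) • (uT q t : DAHA q t) := by
  have h := RingQuot.mkAlgHom_rel ℂ (DRel.hecke (q := q) (t := t))
  rw [map_mul, map_add, map_sub, map_zero, AlgHom.commutes, AlgHom.commutes] at h
  change (T q t + _) * (T q t - _) = 0 at h
  show T q t * T q t = 1 + (t - t⁻¹) • T q t
  rw [Algebra.algebraMap_eq_smul_one, Algebra.algebraMap_eq_smul_one] at h
  simp only [add_mul, mul_sub, smul_add, smul_mul_assoc, one_mul, mul_smul_comm, mul_one, smul_smul,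
    mul_inv_cancel₀ ht, one_smul] at h
  rw [← sub_eq_zero, ← h]
  module

theorem grp_aux {G : Type*} [Group G] {T X1 X2 Y1 Y2 p : G} (hT : Commute p T)
    (hX : Commute p X1) (h1 : T * X1 * T = X2) (h2 : X1 * X2 = X2 * X1) (h3 : T * Y2 * T = Y1)
    (h4 : X1 * Y2 = Y2 * T * T * X1) (h5 : Y1 * (X1 * X2) = p * (X1 * X2 * Y1)) :
    (Y2 * T) * X2 = X1 * (Y2 * T) ∧ (Y2 * T) * X1 = p * X2 * (Y2 * T) := by
  have a1 : (Y2 * T) * X2 = X1 * (Y2 * T) := by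
    rw [← mul_assoc X1, h4, ← h1]; group
  refine ⟨a1, ?_⟩
  have hc : X1 * X2 * T = T * (X1 * X2) := by
    rw [h2]
    calc X2 * X1 * T = (T * X1 * T) * (X1 * T) := by rw [h1, mul_assoc]
      _ = T * X1 * (T * X1 * T) := by simp only [mul_assoc]
      _ = _ := by rw [h1, ← h2, mul_assoc]
  have h6 : T * ((Y2 * T) * (X1 * X2)) = T * (p * (X1 * X2 * (Y2 * T))) := by
    calc T * ((Y2 * T) * (X1 * X2)) = Y1 * (X1 * X2) := by rw [← h3]; group
      _ = p * (X1 * X2 * Y1) := h5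
      _ = p * ((X1 * X2 * T) * (Y2 * T)) := by rw [← h3]; group
      _ = (p * T) * (X1 * X2 * (Y2 * T)) := by rw [hc]; group
      _ = _ := by rw [hT.eq]; group
  have h7 := mul_left_cancel h6
  rw [h2, ← mul_assoc (Y2 * T), a1, ← h2, ← mul_assoc p, ← mul_assoc p, hX.eq] at h7
  have h8 : X1 * (Y2 * T * X1) = X1 * (p * X2 * (Y2 * T)) := by
    simpa only [mul_assoc] using h7
  exact mul_left_cancel h8

theorem span_top (hq : q ≠ 0) (ht : t ≠ 0) :
    Submodule.span ℂ (Set.range (pbwDAHA q t)) = ⊤ := by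
  let p : ℂ := q ^ 2
  have hp : p ≠ 0 := pow_ne_zero 2 hq
  let pu : (DAHA q t)ˣ := Units.map (algebraMap ℂ (DAHA q t)).toMonoidHom (Units.mk0 p hp)
  have hpc : ∀ z : (DAHA q t)ˣ, Commute pu z := fun z => Units.ext (Algebra.commutes p (z : DAHA q t))
  let τ := uT q t
  let x := uX1 q t
  let x' := uX2 q t
  let y := uY2 q t
  let y' := uY1 q t
  have hτ := r_H q t ht
  obtain ⟨g1, g2⟩ := grp_aux (hpc τ) (hpc x) (r_TX q t) (r_X q t) (r_TY q t) (r_XY q t)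
    (Units.ext (by
      have := r_YXX q t
      rw [Algebra.smul_def] at this
      exact this))
  let π := y * τ
  have g2' : (π * x : DAHA q t) = p • (x' * π : DAHA q t) := by
    rw [Algebra.smul_def, ← mul_assoc]
    exact congrArg Units.val g2
  obtain ⟨k1, k2⟩ := Am_mul_pi hp (r_X q t) g1 g2'
  have ax := Am_mul_tau hτ (r_TX q t) (r_X q t)
  have ay := Am_mul_tau hτ (r_TY q t) (r_Y q t)
  have pp := Pm_mul hτ
  have axx := Am_mul (r_X q t)
  have ayy := Am_mul (r_Y q t)
  set P := Pm τ
  set AX := Am x x'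
  set AY := Am y y'
  let Q := P * AY
  have hQQ : Q * Q ≤ Q := by
    calc P * AY * (P * AY) = P * (AY * P) * AY := by simp only [mul_assoc]
      _ ≤ P * (P * AY) * AY := mul_le_mul' (mul_le_mul' le_rfl ay) le_rfl
      _ = (P * P) * (AY * AY) := by simp only [mul_assoc]
      _ ≤ P * AY := mul_le_mul' pp ayy
  have hPQ : P ≤ Q := fun z hz => by
    simpa using Submodule.mul_mem_mul hz (one_mem_Am y y')
  have hYQ : AY ≤ Q := fun z hz => by
    simpa using Submodule.mul_mem_mul (one_mem_Pm τ) hz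
  have hπ : (π : DAHA q t) ∈ Q := by
    have := hQQ (Submodule.mul_mem_mul (hYQ (x_mem_Am y y')) (hPQ (self_mem_Pm τ)))
    simpa [π] using this
  have hπi : ((π⁻¹ : (DAHA q t)ˣ) : DAHA q t) ∈ Q := by
    have := hQQ (Submodule.mul_mem_mul (hPQ (inv_mem_Pm hτ)) (hYQ (xi_mem_Am y y')))
    simpa [π] using this
  let S := Q * AX
  have hSP : S * P ≤ S := by
    calc Q * AX * P = Q * (AX * P) := mul_assoc _ _ _
      _ ≤ Q * (P * AX) := mul_le_mul' le_rfl ax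
      _ = (Q * P) * AX := (mul_assoc _ _ _).symm
      _ ≤ (Q * Q) * AX := mul_le_mul' (mul_le_mul' le_rfl hPQ) le_rfl
      _ ≤ S := mul_le_mul' hQQ le_rfl
  have hSX : S * AX ≤ S := by
    calc Q * AX * AX = Q * (AX * AX) := mul_assoc _ _ _
      _ ≤ S := mul_le_mul' le_rfl axx
  have hSπ : ∀ ϖ ∈ Q, (∀ z ∈ AX, z * ϖ ∈ Submodule.span ℂ {ϖ} * AX) → ∀ z ∈ S, z * ϖ ∈ S := by
    intro ϖ hϖ hk z hz
    have h1 : Submodule.span ℂ {ϖ} ≤ Q := by simpa [Submodule.span_le] using hϖ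
    have h2 : AX * Submodule.span ℂ {ϖ} ≤ Submodule.span ℂ {ϖ} * AX := by
      rw [Submodule.mul_le]
      intro m hm n hn
      obtain ⟨c, rfl⟩ := Submodule.mem_span_singleton.mp hn
      rw [mul_smul_comm]
      exact Submodule.smul_mem _ _ (hk m hm)
    have h3 : S * Submodule.span ℂ {ϖ} ≤ S := by
      calc Q * AX * Submodule.span ℂ {ϖ} = Q * (AX * Submodule.span ℂ {ϖ}) := mul_assoc _ _ _
        _ ≤ Q * (Submodule.span ℂ {ϖ} * AX) := mul_le_mul' le_rfl h2
        _ = (Q * Submodule.span ℂ {ϖ}) * AX := (mul_assoc _ _ _).symm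
        _ ≤ (Q * Q) * AX := mul_le_mul' (mul_le_mul' le_rfl h1) le_rfl
        _ ≤ S := mul_le_mul' hQQ le_rfl
    exact h3 (Submodule.mul_mem_mul hz (Submodule.mem_span_singleton_self _))
  let St : Subalgebra ℂ (DAHA q t) :=
    { carrier := {h | ∀ z ∈ S, z * h ∈ S}
      mul_mem' := fun {a b} ha hb z hz => by
        rw [← mul_assoc]; exact hb _ (ha _ hz)
      add_mem' := fun {a b} ha hb z hz => by
        rw [mul_add]; exact add_mem (ha _ hz) (hb _ hz)
      algebraMap_mem' := fun r z hz => by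
        rw [← Algebra.commutes, ← Algebra.smul_def]; exact Submodule.smul_mem _ _ hz }
  have mP : ∀ a ∈ P, a ∈ St := fun a ha z hz => hSP (Submodule.mul_mem_mul hz ha)
  have mX : ∀ a ∈ AX, a ∈ St := fun a ha z hz => hSX (Submodule.mul_mem_mul hz ha)
  have mπ : (π : DAHA q t) ∈ St := hSπ _ hπ k1
  have mπi : ((π⁻¹ : (DAHA q t)ˣ) : DAHA q t) ∈ St := hSπ _ hπi k2
  have mT := mP _ (self_mem_Pm τ)
  have mTi := mP _ (inv_mem_Pm hτ)
  have mgen : ∀ g : DGen, mk q t (gD g) ∈ St := by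
    intro g
    cases g with
    | T => exact mT
    | Ti => exact mTi
    | X1 => exact mX _ (x_mem_Am x x')
    | X1i => exact mX _ (xi_mem_Am x x')
    | X2 => exact mX _ (y_mem_Am x x')
    | X2i => exact mX _ (yi_mem_Am x x')
    | Y1 =>
      have : y' = τ * π := by rw [show y' = τ * y * τ from (r_TY q t).symm, mul_assoc]
      show (y' : DAHA q t) ∈ St
      rw [this]; exact St.mul_mem mT mπ
    | Y1i =>
      have : y'⁻¹ = π⁻¹ * τ⁻¹ := by
        rw [show y' = τ * y * τ from (r_TY q t).symm, mul_assoc, mul_inv_rev]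
      show ((y'⁻¹ : (DAHA q t)ˣ) : DAHA q t) ∈ St
      rw [this]; exact St.mul_mem mπi mTi
    | Y2 =>
      have : y = π * τ⁻¹ := by simp [π]
      show (y : DAHA q t) ∈ St
      rw [this]; exact St.mul_mem mπ mTi
    | Y2i =>
      have : y⁻¹ = τ * π⁻¹ := by simp [π]
      show ((y⁻¹ : (DAHA q t)ˣ) : DAHA q t) ∈ St
      rw [this]; exact St.mul_mem mT mπi
  have hSt : ∀ h, h ∈ St := by
    intro h
    obtain ⟨f, rfl⟩ := RingQuot.mkAlgHom_surjective ℂ (DRel q t) h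
    have : f ∈ Algebra.adjoin ℂ (Set.range (FreeAlgebra.ι ℂ : DGen → FD)) := by
      rw [FreeAlgebra.adjoin_range_ι]; trivial
    have hle : Algebra.adjoin ℂ (Set.range (FreeAlgebra.ι ℂ : DGen → FD)) ≤ St.comap (mk q t) := by
      rw [Algebra.adjoin_le_iff]
      rintro _ ⟨g, rfl⟩
      exact mgen g
    exact hle this
  have h1S : (1 : DAHA q t) ∈ S := by
    simpa using Submodule.mul_mem_mul (hPQ (one_mem_Pm τ)) (one_mem_Am x x')
  have hS : S = ⊤ := by
    rw [eq_top_iff]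
    intro h _
    simpa using hSt h 1 h1S
  rw [eq_top_iff, ← hS]
  show P * AY * AX ≤ _
  simp only [P, AY, AX, Pm, Am]
  rw [Submodule.span_mul_span, Submodule.span_mul_span, Submodule.span_le]
  have hY : Commute y y' := r_Y q t
  have key : ∀ (e : Fin 2) (a b c d : ℤ), pbwDAHA q t (e, a, b, c, d) =
      (τ : DAHA q t) ^ (e : ℕ) * ((y ^ b * y' ^ a : (DAHA q t)ˣ) : DAHA q t) *
        ((x ^ c * x' ^ d : (DAHA q t)ˣ) : DAHA q t) := by
    intro e a b c d
    rw [(hY.zpow_zpow b a).eq]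
    simp only [Units.val_mul, ← zp_unit, ← mul_assoc]
    rfl
  rintro _ ⟨_, ⟨z, hz, _, ⟨⟨b, a⟩, rfl⟩, rfl⟩, _, ⟨⟨c, d⟩, rfl⟩, rfl⟩
  apply Submodule.subset_span
  rcases hz with rfl | rfl
  · exact ⟨(0, a, b, c, d), by rw [key]; simp⟩
  · exact ⟨(1, a, b, c, d), by rw [key]; simp⟩

/-- The homomorphism out of the algebra. -/
theorem exists_hom {E : Type*} [Ring E] [Algebra ℂ E] (ht : t ≠ 0) (τ π x y : Eˣ)
    (hτ : (τ * τ : E) = 1 + (t - t⁻¹) • (τ : E)) (hx : τ * x * τ = y) (hxy : x * y = y * x)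
    (h1 : π * y = x * π) (h2 : (π * x : E) = (q ^ 2) • (y * π : E)) (h3 : π * π * τ = τ * (π * π)) :
    ∃ f : DAHA q t →ₐ[ℂ] E, Units.map f.toMonoidHom (uT q t) = τ ∧
      Units.map f.toMonoidHom (uX1 q t) = x ∧ Units.map f.toMonoidHom (uX2 q t) = y ∧
      Units.map f.toMonoidHom (uY1 q t) = τ * π ∧ Units.map f.toMonoidHom (uY2 q t) = π * τ⁻¹ := by
  let v : DGen → Eˣ := fun g => match g with
    | .T => τ | .Ti => τ⁻¹ | .X1 => x | .X1i => x⁻¹ | .X2 => y | .X2i => y⁻¹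
    | .Y1 => τ * π | .Y1i => (τ * π)⁻¹ | .Y2 => π * τ⁻¹ | .Y2i => (π * τ⁻¹)⁻¹
  let f0 : FD →ₐ[ℂ] E := FreeAlgebra.lift ℂ (fun g => (v g : E))
  have hv : ∀ g, f0 (gD g) = v g := fun g => FreeAlgebra.lift_ι_apply _ _
  have hc : x * y * τ = τ * (x * y) := by
    rw [hxy]
    calc y * x * τ = (τ * x * τ) * (x * τ) := by rw [hx, mul_assoc]
      _ = τ * x * (τ * x * τ) := by simp only [mul_assoc]
      _ = _ := by rw [hx, ← hxy, mul_assoc]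
  have hc' : (x * y * τ : E) = τ * (x * y) := by exact_mod_cast congrArg Units.val hc
  have h1' : (π * y : E) = x * π := by exact_mod_cast congrArg Units.val h1
  have hxy' : (x * y : E) = y * x := by exact_mod_cast congrArg Units.val hxy
  have hrel : ∀ ⦃a b : FD⦄, DRel q t a b → f0 a = f0 b := by
    intro a b hab
    cases hab with
    | YXX =>
      simp only [map_mul, map_smul, hv, v, Units.val_mul]
      calc (τ : E) * π * (x * y) = τ * ((π * x) * y) := by simp only [mul_assoc]
        _ = (q ^ 2) • (τ * (y * (π * y))) := by
            rw [h2]; simp only [smul_mul_assoc, mul_smul_comm, mul_assoc]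
        _ = (q ^ 2) • ((τ * (x * y)) * π) := by rw [h1', hxy']; simp only [mul_assoc]
        _ = _ := by rw [← hc']; simp only [mul_assoc]
    | hecke =>
      simp only [map_mul, map_add, map_sub, map_zero, AlgHom.commutes, hv, v]
      rw [Algebra.algebraMap_eq_smul_one, Algebra.algebraMap_eq_smul_one]
      simp only [add_mul, mul_sub, smul_add, smul_mul_assoc, one_mul, mul_smul_comm, mul_one, smul_smul,
        mul_inv_cancel₀ ht, one_smul, hτ]
      module
    | TX1T => simp only [map_mul, hv, v, ← Units.val_mul, hx]
    | TiY1Ti =>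
      simp only [map_mul, hv, v, ← Units.val_mul]
      congr 1; group
    | Xcomm => simp only [map_mul, hv, v, ← Units.val_mul, hxy]
    | Ycomm =>
      simp only [map_mul, hv, v, ← Units.val_mul]
      congr 1
      calc τ * π * (π * τ⁻¹) = τ * (π * π) * τ⁻¹ := by group
        _ = _ := by rw [← h3]; group
    | X1iY2 =>
      simp only [map_mul, hv, v, ← Units.val_mul]
      congr 1
      have e1 : x⁻¹ * π = π * y⁻¹ := by
        rw [inv_mul_eq_iff_eq_mul, ← mul_assoc, ← h1]; group
      rw [← mul_assoc, e1, ← hx]; group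
    | _ => simp [hv, v, -mul_inv_rev]
  let f : DAHA q t →ₐ[ℂ] E := RingQuot.liftAlgHom ℂ ⟨f0, hrel⟩
  have hf : ∀ g, f (mk q t (gD g)) = v g := fun g => by
    rw [← hv]; exact RingQuot.liftAlgHom_mkAlgHom_apply _ _ _ _
  exact ⟨f, Units.ext (hf .T), Units.ext (hf .X1), Units.ext (hf .X2), Units.ext (hf .Y1),
    Units.ext (hf .Y2)⟩

end

end PBW
namespace PBW

/-! ### The field -/

abbrev LL := AddMonoidAlgebra ℂ (ℤ × ℤ)

def psi (u v : ℂˣ) : LL →ₐ[ℂ] LL :=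
  AddMonoidAlgebra.lift ℂ LL (ℤ × ℤ)
    { toFun := fun m => AddMonoidAlgebra.single (m.toAdd.2, m.toAdd.1)
        ((u ^ m.toAdd.1 * v ^ m.toAdd.2 : ℂˣ) : ℂ)
      map_one' := by simp [AddMonoidAlgebra.one_def]; rfl
      map_mul' := fun a b => by
        simp only [toAdd_mul, Prod.fst_add, Prod.snd_add, AddMonoidAlgebra.single_mul_single,
          Prod.mk_add_mk, zpow_add]
        congr 1
        push_cast
        ring }

theorem psi_single (u v : ℂˣ) (m : ℤ × ℤ) :
    psi u v (AddMonoidAlgebra.single m 1) =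
      AddMonoidAlgebra.single (m.2, m.1) ((u ^ m.1 * v ^ m.2 : ℂˣ) : ℂ) := by
  simp [psi]

theorem psi_single' (u v : ℂˣ) (m : ℤ × ℤ) (r : ℂ) :
    psi u v (AddMonoidAlgebra.single m r) =
      AddMonoidAlgebra.single (m.2, m.1) (r * ((u ^ m.1 * v ^ m.2 : ℂˣ) : ℂ)) := by
  simp [psi]

theorem psi_inj (u v : ℂˣ) : Function.Injective (psi u v) := by
  have : (psi v⁻¹ u⁻¹).comp (psi u v) = AlgHom.id ℂ LL := by
    apply AddMonoidAlgebra.algHom_ext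
    · intro m
      simp only [AlgHom.comp_apply, psi_single', AlgHom.id_apply, one_mul]
      congr 1
      rw [← Units.val_mul]
      rw [show u ^ m.1 * v ^ m.2 * (v⁻¹ ^ m.2 * u⁻¹ ^ m.1) = 1 by simp]
      simp
    · ext
  intro a b hab
  have h2 := congrArg (psi v⁻¹ u⁻¹) hab
  rw [← AlgHom.comp_apply, ← AlgHom.comp_apply, this] at h2
  exact h2

theorem exists_field : ∃ (F : Type) (_ : Field F) (_ : Algebra ℂ F) (x y : F)
    (φ : ℂˣ → ℂˣ → F →ₐ[ℂ] F), x ≠ 0 ∧ y ≠ 0 ∧ x ≠ y ∧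
      (∀ u v, φ u v x = (u : ℂ) • y ∧ φ u v y = (v : ℂ) • x) ∧
      (∀ f g : F →ₐ[ℂ] F, f x = g x → f y = g y → f = g) ∧
      LinearIndependent ℂ (fun p : ℤ × ℤ => x ^ p.1 * y ^ p.2) := by
  have inj : Function.Injective (algebraMap LL (FractionRing LL)) := IsFractionRing.injective _ _
  let ι : LL →ₐ[ℂ] FractionRing LL := IsScalarTower.toAlgHom ℂ LL (FractionRing LL)
  have hι : Function.Injective ι := inj
  let e : ℤ × ℤ → LL := fun m => AddMonoidAlgebra.single m 1
  have he : ∀ m n, e (m + n) = e m * e n := fun m n => by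
    simp [e, AddMonoidAlgebra.single_mul_single]
  have he0 : e 0 = 1 := rfl
  let x := ι (e (1, 0))
  let y := ι (e (0, 1))
  let η : Multiplicative (ℤ × ℤ) →* FractionRing LL :=
    { toFun := fun m => ι (e m.toAdd)
      map_one' := by simp [he0]
      map_mul' := fun a b => by simp [he] }
  have hz : ∀ (m : ℤ × ℤ) (k : ℤ), ι (e (k • m)) = ι (e m) ^ k := fun m k => by
    exact map_zpow' η (fun a => by
      rw [eq_comm]
      apply inv_eq_of_mul_eq_one_left
      rw [← map_mul]; simp) (Multiplicative.ofAdd m) k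
  have hxy : ∀ p : ℤ × ℤ, x ^ p.1 * y ^ p.2 = ι (e p) := fun p => by
    rw [← hz, ← hz, ← map_mul, ← he]; simp
  have hinj : ∀ u v : ℂˣ, Function.Injective (ι.comp (psi u v)) := fun u v =>
    hι.comp (psi_inj u v)
  refine ⟨FractionRing LL, inferInstance, inferInstance, x, y,
    fun u v => IsFractionRing.liftAlgHom (hinj u v), ?_, ?_, ?_, ?_, ?_, ?_⟩
  · simp only [x, ne_eq, map_eq_zero_iff _ hι]; simp [e]
  · simp only [y, ne_eq, map_eq_zero_iff _ hι]; simp [e]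
  · intro h
    have := hι h
    simp only [e] at this
    have := (AddMonoidAlgebra.single_left_injective (one_ne_zero : (1:ℂ) ≠ 0)) this
    simp at this
  · intro u v
    have hl : ∀ z, IsFractionRing.liftAlgHom (R := ℂ) (K := FractionRing LL) (hinj u v) (ι z) = ι (psi u v z) := fun z =>
      IsFractionRing.lift_algebraMap (hinj u v) z
    simp only [x, y, hl]
    constructor
    · simp only [e, psi_single, ← map_smul]; simp
    · simp only [e, psi_single, ← map_smul]; simp
  · intro f g hx hy
    apply IsLocalization.algHom_ext (nonZeroDivisors LL)
    apply AddMonoidAlgebra.algHom_ext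
    · intro m
      show f (ι (e m)) = g (ι (e m))
      rw [← hxy]
      simp [hx, hy]
    · ext
  · have h1 : LinearIndependent ℂ e := by
      exact (AddMonoidAlgebra.basis (ℤ × ℤ) ℂ).linearIndependent
    have h2 := h1.map' ι.toLinearMap (LinearMap.ker_eq_bot.mpr hι)
    have h3 : (fun p : ℤ × ℤ => x ^ p.1 * y ^ p.2) = ι.toLinearMap ∘ e := funext hxy
    rw [h3]
    exact h2

end PBW
namespace PBW

open TensorProduct MulOpposite

section core
variable {E : Type*} [Ring E] [Algebra ℂ E]

theorem core {s g x y τ : E} {c : ℂ} (hs : s * s = 1) (sy : s * y = x * s)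
    (gs : g * s = -(s * (1 + g))) (gx : g * x = x * g) (gy : g * y = y * g)
    (gxy : g * (x - y) = y) (τs : τ * s = s * τ) (τg : τ * g = g * τ)
    (τx : τ * x = x * τ) (hτ : τ * τ = 1 + c • τ) :
    (τ * s + c • ((s - 1) * g)) * (τ * s + c • ((s - 1) * g)) =
      1 + c • (τ * s + c • ((s - 1) * g)) ∧
    x * (τ * s + c • ((s - 1) * g)) = (τ * s + c • ((s - 1) * g) - c • 1) * y := by
  set Δ := (s - 1) * g with hΔ
  have d1 : Δ * s + s * Δ = s - 1 := by
    calc Δ * s + s * Δ = (s - 1) * (g * s) + (s * s) * g - s * g := by rw [hΔ]; noncomm_ring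
      _ = -(s * s) - (s * s) * g + s + s * g + (s * s) * g - s * g := by rw [gs]; noncomm_ring
      _ = _ := by rw [hs]; noncomm_ring
  have d2 : Δ * Δ = Δ := by
    calc Δ * Δ = (Δ * s + s * Δ) * g - s * Δ * g - Δ * g := by rw [hΔ]; noncomm_ring
      _ = (s - 1) * g - (s * s) * g * g + g * g := by rw [d1, hΔ]; noncomm_ring
      _ = Δ := by rw [hs, hΔ]; noncomm_ring
  have τΔ : τ * Δ = Δ * τ := by
    rw [hΔ]
    calc τ * ((s - 1) * g) = (τ * s) * g - τ * g := by noncomm_ring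
      _ = s * (τ * g) - τ * g := by rw [τs]; noncomm_ring
      _ = _ := by rw [τg]; noncomm_ring
  constructor
  · have e1 : (τ * s) * (τ * s) = 1 + c • τ := by
      calc (τ * s) * (τ * s) = τ * (s * τ) * s := by noncomm_ring
        _ = (τ * τ) * (s * s) := by rw [← τs]; noncomm_ring
        _ = _ := by rw [hs, hτ, mul_one]
    have e2 : (τ * s) * Δ + Δ * (τ * s) = τ * s - τ := by
      calc (τ * s) * Δ + Δ * (τ * s) = τ * (s * Δ) + (Δ * τ) * s := by noncomm_ring
        _ = τ * (Δ * s + s * Δ) := by rw [← τΔ]; noncomm_ring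
        _ = _ := by rw [d1]; noncomm_ring
    calc (τ * s + c • Δ) * (τ * s + c • Δ)
        = (τ * s) * (τ * s) + c • ((τ * s) * Δ + Δ * (τ * s)) + (c * c) • (Δ * Δ) := by
          simp only [add_mul, mul_add, smul_mul_assoc, mul_smul_comm, smul_add, smul_smul]; abel
      _ = _ := by rw [e1, e2, d2]; module
  · have e1 : x * (τ * s) = (τ * s) * y := by
      rw [← mul_assoc, ← τx, mul_assoc, mul_assoc, sy]
    have e2 : x * Δ = Δ * y - y := by
      have : x * g = y + y * g := by
        have h := gxy
        rw [mul_sub, gx, gy] at h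
        exact sub_eq_iff_eq_add.mp h
      calc x * Δ = (x * s) * g - x * g := by rw [hΔ]; noncomm_ring
        _ = s * (y * g) - (y * g) - y := by rw [← sy, this]; noncomm_ring
        _ = Δ * y - y := by rw [← gy, hΔ]; noncomm_ring
    simp only [mul_add, mul_smul_comm, e1, e2, sub_mul, add_mul, smul_mul_assoc, one_mul, smul_sub]
    abel

/-- the Hecke unit -/
def hu {T : E} {c : ℂ} (h : T * T = 1 + c • T) : Eˣ :=
  ⟨T, T - c • 1, by rw [mul_sub, h]; simp, by rw [sub_mul, h]; simp⟩

end core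

section ops
variable {F : Type} [Field F] [Algebra ℂ F] {M : Type} [AddCommGroup M] [Module ℂ M]

abbrev Eop (V : Type) [AddCommGroup V] [Module ℂ V] := (Module.End ℂ V)ᵐᵒᵖ

/-- Embedding of operators on the left factor. -/
def iL (F : Type) [Field F] [Algebra ℂ F] {M : Type} [AddCommGroup M] [Module ℂ M]
    (a : Eop M) : Eop (M ⊗[ℂ] F) := op (TensorProduct.map a.unop LinearMap.id)

def iR (M : Type) [AddCommGroup M] [Module ℂ M] (a : F →ₗ[ℂ] F) : Eop (M ⊗[ℂ] F) :=
  op (TensorProduct.map LinearMap.id a)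

theorem op_ext {a b : Eop (M ⊗[ℂ] F)} (h : ∀ m f, a.unop (m ⊗ₜ f) = b.unop (m ⊗ₜ f)) : a = b :=
  unop_injective (TensorProduct.ext' h)

@[simp] theorem iL_app (a : Eop M) (m : M) (f : F) :
    (iL F a).unop (m ⊗ₜ f) = (a.unop m) ⊗ₜ f := rfl
@[simp] theorem iR_app (a : F →ₗ[ℂ] F) (m : M) (f : F) :
    (iR M a).unop (m ⊗ₜ f) = m ⊗ₜ (a f) := rfl

theorem iL_mul (a b : Eop M) : iL F (a * b) = iL F a * iL F b :=
  op_ext fun m f => by simp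
theorem iL_one : iL F (1 : Eop M) = 1 := op_ext fun m f => by simp
theorem iL_add (a b : Eop M) : iL F (a + b) = iL F a + iL F b :=
  op_ext fun m f => by simp [add_tmul]
theorem iL_smul (c : ℂ) (a : Eop M) : iL F (c • a) = c • iL F a :=
  op_ext fun m f => by simp [smul_tmul']
theorem iLR (a : Eop M) (b : F →ₗ[ℂ] F) : iL F a * iR M b = iR M b * iL F a :=
  op_ext fun m f => by simp

def iLm : Eop M →* Eop (M ⊗[ℂ] F) := ⟨⟨iL F, iL_one⟩, iL_mul⟩

/-- multiplication operator -/
def mu (M : Type) [AddCommGroup M] [Module ℂ M] : F →* Eop (M ⊗[ℂ] F) where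
  toFun f := iR M (LinearMap.mulLeft ℂ f)
  map_one' := op_ext fun m f => by simp
  map_mul' a b := op_ext fun m f => by simp [mul_comm, mul_assoc, mul_left_comm]

@[simp] theorem mu_app (z : F) (m : M) (f : F) : (mu M z).unop (m ⊗ₜ f) = m ⊗ₜ (z * f) := rfl

/-- field endomorphism operator -/
def al (M : Type) [AddCommGroup M] [Module ℂ M] (φ : F →ₐ[ℂ] F) : Eop (M ⊗[ℂ] F) :=
  iR M φ.toLinearMap

@[simp] theorem al_app (φ : F →ₐ[ℂ] F) (m : M) (f : F) :
    (al M φ).unop (m ⊗ₜ f) = m ⊗ₜ (φ f) := rfl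

theorem al_mul (φ ψ : F →ₐ[ℂ] F) : al M φ * al M ψ = al M (ψ.comp φ) :=
  op_ext fun m f => by simp
theorem al_id : al M (AlgHom.id ℂ F) = 1 := op_ext fun m f => by simp
theorem mu_al (z : F) (φ : F →ₐ[ℂ] F) : mu M z * al M φ = al M φ * mu M (φ z) :=
  op_ext fun m f => by simp
theorem mu_sub (z w : F) : mu M (z - w) = mu M z - mu M w :=
  op_ext fun m f => by simp [sub_mul, tmul_sub]
theorem mu_add (z w : F) : mu M (z + w) = mu M z + mu M w :=
  op_ext fun m f => by simp [add_mul, tmul_add]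
theorem mu_neg (z : F) : mu M (-z) = - mu M z :=
  op_ext fun m f => by simp [tmul_neg]
theorem mu_smul (c : ℂ) (z : F) : mu M (c • z) = c • mu M z :=
  op_ext fun m f => by simp
theorem mu_comm (z w : F) : mu M z * mu M w = mu M w * mu M z := by
  rw [← map_mul, mul_comm, map_mul]

/-- The Hecke operator. -/
def HT (s : F →ₐ[ℂ] F) (x y : F) (c : ℂ) (τ : Eop M) : Eop (M ⊗[ℂ] F) :=
  iL F τ * al M s + c • ((al M s - 1) * mu M (y / (x - y)))

theorem HT_core {s : F →ₐ[ℂ] F} {x y : F} (hxy : x ≠ y) (hsx : s x = y) (hsy : s y = x)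
    (hss : s.comp s = AlgHom.id ℂ F) {c : ℂ} {τ : Eop M} (hτ : τ * τ = 1 + c • τ) :
    HT s x y c τ * HT s x y c τ = 1 + c • HT s x y c τ ∧
    mu M x * HT s x y c τ = (HT s x y c τ - c • 1) * mu M y := by
  have h1 : x - y ≠ 0 := sub_ne_zero.mpr hxy
  have h2 : y - x ≠ 0 := sub_ne_zero.mpr hxy.symm
  apply core
  · rw [al_mul, hss, al_id]
  · rw [mu_al, hsx]
  · have e : s (y / (x - y)) = -(1 + y / (x - y)) := by
      rw [map_div₀, map_sub, hsx, hsy, one_add_div h1, sub_add_cancel, ← div_neg, neg_sub]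
    rw [mu_al, e, mu_neg, mu_add, map_one]
    exact mul_neg (al M s) _
  · exact mu_comm _ _
  · exact mu_comm _ _
  · rw [← mu_sub, ← map_mul]
    congr 1
    field_simp
  · exact iLR _ _
  · exact iLR _ _
  · exact iLR _ _
  · rw [← iL_mul, hτ, iL_add, iL_one, iL_smul]

theorem HT_app {s : F →ₐ[ℂ] F} {x y : F} {c : ℂ} {τ : Eop M} (m : M) :
    (HT s x y c τ).unop (m ⊗ₜ 1) = (τ.unop m) ⊗ₜ 1 := by
  simp [HT]

/-- Pairs of units compatible on vectors `m ⊗ 1`. -/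
def Good (M F : Type) [AddCommGroup M] [Module ℂ M] [Field F] [Algebra ℂ F] :
    Subgroup ((Eop (M ⊗[ℂ] F))ˣ × (Eop M)ˣ) where
  carrier := {p | ∀ m : M, (p.1 : Eop (M ⊗[ℂ] F)).unop (m ⊗ₜ 1) = ((p.2 : Eop M).unop m) ⊗ₜ 1}
  mul_mem' := fun {a b} ha hb m => by
    simp only [Set.mem_ofPred_eq] at ha hb
    simp [ha, hb]
  one_mem' := fun m => by simp
  inv_mem' := fun {a} ha m => by
    simp only [Set.mem_ofPred_eq] at ha
    have h1 := ha (((a.2⁻¹ : (Eop M)ˣ) : Eop M).unop m)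
    have h2 : (a.2 : Eop M).unop (((a.2⁻¹ : (Eop M)ˣ) : Eop M).unop m) = m := by
      rw [← Module.End.mul_apply, ← unop_mul, Units.inv_mul]; rfl
    have h3 : ∀ v, ((a.1⁻¹ : (Eop (M ⊗[ℂ] F))ˣ) : Eop (M ⊗[ℂ] F)).unop
        ((a.1 : Eop (M ⊗[ℂ] F)).unop v) = v := fun v => by
      rw [← Module.End.mul_apply, ← unop_mul, Units.mul_inv]; rfl
    rw [h2] at h1
    show ((a.1⁻¹ : (Eop (M ⊗[ℂ] F))ˣ) : Eop (M ⊗[ℂ] F)).unop (m ⊗ₜ 1) = _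
    rw [← h1, h3]
    rfl

end ops

theorem tau0 (c : ℂ) : ∃ τ : Eop (Fin 2 → ℂ), τ * τ = 1 + c • τ ∧
    τ.unop (Pi.single 0 1) = Pi.single 1 1 := by
  refine ⟨op (Matrix.toLin' !![0, 1; 1, c]), ?_, ?_⟩
  · apply unop_injective
    have h : (!![0, 1; 1, c] : Matrix (Fin 2) (Fin 2) ℂ) * !![0, 1; 1, c]
        = 1 + c • !![0, 1; 1, c] := by
      ext i j
      fin_cases i <;> fin_cases j <;> simp [Matrix.mul_apply, Fin.sum_univ_two]
    show Matrix.toLin' _ * Matrix.toLin' _ = 1 + c • Matrix.toLin' _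
    rw [Module.End.mul_eq_comp, ← Matrix.toLin'_mul, h, map_add, Matrix.toLin'_one, map_smul]
    rfl
  · ext i
    fin_cases i <;> simp

theorem level2 {F : Type} [Field F] [Algebra ℂ F] {M : Type} [AddCommGroup M] [Module ℂ M]
    (q t : ℂ) (hq : q ≠ 0) (ht : t ≠ 0) (x y : F) (φ : ℂˣ → ℂˣ → F →ₐ[ℂ] F)
    (hx : x ≠ 0) (hy : y ≠ 0) (hxy : x ≠ y)
    (hφ : ∀ u v, φ u v x = (u : ℂ) • y ∧ φ u v y = (v : ℂ) • x)
    (hext : ∀ f g : F →ₐ[ℂ] F, f x = g x → f y = g y → f = g)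
    (hind : LinearIndependent ℂ (fun p : ℤ × ℤ => x ^ p.1 * y ^ p.2))
    (τ₁ π₁ : (Eop M)ˣ) (hτ₁ : (τ₁ : Eop M) * τ₁ = 1 + (t - t⁻¹) • (τ₁ : Eop M))
    (b3 : π₁ * π₁ * τ₁ = τ₁ * (π₁ * π₁)) (m₀ : M)
    (hm : LinearIndependent ℂ (fun z : Fin 2 × ℤ × ℤ =>
      ((τ₁ ^ (z.1 : ℕ) * ((τ₁ * π₁) ^ z.2.1 * (π₁ * τ₁⁻¹) ^ z.2.2) : (Eop M)ˣ) : Eop M).unop m₀)) :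
    LinearIndependent ℂ (pbwDAHA q t) := by
  set c : ℂ := t - t⁻¹ with hc
  have hp : q ^ 2 ≠ 0 := pow_ne_zero 2 hq
  let p : ℂˣ := Units.mk0 (q ^ 2) hp
  let s := φ 1 1
  have hsx : s x = y := by simpa using (hφ 1 1).1
  have hsy : s y = x := by simpa using (hφ 1 1).2
  have hss : s.comp s = AlgHom.id ℂ F := hext _ _ (by simp [hsx, hsy]) (by simp [hsx, hsy])
  let f := φ 1 p⁻¹
  have hfx : f x = y := by simpa using (hφ 1 p⁻¹).1
  have hfy : f y = (q ^ 2)⁻¹ • x := by simpa [p] using (hφ 1 p⁻¹).2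
  let f' := φ p 1
  have hfx' : f' x = q ^ 2 • y := by simpa [p] using (hφ p 1).1
  have hfy' : f' y = x := by simpa using (hφ p 1).2
  have hff' : f.comp f' = AlgHom.id ℂ F :=
    hext _ _ (by simp [hfx', hfy, smul_smul, hp]) (by simp [hfx, hfy'])
  have hf'f : f'.comp f = AlgHom.id ℂ F :=
    hext _ _ (by simp [hfx, hfy']) (by simp [hfx', hfy, smul_smul, hp])
  have hffs : s.comp (f.comp f) = (f.comp f).comp s :=
    hext _ _ (by simp [hfx, hfy, hsx, hsy]) (by simp [hfx, hfy, hsx, hsy])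
  have hffg : f (f (y / (x - y))) = y / (x - y) := by
    have h1 : x - y ≠ 0 := sub_ne_zero.mpr hxy
    simp only [map_div₀, map_sub, hfx, hfy, map_smul]
    rw [← smul_sub, Algebra.smul_def, Algebra.smul_def, mul_div_mul_left]
    simp [hq]
  let ux := Units.mk0 x hx
  let uy := Units.mk0 y hy
  obtain ⟨c1, c2⟩ := HT_core hxy hsx hsy hss hτ₁
  let τ : (Eop (M ⊗[ℂ] F))ˣ := hu (E := Eop (M ⊗[ℂ] F)) c1
  let X : (Eop (M ⊗[ℂ] F))ˣ := Units.map (mu M) ux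
  let X' : (Eop (M ⊗[ℂ] F))ˣ := Units.map (mu M) uy
  let ϖ : (Eop (M ⊗[ℂ] F))ˣ := ⟨al M f, al M f', by rw [al_mul, hf'f, al_id], by rw [al_mul, hff', al_id]⟩
  let π : (Eop (M ⊗[ℂ] F))ˣ := Units.map iLm π₁ * ϖ
  have d1 : τ * X * τ = X' := by
    have : X * τ = τ⁻¹ * X' := Units.ext c2
    rw [mul_assoc, this]; group
  have d2 : X * X' = X' * X := by
    simp only [X, X', ← map_mul]; rw [mul_comm]
  have d3 : π * X' = X * π := by
    apply Units.ext
    show iL F (π₁ : Eop M) * al M f * mu M y = mu M x * (iL F (π₁ : Eop M) * al M f)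
    rw [← mul_assoc (mu M x), ← show iL F (π₁ : Eop M) * mu M x = mu M x * iL F (π₁ : Eop M)
      from iLR _ _, mul_assoc _ (mu M x), mu_al, hfx, mul_assoc]
  have d4 : (π * X : Eop (M ⊗[ℂ] F)) = (q ^ 2) • (X' * π : Eop (M ⊗[ℂ] F)) := by
    show iL F (π₁ : Eop M) * al M f * mu M x =
      (q ^ 2) • (mu M y * (iL F (π₁ : Eop M) * al M f))
    rw [← mul_assoc (mu M y), ← show iL F (π₁ : Eop M) * mu M y = mu M y * iL F (π₁ : Eop M)
      from iLR _ _, mul_assoc _ (mu M y), mu_al, hfy, mul_assoc, mu_smul]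
    simp [smul_smul, hp]
  have d5 : π * π * τ = τ * (π * π) := by
    have e1 : ((π * π : (Eop (M ⊗[ℂ] F))ˣ) : Eop (M ⊗[ℂ] F)) = iL F ((π₁ * π₁ : (Eop M)ˣ) : Eop M) * al M (f.comp f) := by
      show (iL F (π₁ : Eop M) * al M f) * (iL F (π₁ : Eop M) * al M f) =
        iL F ((π₁ : Eop M) * (π₁ : Eop M)) * al M (f.comp f)
      rw [mul_assoc, ← mul_assoc (al M f), ← show iL F (π₁ : Eop M) * al M f = al M f * iL F (π₁ : Eop M)
        from iLR _ _, mul_assoc, al_mul, ← mul_assoc, iL_mul]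
    have e2 : Commute (iL F ((π₁ * π₁ : (Eop M)ˣ) : Eop M)) (τ : Eop (M ⊗[ℂ] F)) := by
      have z1 : Commute (iL F ((π₁ * π₁ : (Eop M)ˣ) : Eop M)) (iL F (τ₁ : Eop M)) := by
        show _ * _ = _ * _
        rw [← iL_mul, ← iL_mul, ← Units.val_mul, ← Units.val_mul, b3]
      have z2 : Commute (iL F ((π₁ * π₁ : (Eop M)ˣ) : Eop M)) (al M s) := iLR _ _
      have z3 : Commute (iL F ((π₁ * π₁ : (Eop M)ˣ) : Eop M)) (mu M (y / (x - y))) := iLR _ _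
      exact (z1.mul_right z2).add_right
        (((z2.sub_right (Commute.one_right _)).mul_right z3).smul_right c)
    have e3 : Commute (al M (f.comp f)) (τ : Eop (M ⊗[ℂ] F)) := by
      have z1 : Commute (al M (f.comp f)) (iL F (τ₁ : Eop M)) := (iLR _ _).symm
      have z2 : Commute (al M (f.comp f)) (al M s) := by
        show _ * _ = _ * _
        rw [al_mul, al_mul, hffs]
      have z3 : Commute (al M (f.comp f)) (mu M (y / (x - y))) := by
        show _ * _ = _ * _
        rw [mu_al]
        simp only [AlgHom.comp_apply, hffg]
      exact (z1.mul_right z2).add_right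
        (((z2.sub_right (Commute.one_right _)).mul_right z3).smul_right c)
    apply Units.ext
    rw [Units.val_mul (π * π) τ, Units.val_mul τ (π * π), e1]
    exact (e2.mul_left e3).eq
  obtain ⟨Φ, r1, r2, r3, r4, r5⟩ := exists_hom q t ht τ π X X' c1 d1 d2 d3 d4 d5
  have g1 : ((τ, τ₁) : (Eop (M ⊗[ℂ] F))ˣ × (Eop M)ˣ) ∈ Good M F := fun m => HT_app m
  have g2 : ((π, π₁) : (Eop (M ⊗[ℂ] F))ˣ × (Eop M)ˣ) ∈ Good M F := fun m => by
    show (al M f).unop ((iL F (π₁ : Eop M)).unop (m ⊗ₜ 1)) = _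
    simp
  let ev : DAHA q t →ₗ[ℂ] (M ⊗[ℂ] F) :=
    { toFun := fun h => (Φ h).unop (m₀ ⊗ₜ 1)
      map_add' := fun a b => by simp
      map_smul' := fun r a => by simp }
  have key : ∀ (i : Fin 2) (a b k l : ℤ), ev (pbwDAHA q t (i, a, b, k, l)) =
      (((τ₁ ^ (i : ℕ) * ((τ₁ * π₁) ^ a * (π₁ * τ₁⁻¹) ^ b) : (Eop M)ˣ) : Eop M).unop m₀) ⊗ₜ
        (x ^ k * y ^ l) := by
    intro i a b k l
    have h1 : pbwDAHA q t (i, a, b, k, l) = ((uT q t ^ (i : ℕ) * (uY1 q t ^ a * uY2 q t ^ b) *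
        (uX1 q t ^ k * uX2 q t ^ l) : (DAHA q t)ˣ) : DAHA q t) := by
      simp only [← mul_assoc]
      simp only [Units.val_mul, ← zp_unit, Units.val_pow_eq_pow_val]
      rfl
    have h2 : Φ (pbwDAHA q t (i, a, b, k, l)) =
        ((τ ^ (i : ℕ) * ((τ * π) ^ a * (π * τ⁻¹) ^ b) * (X ^ k * X' ^ l) : (Eop (M ⊗[ℂ] F))ˣ) :
          Eop (M ⊗[ℂ] F)) := by
      rw [h1, ← r4, ← r5, ← r1, ← r2, ← r3]
      simp only [← map_zpow, ← map_pow, ← map_mul]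
      rfl
    have h3 : (τ ^ (i : ℕ), τ₁ ^ (i : ℕ)) ∈ Good M F := pow_mem g1 i
    have h4 : ((τ * π) ^ a * (π * τ⁻¹) ^ b, (τ₁ * π₁) ^ a * (π₁ * τ₁⁻¹) ^ b) ∈ Good M F :=
      mul_mem (zpow_mem (mul_mem g1 g2) a) (zpow_mem (mul_mem g2 (inv_mem g1)) b)
    have h5 : ((τ ^ (i : ℕ) * ((τ * π) ^ a * (π * τ⁻¹) ^ b) : (Eop (M ⊗[ℂ] F))ˣ) :
        Eop (M ⊗[ℂ] F)).unop (m₀ ⊗ₜ 1) =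
      (((τ₁ ^ (i : ℕ) * ((τ₁ * π₁) ^ a * (π₁ * τ₁⁻¹) ^ b) : (Eop M)ˣ) : Eop M).unop m₀) ⊗ₜ 1 :=
      (mul_mem h3 h4 : _ ∈ Good M F) m₀
    have h6 : X ^ k * X' ^ l = Units.map (mu M) (ux ^ k * uy ^ l) := by
      simp [X, X']
    show (Φ (pbwDAHA q t (i, a, b, k, l))).unop (m₀ ⊗ₜ 1) = _
    rw [h2, Units.val_mul, unop_mul, Module.End.mul_apply]
    rw [h5, h6]
    show ((mu M) ((ux ^ k * uy ^ l : Fˣ) : F)).unop _ = _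
    rw [mu_app]
    simp [ux, uy]
  have hI := hm.tmul_of_isDomain hind
  let j : Fin 2 × ℤ × ℤ × ℤ × ℤ → (Fin 2 × ℤ × ℤ) × (ℤ × ℤ) :=
    fun z => ((z.1, (z.2.1, z.2.2.1)), (z.2.2.2.1, z.2.2.2.2))
  have hj : Function.Injective j := by
    rintro ⟨i, a, b, k, l⟩ ⟨i', a', b', k', l'⟩ h
    simp only [j, Prod.mk.injEq] at h
    obtain ⟨⟨rfl, rfl, rfl⟩, rfl, rfl⟩ := h
    rfl
  have hI2 := hI.comp j hj
  apply LinearIndependent.of_comp ev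
  have hfun : (⇑ev ∘ pbwDAHA q t) = fun z : Fin 2 × ℤ × ℤ × ℤ × ℤ =>
      (((τ₁ ^ (z.1 : ℕ) * ((τ₁ * π₁) ^ z.2.1 * (π₁ * τ₁⁻¹) ^ z.2.2.1) : (Eop M)ˣ) : Eop M).unop m₀)
        ⊗ₜ[ℂ] (x ^ z.2.2.2.1 * y ^ z.2.2.2.2) := by
    funext ⟨i, a, b, k, l⟩
    exact key i a b k l
  rw [hfun]
  exact hI2

theorem lin_indep (q t : ℂ) (hq : q ≠ 0) (ht : t ≠ 0) : LinearIndependent ℂ (pbwDAHA q t) := by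
  obtain ⟨F, _, _, x, y, φ, hx, hy, hxy, hφ, hext, hind⟩ := exists_field
  set c : ℂ := t - t⁻¹ with hc
  let s := φ 1 1
  have hsx : s x = y := by simpa using (hφ 1 1).1
  have hsy : s y = x := by simpa using (hφ 1 1).2
  have hss : s.comp s = AlgHom.id ℂ F := hext _ _ (by simp [hsx, hsy]) (by simp [hsx, hsy])
  obtain ⟨τ₀, hτ₀, hτe⟩ := tau0 c
  -- level 1
  obtain ⟨a1, a2⟩ := HT_core hxy hsx hsy hss hτ₀
  let τ₁ : (Eop ((Fin 2 → ℂ) ⊗[ℂ] F))ˣ := hu (E := Eop ((Fin 2 → ℂ) ⊗[ℂ] F)) a1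
  let ux := Units.mk0 x hx
  let uy := Units.mk0 y hy
  let y2 : (Eop ((Fin 2 → ℂ) ⊗[ℂ] F))ˣ := Units.map (mu (Fin 2 → ℂ)) ux
  let y1 : (Eop ((Fin 2 → ℂ) ⊗[ℂ] F))ˣ := Units.map (mu (Fin 2 → ℂ)) uy
  have b1 : τ₁ * y2 * τ₁ = y1 := by
    have : y2 * τ₁ = τ₁⁻¹ * y1 := Units.ext a2
    rw [mul_assoc, this]; group
  have b2 : y2 * y1 = y1 * y2 := by
    simp only [y1, y2, ← map_mul]; rw [mul_comm]
  let π₁ := y2 * τ₁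
  have b3 : π₁ * π₁ * τ₁ = τ₁ * (π₁ * π₁) := by
    have e : π₁ * π₁ = y2 * y1 := by
      rw [← b1]; simp only [π₁, mul_assoc]
    rw [e]
    calc y2 * y1 * τ₁ = (y1 * y2) * τ₁ := by rw [b2]
      _ = (τ₁ * y2 * τ₁) * (y2 * τ₁) := by rw [b1, mul_assoc]
      _ = τ₁ * y2 * (τ₁ * y2 * τ₁) := by simp only [mul_assoc]
      _ = _ := by rw [b1, mul_assoc]
  have g0 : ((τ₁, (hu (E := Eop (Fin 2 → ℂ)) hτ₀ : (Eop (Fin 2 → ℂ))ˣ)) :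
      (Eop ((Fin 2 → ℂ) ⊗[ℂ] F))ˣ × (Eop (Fin 2 → ℂ))ˣ) ∈ Good (Fin 2 → ℂ) F := fun m => HT_app m
  let e : Fin 2 → (Fin 2 → ℂ) := fun i => Pi.single i 1
  have he : LinearIndependent ℂ e := by
    have := (Pi.basisFun ℂ (Fin 2)).linearIndependent
    convert this using 1
    funext i; simp [e]
  refine level2 q t hq ht x y φ hx hy hxy hφ hext hind τ₁ π₁ a1 b3 (e 0 ⊗ₜ 1) ?_
  have hI := he.tmul_of_isDomain hind
  let j : Fin 2 × ℤ × ℤ → Fin 2 × (ℤ × ℤ) := fun z => (z.1, (z.2.2, z.2.1))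
  have hj : Function.Injective j := by
    rintro ⟨i, a, b⟩ ⟨i', a', b'⟩ h
    simp only [j, Prod.mk.injEq] at h
    obtain ⟨rfl, rfl, rfl⟩ := h
    rfl
  have hfun : (fun z : Fin 2 × ℤ × ℤ => ((τ₁ ^ (z.1 : ℕ) * ((τ₁ * π₁) ^ z.2.1 *
      (π₁ * τ₁⁻¹) ^ z.2.2) : (Eop ((Fin 2 → ℂ) ⊗[ℂ] F))ˣ) :
      Eop ((Fin 2 → ℂ) ⊗[ℂ] F)).unop (e 0 ⊗ₜ 1)) =
      fun z : Fin 2 × ℤ × ℤ => e z.1 ⊗ₜ[ℂ] (x ^ z.2.2 * y ^ z.2.1) := by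
    funext ⟨i, a, b⟩
    have h7 : (τ₁ * π₁) ^ a * (π₁ * τ₁⁻¹) ^ b = Units.map (mu (Fin 2 → ℂ)) (ux ^ b * uy ^ a) := by
      rw [show τ₁ * π₁ = y1 by rw [← b1, mul_assoc], show π₁ * τ₁⁻¹ = y2 by simp [π₁], mul_comm]
      simp [y1, y2]
    have h8 : ((τ₁ : Eop ((Fin 2 → ℂ) ⊗[ℂ] F)) ^ (i : ℕ)).unop (e 0 ⊗ₜ 1) = e i ⊗ₜ 1 := by
      fin_cases i
      · simp
      · simp only [Fin.mk_one, Fin.val_one, pow_one]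
        rw [g0 (e 0)]
        exact congrArg (· ⊗ₜ[ℂ] (1 : F)) hτe
    show (((τ₁ ^ (i : ℕ) * ((τ₁ * π₁) ^ a * (π₁ * τ₁⁻¹) ^ b) : (Eop ((Fin 2 → ℂ) ⊗[ℂ] F))ˣ)) :
      Eop ((Fin 2 → ℂ) ⊗[ℂ] F)).unop (e 0 ⊗ₜ 1) = e i ⊗ₜ (x ^ b * y ^ a)
    rw [h7, Units.val_mul, unop_mul, Module.End.mul_apply, Units.val_pow_eq_pow_val, h8]
    show ((mu (Fin 2 → ℂ)) ((ux ^ b * uy ^ a : Fˣ) : F)).unop _ = _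
    rw [mu_app]
    simp [ux, uy]
  rw [hfun]
  exact hI.comp j hj

end PBW

/-- The family of elements `T^ε Y₁^{a₁} Y₂^{a₂} X₁^{b₁} X₂^{b₂}`,
with `ε ∈ {0,1}` and `a₁, a₂, b₁, b₂ ∈ ℤ` (negative exponents interpreted via the
inverse generators), is a ℂ-vector-space basis of the double affine Hecke algebra
`H_{t,q}`. -/
theorem stmt1 (q t : ℂ) (hq : q ≠ 0) (ht : t ≠ 0) :
    LinearIndependent ℂ (pbwDAHA q t) ∧
      Submodule.span ℂ (Set.range (pbwDAHA q t)) = ⊤ := by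
  exact ⟨PBW.lin_indep q t hq ht, PBW.span_top q t hq ht⟩
end
end

section
/- There is a ℂ-algebra isomorphism Φ from 𝒜 onto the spherical double affine Hecke algebra eH_{t,q}e determined on generators by Φ(P₁) = e(X₁+X₂)e, Φ(P₂) = e(X₁X₂)e, Φ(Q₁) = e(Y₁+Y₂)e, Φ(Q₂) = e(Y₁Y₂)e, and Φ(R) = e(t⁻²Y₁X₁ + Y₂X₂)e. -/
noncomputable section

variable (q t : ℂ)

/-- Generators of the algebra `𝒜`: `P₁, P₂, P₂⁻¹, Q₁, Q₂, Q₂⁻¹, R`. -/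
inductive AGen : Type
  | P1 | P2 | P2i | Q1 | Q2 | Q2i | R

abbrev FA : Type := FreeAlgebra ℂ AGen

def gA : AGen → FA := FreeAlgebra.ι ℂ

/-- The defining relations of the algebra `𝒜`. -/
inductive ARel (q t : ℂ) : FA → FA → Prop
  | P2P2i : ARel q t (gA .P2 * gA .P2i) 1
  | P2iP2 : ARel q t (gA .P2i * gA .P2) 1
  | Q2Q2i : ARel q t (gA .Q2 * gA .Q2i) 1
  | Q2iQ2 : ARel q t (gA .Q2i * gA .Q2) 1
  | P2P1 : ARel q t (gA .P2 * gA .P1) (gA .P1 * gA .P2)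
  | Q2Q1 : ARel q t (gA .Q2 * gA .Q1) (gA .Q1 * gA .Q2)
  | P2Q2 : ARel q t (gA .P2 * gA .Q2) ((q⁻¹ ^ 4) • (gA .Q2 * gA .P2))
  | P2Q1 : ARel q t (gA .P2 * gA .Q1) ((q⁻¹ ^ 2) • (gA .Q1 * gA .P2))
  | P1Q2 : ARel q t (gA .P1 * gA .Q2) ((q⁻¹ ^ 2) • (gA .Q2 * gA .P1))
  | P1Q1 : ARel q t (gA .P1 * gA .Q1)
      (gA .Q1 * gA .P1 + (q⁻¹ ^ 2 - 1) • gA .R)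
  | P2R : ARel q t (gA .P2 * gA .R) ((q⁻¹ ^ 2) • (gA .R * gA .P2))
  | RQ2 : ARel q t (gA .R * gA .Q2) ((q⁻¹ ^ 2) • (gA .Q2 * gA .R))
  | P1R : ARel q t (gA .P1 * gA .R)
      ((q⁻¹ ^ 2) • (gA .R * gA .P1) + (1 - q⁻¹ ^ 2) • (gA .Q1 * gA .P2))
  | RQ1 : ARel q t (gA .R * gA .Q1)
      ((q⁻¹ ^ 2) • (gA .Q1 * gA .R) + (1 - q⁻¹ ^ 2) • (gA .Q2 * gA .P1))
  | RR : ARel q t (gA .R * gA .R)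
      (((1 + t ^ 2) * (q⁻¹ ^ 2 + t⁻¹ ^ 2)) • (gA .Q2 * gA .P2)
        - (q⁻¹ ^ 2) • (gA .Q2 * gA .P1 * gA .P1)
        - (q⁻¹ ^ 2) • (gA .Q1 * gA .Q1 * gA .P2)
        + (q⁻¹ ^ 2) • (gA .Q1 * gA .R * gA .P1))

/-- The algebra `𝒜`. -/
abbrev AlgA (q t : ℂ) : Type := RingQuot (ARel q t)

variable (q t : ℂ)

def P1 : AlgA q t := RingQuot.mkAlgHom ℂ (ARel q t) (gA .P1)
def P2 : AlgA q t := RingQuot.mkAlgHom ℂ (ARel q t) (gA .P2)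
def P2i : AlgA q t := RingQuot.mkAlgHom ℂ (ARel q t) (gA .P2i)
def Q1 : AlgA q t := RingQuot.mkAlgHom ℂ (ARel q t) (gA .Q1)
def Q2 : AlgA q t := RingQuot.mkAlgHom ℂ (ARel q t) (gA .Q2)
def Q2i : AlgA q t := RingQuot.mkAlgHom ℂ (ARel q t) (gA .Q2i)
def R : AlgA q t := RingQuot.mkAlgHom ℂ (ARel q t) (gA .R)

/-- The symmetrizing idempotent `e = (1 + tT)/(1 + t²)` of the DAHA. -/
def eSym (q t : ℂ) : DAHA q t := ((1 + t ^ 2)⁻¹ : ℂ) • (1 + t • T q t)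

set_option linter.all false

structure HR {A : Type*} [Ring A] [Algebra ℂ A] (q t : ℂ)
    (S U x1 x1i x2 x2i y1 y1i y2 y2i : A) : Prop where
  SU : S * U = 1
  US : U * S = 1
  x1x1i : x1 * x1i = 1
  x1ix1 : x1i * x1 = 1
  x2x2i : x2 * x2i = 1
  x2ix2 : x2i * x2 = 1
  y1y1i : y1 * y1i = 1
  y1iy1 : y1i * y1 = 1
  y2y2i : y2 * y2i = 1
  y2iy2 : y2i * y2 = 1
  sx : S * x1 * S = x2
  uy : U * y1 * U = y2
  xc : x1 * x2 = x2 * x1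
  yc : y1 * y2 = y2 * y1
  yxx : y1 * (x1 * x2) = (q ^ 2) • (x1 * x2 * y1)
  xiy : x1i * y2 = y2 * x1i * U * U
  hk : (S + algebraMap ℂ A t⁻¹) * (S - algebraMap ℂ A t) = 0

namespace HR
variable {A : Type*} [Ring A] [Algebra ℂ A] {q t : ℂ}
    {S U x1 x1i x2 x2i y1 y1i y2 y2i : A}

section
variable (h : HR q t S U x1 x1i x2 x2i y1 y1i y2 y2i) (hq : q ≠ 0) (ht : t ≠ 0)
include h

theorem SeqU (ht : t ≠ 0) : S = U + (t - t⁻¹) • 1 := by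
  have h1 := h.hk
  have h2 : S * S = 1 + (t - t⁻¹) • S := by
    simp only [Algebra.algebraMap_eq_smul_one] at h1
    simp only [mul_sub, add_mul, smul_mul_assoc, mul_smul_comm, one_mul, mul_one] at h1
    have : S * S = 1 + (t - t⁻¹) • S + (S * S + t⁻¹ • S - t • (S + t⁻¹ • 1)) := by
      match_scalars <;> field_simp <;> ring
    rw [h1, add_zero] at this
    exact this
  calc S = U * (S * S) := by rw [← mul_assoc, h.US, one_mul]
    _ = _ := by rw [h2, mul_add, mul_one, mul_smul_comm, h.US]

theorem US' (z : A) : U * (S * z) = z := by rw [← mul_assoc, h.US, one_mul]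
theorem SU' (z : A) : S * (U * z) = z := by rw [← mul_assoc, h.SU, one_mul]

theorem Sx1 : S * x1 = x2 * U := by
  rw [← h.sx, mul_assoc, h.SU, mul_one]
theorem x1S : x1 * S = U * x2 := by
  rw [← h.sx, mul_assoc, ← mul_assoc, h.US, one_mul]
theorem Uy1 : U * y1 = y2 * S := by
  rw [← h.uy, mul_assoc, h.US, mul_one]
theorem y1U : y1 * U = S * y2 := by
  rw [← h.uy, mul_assoc, ← mul_assoc, h.SU, one_mul]

theorem UU (ht : t ≠ 0) : U * U = 1 - (t - t⁻¹) • U := by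
  have := h.US
  rw [h.SeqU ht, mul_add, mul_smul_comm, mul_one] at this
  rw [← this]; abel

theorem Ux2 (ht : t ≠ 0) : U * x2 = x1 * U + (t - t⁻¹) • x1 := by
  rw [← h.x1S]; conv_lhs => rw [h.SeqU ht]
  rw [mul_add, mul_smul_comm, mul_one]

theorem Ux1 (ht : t ≠ 0) : U * x1 = x2 * U - (t - t⁻¹) • x1 := by
  have := h.Sx1
  rw [h.SeqU ht, add_mul, smul_mul_assoc, one_mul] at this
  rw [← this]; abel

theorem Uy1' (ht : t ≠ 0) : U * y1 = y2 * U + (t - t⁻¹) • y2 := by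
  rw [h.Uy1]; conv_lhs => rw [h.SeqU ht]
  rw [mul_add, mul_smul_comm, mul_one]

theorem Uy2 (ht : t ≠ 0) : U * y2 = y1 * U - (t - t⁻¹) • y2 := by
  have := h.y1U
  rw [h.SeqU ht, add_mul, smul_mul_assoc, one_mul] at this
  rw [this]; abel

/-- `π = S x1` -/
theorem pi_y2 : S * x1 * y2 = y1 * (S * x1) := by
  have h1 : x1i * y2 * S * S = y2 * x1i := by
    rw [h.xiy]; simp only [mul_assoc]; rw [h.US' , h.US, mul_one]
  have h2 : y2 * S * S * x1 = x1 * y2 := by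
    calc y2 * S * S * x1 = x1 * (x1i * y2 * S * S) * x1 := by
          simp only [← mul_assoc, h.x1x1i, one_mul]
      _ = _ := by rw [h1]; simp only [mul_assoc, h.x1ix1, mul_one]
  rw [mul_assoc, ← h2]
  simp only [← mul_assoc, ← h.y1U]
  simp only [mul_assoc, h.US']

theorem cSD : S * (x1 * x2) = x1 * x2 * S := by
  calc S * (x1 * x2) = x2 * (U * x2) := by rw [← mul_assoc, h.Sx1, mul_assoc]
    _ = _ := by rw [← h.x1S, ← mul_assoc, h.xc]

theorem y1D (hq : q ≠ 0) : x1 * x2 * y1 = (q⁻¹ ^ 2) • (y1 * (x1 * x2)) := by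
  rw [h.yxx, smul_smul, ← mul_pow, inv_mul_cancel₀ hq, one_pow, one_smul]

theorem pi2 : S * x1 * (S * x1) = x1 * x2 := by
  rw [← mul_assoc, h.sx, h.xc]

theorem pi_y1 (hq : q ≠ 0) : S * x1 * y1 = (q⁻¹ ^ 2) • (y2 * (S * x1)) := by
  have h0 : x1 * x2 * U = U * (x1 * x2) := by
    calc _ = U * (S * (x1 * x2)) * U := by rw [h.US']
      _ = _ := by rw [h.cSD]; simp only [mul_assoc, h.SU, mul_one]
  have h1 : x1 * x2 * y2 = (q⁻¹ ^ 2) • (y2 * (x1 * x2)) := by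
    rw [← h.uy]
    calc x1 * x2 * (U * y1 * U) = U * (x1 * x2 * y1) * U := by
          simp only [← mul_assoc]; rw [h0]; simp only [← mul_assoc]
      _ = _ := by
          rw [h.y1D hq, mul_smul_comm, smul_mul_assoc]
          simp only [mul_assoc]; congr 3
          rw [← mul_assoc, h0]
  -- π π y2 = q^-2 y2 π π = π y1 π
  rw [← h.pi2] at h1
  rw [mul_assoc, h.pi_y2] at h1
  have h2 : S * x1 * (x1i * U) = 1 := by
    simp only [mul_assoc]; rw [← mul_assoc x1, h.x1x1i, one_mul, h.SU]
  calc S * x1 * y1 = S * x1 * (y1 * (S * x1)) * (x1i * U) := by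
        simp only [mul_assoc] at h2 ⊢; rw [h2, mul_one]
    _ = _ := by
        rw [h1, smul_mul_assoc]; congr 1
        simp only [mul_assoc] at h2 ⊢; rw [h2, mul_one]

theorem x1y1 (hq : q ≠ 0) (ht : t ≠ 0) :
    x1 * y1 = (q⁻¹ ^ 2) • (y1 * x1 - (t - t⁻¹) • (y2 * (x2 * U))) := by
  calc x1 * y1 = U * (S * x1 * y1) := by rw [mul_assoc, h.US']
    _ = (q⁻¹ ^ 2) • (U * y2 * (x2 * U)) := by
      rw [h.pi_y1 hq, mul_smul_comm, h.Sx1, mul_assoc]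
    _ = _ := by
      rw [h.Uy2 ht, sub_mul, smul_mul_assoc, mul_assoc y1, ← mul_assoc U, ← h.x1S, mul_assoc x1,
        h.SU, mul_one]

theorem x1y2 (ht : t ≠ 0) :
    x1 * y2 = y2 * x1 + (t - t⁻¹) • (y2 * (x2 * U)) := by
  calc x1 * y2 = U * (S * x1 * y2) := by rw [mul_assoc, h.US']
    _ = U * y1 * (S * x1) := by
      rw [h.pi_y2, mul_assoc]
    _ = _ := by
      rw [h.Uy1' ht, add_mul, smul_mul_assoc, mul_assoc y2, h.US', h.Sx1]

theorem x2y1 (hq : q ≠ 0) (ht : t ≠ 0) :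
    x2 * y1 = y1 * x2 + ((t - t⁻¹) * q⁻¹ ^ 2) • (y2 * (x2 * U)) := by
  have h1 : S * y1 = y2 * S + (t - t⁻¹) • y1 := by
    conv_lhs => rw [h.SeqU ht]
    rw [add_mul, h.Uy1, smul_mul_assoc, one_mul]
  rw [← h.sx, mul_assoc _ S y1, h1, mul_add, ← mul_assoc, h.pi_y2, mul_smul_comm, h.pi_y1 hq,
    smul_smul, mul_assoc y1, h.sx]
  rw [h.Sx1]

theorem x2y2 (hq : q ≠ 0) (ht : t ≠ 0) :
    x2 * y2 = (q⁻¹ ^ 2) • (y2 * x2 - (t - t⁻¹) • (y2 * (x2 * U))) := by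
  have h1 : x2 * y2 = S * x1 * y1 * U := by
    rw [← h.sx, ← h.uy]; simp only [mul_assoc, h.SU']
  rw [h1, h.pi_y1 hq, h.Sx1, smul_mul_assoc]
  simp only [mul_assoc, h.UU ht, mul_sub, mul_one, mul_smul_comm]

theorem Ux1' (ht : t ≠ 0) (z : A) : U * (x1 * z) = x2 * (U * z) - (t - t⁻¹) • (x1 * z) := by
  rw [← mul_assoc, h.Ux1 ht, sub_mul, smul_mul_assoc, mul_assoc]
theorem Ux2' (ht : t ≠ 0) (z : A) : U * (x2 * z) = x1 * (U * z) + (t - t⁻¹) • (x1 * z) := by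
  rw [← mul_assoc, h.Ux2 ht, add_mul, smul_mul_assoc, mul_assoc]
theorem Uy1'' (ht : t ≠ 0) (z : A) : U * (y1 * z) = y2 * (U * z) + (t - t⁻¹) • (y2 * z) := by
  rw [← mul_assoc, h.Uy1' ht, add_mul, smul_mul_assoc, mul_assoc]
theorem Uy2' (ht : t ≠ 0) (z : A) : U * (y2 * z) = y1 * (U * z) - (t - t⁻¹) • (y2 * z) := by
  rw [← mul_assoc, h.Uy2 ht, sub_mul, smul_mul_assoc, mul_assoc]
theorem UU' (ht : t ≠ 0) (z : A) : U * (U * z) = z - (t - t⁻¹) • (U * z) := by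
  rw [← mul_assoc, h.UU ht, sub_mul, smul_mul_assoc, one_mul]
theorem x1y1' (hq : q ≠ 0) (ht : t ≠ 0) (z : A) : x1 * (y1 * z) =
    (q⁻¹ ^ 2) • (y1 * (x1 * z) - (t - t⁻¹) • (y2 * (x2 * (U * z)))) := by
  rw [← mul_assoc, h.x1y1 hq ht]; simp only [sub_mul, smul_mul_assoc, mul_assoc]
theorem x1y2' (ht : t ≠ 0) (z : A) : x1 * (y2 * z) =
    y2 * (x1 * z) + (t - t⁻¹) • (y2 * (x2 * (U * z))) := by
  rw [← mul_assoc, h.x1y2 ht]; simp only [add_mul, smul_mul_assoc, mul_assoc]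
theorem x2y1' (hq : q ≠ 0) (ht : t ≠ 0) (z : A) : x2 * (y1 * z) =
    y1 * (x2 * z) + ((t - t⁻¹) * q⁻¹ ^ 2) • (y2 * (x2 * (U * z))) := by
  rw [← mul_assoc, h.x2y1 hq ht]; simp only [add_mul, smul_mul_assoc, mul_assoc]
theorem x2y2' (hq : q ≠ 0) (ht : t ≠ 0) (z : A) : x2 * (y2 * z) =
    (q⁻¹ ^ 2) • (y2 * (x2 * z) - (t - t⁻¹) • (y2 * (x2 * (U * z)))) := by
  rw [← mul_assoc, h.x2y2 hq ht]; simp only [sub_mul, smul_mul_assoc, mul_assoc]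
theorem x2x1' (z : A) : x2 * (x1 * z) = x1 * (x2 * z) := by
  rw [← mul_assoc, ← h.xc, mul_assoc]
theorem y2y1' (z : A) : y2 * (y1 * z) = y1 * (y2 * z) := by
  rw [← mul_assoc, ← h.yc, mul_assoc]
end

/-- the idempotent -/
noncomputable def ee (t : ℂ) (S : A) : A := ((1 + t ^ 2)⁻¹ : ℂ) • (1 + t • S)

section
variable (h : HR q t S U x1 x1i x2 x2i y1 y1i y2 y2i) (hq : q ≠ 0) (ht : t ≠ 0)
  (ht2 : t ^ 2 ≠ -1)

omit h in
theorem ne2 (ht2 : t ^ 2 ≠ -1) : 1 + t ^ 2 ≠ 0 := by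
  intro h; apply ht2; linear_combination h

include h
theorem Se (ht : t ≠ 0) : S * ee t S = t • ee t S := by
  have h1 : S * S = 1 + (t - t⁻¹) • S := by
    conv_lhs => enter [1]; rw [h.SeqU ht]
    rw [add_mul, h.US, smul_mul_assoc, one_mul]
  unfold ee
  rw [mul_smul_comm, mul_add, mul_smul_comm, h1, mul_one]
  match_scalars <;> field_simp <;> ring

theorem Ue (ht : t ≠ 0) : U * ee t S = t⁻¹ • ee t S := by
  have := congrArg (fun z => t⁻¹ • (U * z)) (h.Se ht)
  simp only [h.US', mul_smul_comm, smul_smul, inv_mul_cancel₀ ht, one_smul] at this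
  exact this.symm

theorem ecomm (s : A) (hs : S * s = s * S) : ee t S * s = s * ee t S := by
  unfold ee
  rw [smul_mul_assoc, mul_smul_comm, add_mul, mul_add, smul_mul_assoc, mul_smul_comm, hs,
    one_mul, mul_one]

theorem eU (ht : t ≠ 0) : ee t S * U = t⁻¹ • ee t S := by
  rw [← h.Ue ht]; exact h.ecomm _ (by rw [h.SU, h.US])

theorem eS (ht : t ≠ 0) : ee t S * S = t • ee t S := by
  rw [← h.Se ht]; exact h.ecomm _ rfl

theorem e_mul (ht : t ≠ 0) (z : A) :
    ee t S * z = ((1 + t ^ 2)⁻¹ : ℂ) • (t ^ 2 • z + t • (U * z)) := by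
  unfold ee
  rw [smul_mul_assoc, add_mul, smul_mul_assoc, h.SeqU ht, add_mul, smul_mul_assoc, one_mul]
  match_scalars <;> field_simp <;> ring

theorem ee_idem (ht : t ≠ 0) (ht2 : t ^ 2 ≠ -1) : ee t S * ee t S = ee t S := by
  have := ne2 ht2
  rw [h.e_mul ht, h.Ue ht]
  match_scalars; field_simp; ring

theorem cU (s : A) (hs : U * s = s * U) : S * s = s * S := by
  calc S * s = S * (s * U) * S := by simp only [mul_assoc, h.US, mul_one]
    _ = _ := by rw [← hs, h.SU']

theorem c_x (ht : t ≠ 0) : S * (x1 + x2) = (x1 + x2) * S := by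
  apply h.cU; rw [mul_add, add_mul, h.Ux1 ht, h.Ux2 ht]; abel
theorem c_y (ht : t ≠ 0) : S * (y1 + y2) = (y1 + y2) * S := by
  apply h.cU; rw [mul_add, add_mul, h.Uy1' ht, h.Uy2 ht]; abel
theorem c_yy : S * (y1 * y2) = y1 * y2 * S := by
  rw [h.yc, ← mul_assoc, ← h.y1U, mul_assoc, h.Uy1, ← mul_assoc, h.yc]

theorem e_s_e (ht : t ≠ 0) (ht2 : t ^ 2 ≠ -1) (s : A) (hs : S * s = s * S) :
    ee t S * s * ee t S = s * ee t S := by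
  rw [h.ecomm s hs, mul_assoc, h.ee_idem ht ht2]

theorem e_R_e (ht : t ≠ 0) (ht2 : t ^ 2 ≠ -1) :
    ee t S * ((t⁻¹ ^ 2) • (y1 * x1) + y2 * x2) * ee t S
      = (y1 * x1 + (t⁻¹ ^ 2) • (y2 * x2)) * ee t S := by
  have := ne2 ht2
  rw [mul_assoc, h.e_mul ht]
  simp only [mul_add, add_mul, mul_sub, smul_mul_assoc, mul_smul_comm, mul_assoc, h.Ux1' ht,
    h.Ux2' ht, h.Uy1'' ht, h.Uy2' ht, h.Ue ht, smul_add, smul_sub]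
  match_scalars <;> field_simp <;> ring

theorem e_yx_e (ht : t ≠ 0) (ht2 : t ^ 2 ≠ -1) :
    (1 + t⁻¹ ^ 2) • (ee t S * (y1 * x1) * ee t S)
      = (y1 * x1 + (t⁻¹ ^ 2) • (y2 * x2)) * ee t S := by
  have := ne2 ht2
  rw [mul_assoc, h.e_mul ht]
  simp only [mul_add, add_mul, mul_sub, smul_mul_assoc, mul_smul_comm, mul_assoc, h.Ux1' ht,
    h.Ux2' ht, h.Uy1'' ht, h.Uy2' ht, h.Ue ht, smul_add, smul_sub]
  match_scalars <;> field_simp <;> ring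

theorem rel_P1Q1 (hq : q ≠ 0) (ht : t ≠ 0) :
    (x1 + x2) * ((y1 + y2) * ee t S) = (y1 + y2) * ((x1 + x2) * ee t S) +
      (q⁻¹ ^ 2 - 1) • ((y1 * x1 + (t⁻¹ ^ 2) • (y2 * x2)) * ee t S) := by
  simp only [mul_add, add_mul, mul_sub, smul_mul_assoc, mul_smul_comm, mul_assoc,
    h.x1y1' hq ht, h.x1y2' ht, h.x2y1' hq ht, h.x2y2' hq ht, h.x2x1', h.y2y1', h.UU' ht, h.Ux1' ht,
    h.Ux2' ht, h.Uy1'' ht, h.Uy2' ht, h.Ue ht, smul_add, smul_sub]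
  match_scalars <;> field_simp <;> ring

theorem rel_P1R (hq : q ≠ 0) (ht : t ≠ 0) :
    (x1 + x2) * ((y1 * x1 + (t⁻¹ ^ 2) • (y2 * x2)) * ee t S) =
     (q⁻¹ ^ 2) • ((y1 * x1 + (t⁻¹ ^ 2) • (y2 * x2)) * ((x1 + x2) * ee t S)) +
      (1 - q⁻¹ ^ 2) • ((y1 + y2) * (x1 * x2 * ee t S)) := by
  simp only [mul_add, add_mul, mul_sub, smul_mul_assoc, mul_smul_comm, mul_assoc,
    h.x1y1' hq ht, h.x1y2' ht, h.x2y1' hq ht, h.x2y2' hq ht, h.x2x1', h.y2y1', h.UU' ht, h.Ux1' ht,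
    h.Ux2' ht, h.Uy1'' ht, h.Uy2' ht, h.Ue ht, smul_add, smul_sub]
  match_scalars <;> field_simp <;> ring

theorem rel_RQ1 (hq : q ≠ 0) (ht : t ≠ 0) :
    (y1 * x1 + (t⁻¹ ^ 2) • (y2 * x2)) * ((y1 + y2) * ee t S) =
     (q⁻¹ ^ 2) • ((y1 + y2) * ((y1 * x1 + (t⁻¹ ^ 2) • (y2 * x2)) * ee t S)) +
      (1 - q⁻¹ ^ 2) • (y1 * y2 * ((x1 + x2) * ee t S)) := by
  simp only [mul_add, add_mul, mul_sub, smul_mul_assoc, mul_smul_comm, mul_assoc,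
    h.x1y1' hq ht, h.x1y2' ht, h.x2y1' hq ht, h.x2y2' hq ht, h.x2x1', h.y2y1', h.UU' ht, h.Ux1' ht,
    h.Ux2' ht, h.Uy1'' ht, h.Uy2' ht, h.Ue ht, smul_add, smul_sub]
  match_scalars <;> field_simp <;> ring

theorem rel_RR (hq : q ≠ 0) (ht : t ≠ 0) :
    (y1 * x1 + (t⁻¹ ^ 2) • (y2 * x2)) * ((y1 * x1 + (t⁻¹ ^ 2) • (y2 * x2)) * ee t S) =
     ((1 + t ^ 2) * (q⁻¹ ^ 2 + t⁻¹ ^ 2)) • (y1 * y2 * (x1 * x2 * ee t S))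
     - (q⁻¹ ^ 2) • (y1 * y2 * ((x1 + x2) * ((x1 + x2) * ee t S)))
     - (q⁻¹ ^ 2) • ((y1 + y2) * ((y1 + y2) * (x1 * x2 * ee t S)))
     + (q⁻¹ ^ 2) • ((y1 + y2) * ((y1 * x1 + (t⁻¹ ^ 2) • (y2 * x2)) * ((x1 + x2) * ee t S))) := by
  simp only [mul_add, add_mul, mul_sub, smul_mul_assoc, mul_smul_comm, mul_assoc,
    h.x1y1' hq ht, h.x1y2' ht, h.x2y1' hq ht, h.x2y2' hq ht, h.x2x1', h.y2y1', h.UU' ht, h.Ux1' ht,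
    h.Ux2' ht, h.Uy1'' ht, h.Uy2' ht, h.Ue ht, smul_add, smul_sub]
  match_scalars <;> field_simp <;> ring
end
end HR
theorem HR.of_pi {A : Type*} [Ring A] [Algebra ℂ A] {q t : ℂ} (hq : q ≠ 0)
    {S U p pi y1 y1i y2 y2i : A} (SU : S * U = 1) (US : U * S = 1)
    (ppi : p * pi = 1) (pip : pi * p = 1)
    (y1y1i : y1 * y1i = 1) (y1iy1 : y1i * y1 = 1) (y2y2i : y2 * y2i = 1) (y2iy2 : y2i * y2 = 1)
    (yc : y1 * y2 = y2 * y1) (uy : U * y1 * U = y2)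
    (py2 : p * y2 = y1 * p) (py1 : p * y1 = (q⁻¹ ^ 2) • (y2 * p))
    (ppS : p * p * S = S * (p * p))
    (hk : (S + algebraMap ℂ A t⁻¹) * (S - algebraMap ℂ A t) = 0) :
    HR q t S U (U * p) (pi * S) (p * S) (U * pi) y1 y1i y2 y2i := by
  have c1 : ∀ z, S * (U * z) = z := fun z => by rw [← mul_assoc, SU, one_mul]
  have c2 : ∀ z, U * (S * z) = z := fun z => by rw [← mul_assoc, US, one_mul]
  have c3 : ∀ z, p * (pi * z) = z := fun z => by rw [← mul_assoc, ppi, one_mul]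
  have c4 : ∀ z, pi * (p * z) = z := fun z => by rw [← mul_assoc, pip, one_mul]
  have hD : U * p * (p * S) = p * p := by
    rw [mul_assoc, ← mul_assoc p, ppS, c2]
  have hpy : pi * y1 = y2 * pi := by
    calc pi * y1 = pi * (y1 * p) * pi := by rw [mul_assoc, mul_assoc, ppi, mul_one]
      _ = _ := by rw [← py2, c4]
  refine ⟨SU, US, ?_, ?_, ?_, ?_, y1y1i, y1iy1, y2y2i, y2iy2, ?_, uy, ?_, yc, ?_, ?_, hk⟩
  · rw [mul_assoc, c3, US]
  · rw [mul_assoc, c1, pip]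
  · rw [mul_assoc, c1, ppi]
  · rw [mul_assoc, c4, US]
  · rw [c1]
  · rw [hD, mul_assoc, c1]
  · rw [hD]
    have : p * p * y1 = (q⁻¹ ^ 2) • (y1 * (p * p)) := by
      rw [mul_assoc, py1, mul_smul_comm, ← mul_assoc, py2, mul_assoc]
    rw [this, smul_smul, ← mul_pow, mul_inv_cancel₀ hq, one_pow, one_smul]
  · have : S * y2 = y1 * U := by rw [← uy, mul_assoc, c1]
    rw [mul_assoc, this, ← mul_assoc, hpy]
    simp only [mul_assoc, c1]

/-- generic points -/
def ZZ (q : ℂ) : Type := {z : ℂ × ℂ // z.1 ≠ 0 ∧ z.2 ≠ 0 ∧ ∀ k : ℤ, z.1 ≠ (q ^ 2) ^ k * z.2}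

namespace ZZ
variable {q : ℂ}
def a (z : ZZ q) : ℂ := z.1.1
def b (z : ZZ q) : ℂ := z.1.2
theorem a0 (z : ZZ q) : z.a ≠ 0 := z.2.1
theorem b0 (z : ZZ q) : z.b ≠ 0 := z.2.2.1
theorem ab (z : ZZ q) : z.a - z.b ≠ 0 := by
  have := z.2.2.2 0
  rw [zpow_zero, one_mul] at this
  exact sub_ne_zero.2 this
theorem ba (z : ZZ q) : z.b - z.a ≠ 0 := by
  have := z.ab; intro h; apply this; linear_combination -h

def s (hq : q ≠ 0) (z : ZZ q) : ZZ q := ⟨(z.1.2, z.1.1), z.2.2.1, z.2.1, fun k h => z.2.2.2 (-k) (by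
  have h2 : (q ^ 2) ^ k ≠ 0 := zpow_ne_zero _ (pow_ne_zero _ hq)
  simp only at h
  rw [h, zpow_neg]; field_simp)⟩

def p (hq : q ≠ 0) (z : ZZ q) : ZZ q := ⟨(q⁻¹ ^ 2 * z.1.2, z.1.1),
  mul_ne_zero (pow_ne_zero _ (inv_ne_zero hq)) z.2.2.1, z.2.1, fun k h => z.2.2.2 (-k - 1) (by
  have h2 : (q ^ 2) ^ k ≠ 0 := zpow_ne_zero _ (pow_ne_zero _ hq)
  simp only at h
  have h3 : z.1.2 = q ^ 2 * ((q ^ 2) ^ k * z.1.1) := by rw [← h]; field_simp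
  rw [h3, zpow_sub_one₀ (pow_ne_zero _ hq), zpow_neg]; field_simp)⟩

def pi (hq : q ≠ 0) (z : ZZ q) : ZZ q := ⟨(z.1.2, q ^ 2 * z.1.1),
  z.2.2.1, mul_ne_zero (pow_ne_zero _ hq) z.2.1, fun k h => z.2.2.2 (-k - 1) (by
  have h2 : (q ^ 2) ^ k ≠ 0 := zpow_ne_zero _ (pow_ne_zero _ hq)
  simp only at h
  rw [h, zpow_sub_one₀ (pow_ne_zero _ hq), zpow_neg]; field_simp)⟩

variable (hq : q ≠ 0) (z : ZZ q)
theorem sa : (z.s hq).a = z.b := rfl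
theorem sb : (z.s hq).b = z.a := rfl
theorem pa : (z.p hq).a = q⁻¹ ^ 2 * z.b := rfl
theorem pb : (z.p hq).b = z.a := rfl
theorem ss : (z.s hq).s hq = z := rfl
theorem ppi : (z.p hq).pi hq = z := by
  apply Subtype.ext; apply Prod.ext
  · rfl
  · change q ^ 2 * (q⁻¹ ^ 2 * z.1.2) = z.1.2
    field_simp
theorem pip : (z.pi hq).p hq = z := by
  apply Subtype.ext; apply Prod.ext
  · change q⁻¹ ^ 2 * (q ^ 2 * z.1.1) = z.1.1
    field_simp
  · rfl
theorem pps : ((z.s hq).p hq).p hq = ((z.p hq).p hq).s hq := rfl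
end ZZ

section rep
variable {q : ℂ} (hq : q ≠ 0) (t u v : ℂ)

abbrev VV (q : ℂ) : Type := ZZ q → ℂ × ℂ

def rS : Module.End ℂ (VV q) where
  toFun F z := (t * (F (z.s hq)).1 + t⁻¹ * u * (F (z.s hq)).2
      + (t - t⁻¹) * z.a / (z.a - z.b) * ((F z).1 - (F (z.s hq)).1),
    -t⁻¹ * (F (z.s hq)).2 + (t - t⁻¹) * z.a / (z.a - z.b) * ((F z).2 - (F (z.s hq)).2))
  map_add' F G := by ext z <;> simp <;> ring
  map_smul' c F := by ext z <;> simp <;> ring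

def rU : Module.End ℂ (VV q) := rS hq t u - (t - t⁻¹) • 1

def rp : Module.End ℂ (VV q) where
  toFun F z := (t⁻¹ * u * (F (z.p hq)).1 + (t⁻¹ * u ^ 2 - t * v) * (F (z.p hq)).2,
    -t⁻¹ * (F (z.p hq)).1 - t⁻¹ * u * (F (z.p hq)).2)
  map_add' F G := by ext z <;> simp <;> ring
  map_smul' c F := by ext z <;> simp <;> ring

def rpi : Module.End ℂ (VV q) where
  toFun F z := (v⁻¹ * (t⁻¹ * u * (F (z.pi hq)).1 + (t⁻¹ * u ^ 2 - t * v) * (F (z.pi hq)).2),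
    v⁻¹ * (-t⁻¹ * (F (z.pi hq)).1 - t⁻¹ * u * (F (z.pi hq)).2))
  map_add' F G := by ext z <;> simp <;> ring
  map_smul' c F := by ext z <;> simp <;> ring

def rm (g : ZZ q → ℂ) : Module.End ℂ (VV q) where
  toFun F z := g z • F z
  map_add' F G := by ext z <;> simp <;> ring
  map_smul' c F := by ext z <;> simp <;> ring

theorem rS_sq (ht : t ≠ 0) : rS hq t u * rS hq t u = 1 + (t - t⁻¹) • rS hq t u := by
  apply LinearMap.ext; intro F; funext z
  have h1 := z.ab
  have h2 := z.ba
  apply Prod.ext <;>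
  · simp [rS, ZZ.sa, ZZ.sb, ZZ.ss]
    field_simp
    ring

theorem rep_HR (ht : t ≠ 0) (hv : v ≠ 0) :
    HR q t (rS hq t u) (rU hq t u) (rU hq t u * rp hq t u v) (rpi hq t u v * rS hq t u)
      (rp hq t u v * rS hq t u) (rU hq t u * rpi hq t u v)
      (rm ZZ.a) (rm fun z => z.a⁻¹) (rm ZZ.b) (rm fun z => z.b⁻¹) := by
  apply HR.of_pi hq
  · rw [rU, mul_sub, rS_sq hq t u ht, mul_smul_comm, mul_one]; abel
  · rw [rU, sub_mul, rS_sq hq t u ht, smul_mul_assoc, one_mul]; abel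
  · apply LinearMap.ext; intro F; funext z
    apply Prod.ext <;>
    · simp [rp, rpi, ZZ.ppi]
      field_simp
      ring
  · apply LinearMap.ext; intro F; funext z
    apply Prod.ext <;>
    · simp [rp, rpi, ZZ.pip]
      field_simp
      ring
  · apply LinearMap.ext; intro F; funext z
    have := z.a0
    apply Prod.ext <;> simp [rm, this]
  · apply LinearMap.ext; intro F; funext z
    have := z.a0
    apply Prod.ext <;> simp [rm, this]
  · apply LinearMap.ext; intro F; funext z
    have := z.b0
    apply Prod.ext <;> simp [rm, this]
  · apply LinearMap.ext; intro F; funext z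
    have := z.b0
    apply Prod.ext <;> simp [rm, this]
  · apply LinearMap.ext; intro F; funext z
    apply Prod.ext <;> simp [rm] <;> ring
  · apply LinearMap.ext; intro F; funext z
    have h1 := z.ab
    have h2 := z.ba
    apply Prod.ext <;>
    · simp [rS, rU, rm, ZZ.sa, ZZ.sb, ZZ.ss]
      field_simp
      ring
  · apply LinearMap.ext; intro F; funext z
    apply Prod.ext <;>
    · simp [rp, rm, ZZ.pa, ZZ.pb]
      ring
  · apply LinearMap.ext; intro F; funext z
    apply Prod.ext <;>
    · simp [rp, rm, ZZ.pa, ZZ.pb]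
      ring
  · apply LinearMap.ext; intro F; funext z
    have h1 := z.ab
    have h2 := (z.p hq).ab
    have h3 := ((z.p hq).p hq).ab
    simp only [ZZ.pa, ZZ.pb] at h2 h3
    have h3 : q⁻¹ ^ 2 * z.a - q⁻¹ ^ 2 * z.b ≠ 0 := h3
    have h4 : q⁻¹ ^ 2 * z.a / (q⁻¹ ^ 2 * z.a - q⁻¹ ^ 2 * z.b) = z.a / (z.a - z.b) := by
      rw [← mul_sub, mul_div_mul_left]; exact pow_ne_zero _ (inv_ne_zero hq)
    rw [mul_div_assoc] at h4
    apply Prod.ext <;>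
    · simp only [rp, rS, ZZ.pa, ZZ.pb, ZZ.pps, Module.End.mul_apply, LinearMap.coe_mk,
        AddHom.coe_mk, mul_div_assoc, h4]
      generalize z.a / (z.a - z.b) = k
      field_simp
      ring
  · simp only [Algebra.algebraMap_eq_smul_one]
    simp only [mul_sub, add_mul, smul_mul_assoc, mul_smul_comm, one_mul, mul_one]
    rw [rS_sq hq t u ht]
    match_scalars <;> field_simp <;> ring

def v0 : VV q := fun _ => (1, 0)

theorem rS_v0 : rS hq t u v0 = t • v0 := by
  funext z; apply Prod.ext <;> simp [rS, v0]

theorem rx1_v0 (ht : t ≠ 0) : (rU hq t u * rp hq t u v) v0 = fun _ => (0, 1) := by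
  funext z
  have h1 := z.ab
  apply Prod.ext <;> simp [rS, rU, rp, v0] <;> field_simp <;> ring

theorem rx2_v0 (ht : t ≠ 0) : (rp hq t u v * rS hq t u) v0 = fun _ => (u, -1) := by
  funext z
  have h1 := z.ab
  apply Prod.ext <;> simp [rS, rU, rp, v0] <;> field_simp

theorem rx12_v0 (ht : t ≠ 0) : (rU hq t u * rp hq t u v) ((rp hq t u v * rS hq t u) v0)
     = v • v0 := by
  rw [rx2_v0 hq t u v ht]
  funext z
  have h1 := z.ab
  apply Prod.ext <;> simp [rS, rU, rp, v0] <;> field_simp <;> ring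
end rep

theorem poly_zero (q c : ℂ) (g : MvPolynomial (Fin 4) ℂ)
    (hg : ∀ z : ZZ q, z.a ≠ c * z.b → ∀ u v : ℂ, v ≠ 0 →
      MvPolynomial.eval ![z.a + z.b, z.a * z.b, u, v] g = 0) : g = 0 := by
  have key : ∀ y2 u v : ℂ, y2 ≠ 0 → v ≠ 0 → ∀ y1 : ℂ,
      MvPolynomial.eval ![y1 + y2, y1 * y2, u, v] g = 0 := by
    intro y2 u v hy2 hv
    let bad : Set ℂ := {0} ∪ {c * y2} ∪ Set.range (fun k : ℤ => (q ^ 2) ^ k * y2)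
    have hb : bad.Countable := by
      apply Set.Countable.union
      · exact (Set.countable_singleton _).union (Set.countable_singleton _)
      · exact Set.countable_range _
    have hd : Dense badᶜ := hb.dense_compl ℝ
    have hc1 : Continuous fun y1 : ℂ => MvPolynomial.eval ![y1 + y2, y1 * y2, u, v] g := by
      apply (MvPolynomial.continuous_eval g).comp
      apply continuous_pi
      intro i
      fin_cases i <;> simp <;> fun_prop
    have := Continuous.ext_on hd hc1 (continuous_const (y := (0:ℂ))) (by
      intro y1 hy1
      simp only [bad, Set.mem_compl_iff, Set.mem_union, Set.mem_singleton_iff, Set.mem_range,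
        not_or, not_exists] at hy1
      exact hg ⟨(y1, y2), hy1.1.1, hy2, fun k h => hy1.2 k h.symm⟩ hy1.1.2 u v hv)
    exact fun y1 => congrFun this y1
  have h0 : ({0}ᶜ : Set ℂ).Infinite := Set.Finite.infinite_compl (Set.finite_singleton 0)
  apply MvPolynomial.funext_set (fun i : Fin 4 => if i = 1 ∨ i = 3 then ({0}ᶜ : Set ℂ) else Set.univ)
  · intro i
    split_ifs
    · exact h0
    · exact Set.infinite_univ
  · intro x hx
    have h1 : x 1 ≠ 0 := by simpa using hx 1 (Set.mem_univ _)
    have h3 : x 3 ≠ 0 := by simpa using hx 3 (Set.mem_univ _)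
    obtain ⟨w, hw⟩ := IsAlgClosed.exists_pow_nat_eq (x 0 ^ 2 - 4 * x 1) (n := 2) (by norm_num)
    have e1 : (x 0 + w) / 2 * ((x 0 - w) / 2) = x 1 := by linear_combination (-1 / 4 : ℂ) * hw
    have e0 : (x 0 + w) / 2 + (x 0 - w) / 2 = x 0 := by ring
    have := key ((x 0 - w) / 2) (x 2) (x 3) (by
      intro h; rw [h, mul_zero] at e1; exact h1 e1.symm) h3 ((x 0 + w) / 2)
    rw [e1, e0] at this
    rw [map_zero, ← this]
    congr 2
    funext i; fin_cases i <;> rfl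
namespace HR
section
variable {A : Type*} [Ring A] [Algebra ℂ A] {q t : ℂ}
    {S U x1 x1i x2 x2i y1 y1i y2 y2i : A}
variable (h : HR q t S U x1 x1i x2 x2i y1 y1i y2 y2i)
include h
theorem rel_P2Q2 (hq : q ≠ 0) (ht : t ≠ 0) :
    x1 * x2 * (y1 * y2 * ee t S) =
      (q⁻¹ ^ 4) • (y1 * y2 * (x1 * x2 * ee t S)) := by
  simp only [mul_add, add_mul, mul_sub, smul_mul_assoc, mul_smul_comm, mul_assoc,
    h.x1y1' hq ht, h.x1y2' ht, h.x2y1' hq ht, h.x2y2' hq ht, h.x2x1', h.y2y1', h.UU' ht, h.Ux1' ht,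
    h.Ux2' ht, h.Uy1'' ht, h.Uy2' ht, h.Ue ht, smul_add, smul_sub]
  match_scalars <;> field_simp <;> ring

theorem rel_P2Q1 (hq : q ≠ 0) (ht : t ≠ 0) :
    x1 * x2 * ((y1 + y2) * ee t S) =
      (q⁻¹ ^ 2) • ((y1 + y2) * (x1 * x2 * ee t S)) := by
  simp only [mul_add, add_mul, mul_sub, smul_mul_assoc, mul_smul_comm, mul_assoc,
    h.x1y1' hq ht, h.x1y2' ht, h.x2y1' hq ht, h.x2y2' hq ht, h.x2x1', h.y2y1', h.UU' ht, h.Ux1' ht,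
    h.Ux2' ht, h.Uy1'' ht, h.Uy2' ht, h.Ue ht, smul_add, smul_sub]
  match_scalars <;> field_simp <;> ring

theorem rel_P1Q2 (hq : q ≠ 0) (ht : t ≠ 0) :
    (x1 + x2) * (y1 * y2 * ee t S) =
      (q⁻¹ ^ 2) • (y1 * y2 * ((x1 + x2) * ee t S)) := by
  simp only [mul_add, add_mul, mul_sub, smul_mul_assoc, mul_smul_comm, mul_assoc,
    h.x1y1' hq ht, h.x1y2' ht, h.x2y1' hq ht, h.x2y2' hq ht, h.x2x1', h.y2y1', h.UU' ht, h.Ux1' ht,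
    h.Ux2' ht, h.Uy1'' ht, h.Uy2' ht, h.Ue ht, smul_add, smul_sub]
  match_scalars <;> field_simp <;> ring

theorem rel_P2R (hq : q ≠ 0) (ht : t ≠ 0) :
    x1 * x2 * ((y1 * x1 + (t⁻¹ ^ 2) • (y2 * x2)) * ee t S) =
      (q⁻¹ ^ 2) • ((y1 * x1 + (t⁻¹ ^ 2) • (y2 * x2)) * (x1 * x2 * ee t S)) := by
  simp only [mul_add, add_mul, mul_sub, smul_mul_assoc, mul_smul_comm, mul_assoc,
    h.x1y1' hq ht, h.x1y2' ht, h.x2y1' hq ht, h.x2y2' hq ht, h.x2x1', h.y2y1', h.UU' ht, h.Ux1' ht,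
    h.Ux2' ht, h.Uy1'' ht, h.Uy2' ht, h.Ue ht, smul_add, smul_sub]
  match_scalars <;> field_simp <;> ring

theorem rel_RQ2 (hq : q ≠ 0) (ht : t ≠ 0) :
    (y1 * x1 + (t⁻¹ ^ 2) • (y2 * x2)) * (y1 * y2 * ee t S) =
      (q⁻¹ ^ 2) • (y1 * y2 * ((y1 * x1 + (t⁻¹ ^ 2) • (y2 * x2)) * ee t S)) := by
  simp only [mul_add, add_mul, mul_sub, smul_mul_assoc, mul_smul_comm, mul_assoc,
    h.x1y1' hq ht, h.x1y2' ht, h.x2y1' hq ht, h.x2y2' hq ht, h.x2x1', h.y2y1', h.UU' ht, h.Ux1' ht,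
    h.Ux2' ht, h.Uy1'' ht, h.Uy2' ht, h.Ue ht, smul_add, smul_sub]
  match_scalars <;> field_simp <;> ring

theorem rel_P2P1 (hq : q ≠ 0) (ht : t ≠ 0) :
    x1 * x2 * ((x1 + x2) * ee t S) =
      (x1 + x2) * (x1 * x2 * ee t S) := by
  simp only [mul_add, add_mul, mul_assoc, h.x2x1', h.y2y1']

theorem rel_Q2Q1 (hq : q ≠ 0) (ht : t ≠ 0) :
    y1 * y2 * ((y1 + y2) * ee t S) =
      (y1 + y2) * (y1 * y2 * ee t S) := by
  simp only [mul_add, add_mul, mul_assoc, h.x2x1', h.y2y1']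


theorem DDi : x1 * x2 * (x2i * x1i) = 1 := by
  rw [mul_assoc, ← mul_assoc x2, h.x2x2i, one_mul, h.x1x1i]
theorem DiD : x2i * x1i * (x1 * x2) = 1 := by
  rw [mul_assoc, ← mul_assoc x1i, h.x1ix1, one_mul, h.x2ix2]
theorem EEi : y1 * y2 * (y2i * y1i) = 1 := by
  rw [mul_assoc, ← mul_assoc y2, h.y2y2i, one_mul, h.y1y1i]
theorem EiE : y2i * y1i * (y1 * y2) = 1 := by
  rw [mul_assoc, ← mul_assoc y1i, h.y1iy1, one_mul, h.y2iy2]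

omit h in
theorem inv_comm {a d di : A} (h1 : d * di = 1) (h2 : di * d = 1) (hc : a * d = d * a) :
    a * di = di * a := by
  calc a * di = di * (d * a) * di := by rw [← mul_assoc, h2, one_mul]
    _ = _ := by rw [← hc, mul_assoc, mul_assoc, h1, mul_one]

theorem c_Di : S * (x2i * x1i) = x2i * x1i * S := inv_comm h.DDi h.DiD h.cSD
theorem c_Ei : S * (y2i * y1i) = y2i * y1i * S := inv_comm h.EEi h.EiE h.c_yy

theorem cU2 (s : A) (hs : S * s = s * S) : U * s = s * U :=
  (inv_comm h.SU h.US hs.symm).symm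

/-- symmetric Laurent polynomials in the `x`s -/
def SX (x1 x2 x1i x2i : A) : Subalgebra ℂ A := Algebra.adjoin ℂ {x1 + x2, x1 * x2, x2i * x1i}

theorem SX_S {a : A} (ha : a ∈ SX x1 x2 x1i x2i) (ht : t ≠ 0) : S * a = a * S := by
  have : SX x1 x2 x1i x2i ≤ Subalgebra.centralizer ℂ {S} := by
    apply Algebra.adjoin_le
    intro z hz
    rw [SetLike.mem_coe, Subalgebra.mem_centralizer_iff]
    intro g hg
    rw [Set.mem_singleton_iff] at hg; subst hg
    rcases hz with rfl | rfl | rfl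
    · exact h.c_x ht
    · exact h.cSD
    · exact h.c_Di
  exact (Subalgebra.mem_centralizer_iff ℂ).1 (this ha) S rfl

theorem SX_x1 {a : A} (ha : a ∈ SX x1 x2 x1i x2i) : x1 * a = a * x1 := by
  have : SX x1 x2 x1i x2i ≤ Subalgebra.centralizer ℂ {x1} := by
    apply Algebra.adjoin_le
    intro z hz
    rw [SetLike.mem_coe, Subalgebra.mem_centralizer_iff]
    intro g hg
    rw [Set.mem_singleton_iff] at hg; subst hg
    have hD : g * (g * x2) = g * x2 * g := by rw [mul_assoc, h.xc]
    rcases hz with rfl | rfl | rfl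
    · rw [mul_add, add_mul, h.xc]
    · exact hD
    · exact inv_comm h.DDi h.DiD hD
  exact (Subalgebra.mem_centralizer_iff ℂ).1 (this ha) x1 rfl

theorem e_SX {a : A} (ha : a ∈ SX x1 x2 x1i x2i) (ht : t ≠ 0) :
    ee t S * a = a * ee t S := h.ecomm _ (h.SX_S ha ht)

end

variable {A : Type*} [Ring A] [Algebra ℂ A]

def Lx (t : ℂ) (S x1 x2 x1i x2i : A) (m : A) : Prop :=
  ∃ a ∈ SX x1 x2 x1i x2i, ∃ b ∈ SX x1 x2 x1i x2i, m = a * ee t S + x1 * (b * ee t S)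

inductive InL (P : A → Prop) (y1 y1i y2 y2i : A) : A → Prop
  | base (m : A) : P m → InL P y1 y1i y2 y2i m
  | add (m n : A) : InL P y1 y1i y2 y2i m → InL P y1 y1i y2 y2i n → InL P y1 y1i y2 y2i (m + n)
  | smul (c : ℂ) (m : A) : InL P y1 y1i y2 y2i m → InL P y1 y1i y2 y2i (c • m)
  | y1 (m : A) : InL P y1 y1i y2 y2i m → InL P y1 y1i y2 y2i (y1 * m)
  | y1i (m : A) : InL P y1 y1i y2 y2i m → InL P y1 y1i y2 y2i (y1i * m)
  | y2 (m : A) : InL P y1 y1i y2 y2i m → InL P y1 y1i y2 y2i (y2 * m)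
  | y2i (m : A) : InL P y1 y1i y2 y2i m → InL P y1 y1i y2 y2i (y2i * m)

section
variable {q t : ℂ} {S U x1 x1i x2 x2i y1 y1i y2 y2i : A}
variable (h : HR q t S U x1 x1i x2 x2i y1 y1i y2 y2i)
include h

theorem Lx_sx {s m : A} (hs : s ∈ SX x1 x2 x1i x2i) (hm : Lx t S x1 x2 x1i x2i m) :
    Lx t S x1 x2 x1i x2i (s * m) := by
  obtain ⟨a, ha, b, hb, rfl⟩ := hm
  refine ⟨s * a, mul_mem hs ha, s * b, mul_mem hs hb, ?_⟩
  rw [mul_add, ← mul_assoc s x1, ← h.SX_x1 hs]; simp only [mul_assoc]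

omit h in
theorem Lx_add {m n : A} (hm : Lx t S x1 x2 x1i x2i m) (hn : Lx t S x1 x2 x1i x2i n) :
    Lx t S x1 x2 x1i x2i (m + n) := by
  obtain ⟨a, ha, b, hb, rfl⟩ := hm
  obtain ⟨a', ha', b', hb', rfl⟩ := hn
  refine ⟨a + a', add_mem ha ha', b + b', add_mem hb hb', ?_⟩
  simp only [add_mul, mul_add]; abel

omit h in
theorem Lx_smul (c : ℂ) {m : A} (hm : Lx t S x1 x2 x1i x2i m) :
    Lx t S x1 x2 x1i x2i (c • m) := by
  obtain ⟨a, ha, b, hb, rfl⟩ := hm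
  refine ⟨c • a, Subalgebra.smul_mem _ ha c, c • b, Subalgebra.smul_mem _ hb c, ?_⟩
  simp only [smul_mul_assoc, mul_smul_comm, smul_add]

omit h in
theorem memp : x1 + x2 ∈ SX x1 x2 x1i x2i := Algebra.subset_adjoin (by simp)
omit h in
theorem memD : x1 * x2 ∈ SX x1 x2 x1i x2i := Algebra.subset_adjoin (by simp)
omit h in
theorem memDi : x2i * x1i ∈ SX x1 x2 x1i x2i := Algebra.subset_adjoin (by simp)

theorem Lx_x1 {m : A} (hm : Lx t S x1 x2 x1i x2i m) :
    Lx t S x1 x2 x1i x2i (x1 * m) := by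
  obtain ⟨a, ha, b, hb, rfl⟩ := hm
  refine ⟨-(x1 * x2 * b), neg_mem (mul_mem memD hb), a + (x1 + x2) * b,
    add_mem ha (mul_mem memp hb), ?_⟩
  simp only [mul_add, add_mul, neg_mul, mul_assoc]; abel

theorem x1i_eq : x1i = x2i * x1i * (x1 + x2 - x1) := by
  rw [add_sub_cancel_left]
  have := h.DiD
  calc x1i = x2i * x1i * (x1 * x2) * x1i := by rw [this, one_mul]
    _ = _ := by rw [h.xc]; simp only [mul_assoc, h.x1x1i, mul_one]

theorem Lx_x1i {m : A} (hm : Lx t S x1 x2 x1i x2i m) :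
    Lx t S x1 x2 x1i x2i (x1i * m) := by
  have : x1i * m = x2i * x1i * ((x1 + x2) * m + (-1 : ℂ) • (x1 * m)) := by
    conv_lhs => rw [h.x1i_eq]
    rw [mul_assoc, sub_mul, neg_smul, one_smul, ← sub_eq_add_neg]
  rw [this]
  exact h.Lx_sx memDi (Lx_add (h.Lx_sx memp hm) (Lx_smul _ (h.Lx_x1 hm)))

theorem Lx_U (ht : t ≠ 0) {m : A} (hm : Lx t S x1 x2 x1i x2i m) :
    Lx t S x1 x2 x1i x2i (U * m) := by
  obtain ⟨a, ha, b, hb, rfl⟩ := hm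
  refine ⟨t⁻¹ • a + t⁻¹ • ((x1 + x2) * b), add_mem (Subalgebra.smul_mem _ ha _)
    (Subalgebra.smul_mem _ (mul_mem memp hb) _), - t • b, Subalgebra.smul_mem _ hb _, ?_⟩
  have e1 : ∀ a ∈ SX x1 x2 x1i x2i, U * (a * ee t S) = t⁻¹ • (a * ee t S) := by
    intro a ha
    rw [← mul_assoc, h.cU2 a (h.SX_S ha ht), mul_assoc, h.Ue ht, mul_smul_comm]
  rw [mul_add, e1 a ha, h.Ux1' ht, e1 b hb]
  simp only [add_mul, smul_mul_assoc, mul_smul_comm, mul_assoc]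
  match_scalars <;> field_simp <;> ring

local notation "LL" => InL (Lx t S x1 x2 x1i x2i) y1 y1i y2 y2i

omit h in
theorem InL.sub {P : A → Prop} {m n : A} (hm : InL P y1 y1i y2 y2i m)
    (hn : InL P y1 y1i y2 y2i n) : InL P y1 y1i y2 y2i (m - n) := by
  have : m - n = m + (-1 : ℂ) • n := by rw [neg_smul, one_smul, sub_eq_add_neg]
  rw [this]; exact .add _ _ hm (.smul _ _ hn)

theorem LL_U (ht : t ≠ 0) {m : A} (hm : LL m) : LL (U * m) := by
  induction hm with
  | base m hm => exact .base _ (h.Lx_U ht hm)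
  | add m n _ _ hm hn => rw [mul_add]; exact .add _ _ hm hn
  | smul c m _ hm => rw [mul_smul_comm]; exact .smul _ _ hm
  | y1 m h1 hm =>
    rw [h.Uy1'' ht]; exact .add _ _ (.y2 _ hm) (.smul _ _ (.y2 _ h1))
  | y2 m h1 hm =>
    rw [h.Uy2' ht]; exact .sub (.y1 _ hm) (.smul _ _ (.y2 _ h1))
  | y1i m h1 hm =>
    have e : S * (y1i * m) = y2i * (U * m) := by
      calc S * (y1i * m) = y2i * (y2 * S) * (y1i * m) := by rw [← mul_assoc y2i, h.y2iy2, one_mul]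
        _ = y2i * U * (y1 * y1i) * m := by rw [← h.Uy1]; simp only [mul_assoc]
        _ = _ := by rw [h.y1y1i, mul_one, mul_assoc]
    have : U * (y1i * m) = y2i * (U * m) - (t - t⁻¹) • (y1i * m) := by
      rw [← e, h.SeqU ht, add_mul, smul_mul_assoc, one_mul, add_sub_cancel_right]
    rw [this]
    exact .sub (.y2i _ hm) (.smul _ _ (.y1i _ h1))
  | y2i m h1 hm =>
    have : U * (y2i * m) = y1i * (U * m + (t - t⁻¹) • m) := by
      calc U * (y2i * m) = y1i * (y1 * U) * (y2i * m) := by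
            rw [← mul_assoc y1i, h.y1iy1, one_mul]
        _ = y1i * S * (y2 * y2i) * m := by rw [h.y1U]; simp only [mul_assoc]
        _ = y1i * (S * m) := by rw [h.y2y2i, mul_one, mul_assoc]
        _ = _ := by rw [h.SeqU ht, add_mul, smul_mul_assoc, one_mul]
    rw [this]
    exact .y1i _ (.add _ _ hm (.smul _ _ h1))

theorem LL_S (ht : t ≠ 0) {m : A} (hm : LL m) : LL (S * m) := by
  have e : S * m = U * m + (t - t⁻¹) • m := by
    conv_lhs => rw [h.SeqU ht, add_mul, smul_mul_assoc, one_mul]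
  rw [e]
  exact .add _ _ (h.LL_U ht hm) (.smul _ _ hm)

theorem LL_x1 (hq : q ≠ 0) (ht : t ≠ 0) {m : A} (hm : LL m) : LL (x1 * m) := by
  suffices LL (S * x1 * m) by
    have h2 := h.LL_U ht this
    rwa [mul_assoc, h.US'] at h2
  have hp1 := h.pi_y1 hq
  have hp2 := h.pi_y2
  have base : ∀ m, Lx t S x1 x2 x1i x2i m → LL (S * x1 * m) := by
    intro m hm
    rw [mul_assoc]
    exact h.LL_S ht (.base _ (h.Lx_x1 hm))
  generalize S * x1 = p at *
  induction hm with
  | base m hm => exact base m hm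
  | add m n _ _ hm hn => rw [mul_add]; exact .add _ _ hm hn
  | smul c m _ hm => rw [mul_smul_comm]; exact .smul _ _ hm
  | y1 m h1 hm =>
    rw [← mul_assoc, hp1, smul_mul_assoc, mul_assoc]; exact .smul _ _ (.y2 _ hm)
  | y2 m h1 hm =>
    rw [← mul_assoc, hp2, mul_assoc]; exact .y1 _ hm
  | y1i m h1 hm =>
    have : p * (y1i * m) = q ^ 2 • (y2i * (p * m)) := by
      calc p * (y1i * m) = q ^ 2 • (y2i * ((q⁻¹ ^ 2) • (y2 * p)) * (y1i * m)) := by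
            rw [mul_smul_comm, smul_mul_assoc, smul_smul, ← mul_pow, mul_inv_cancel₀ hq, one_pow,
              one_smul, ← mul_assoc y2i, h.y2iy2, one_mul]
        _ = q ^ 2 • (y2i * p * (y1 * y1i) * m) := by rw [← hp1]; simp only [mul_assoc]
        _ = _ := by rw [h.y1y1i, mul_one, mul_assoc]
    rw [this]; exact .smul _ _ (.y2i _ hm)
  | y2i m h1 hm =>
    have : p * (y2i * m) = y1i * (p * m) := by
      calc p * (y2i * m) = y1i * (y1 * p) * (y2i * m) := by
            rw [← mul_assoc y1i, h.y1iy1, one_mul]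
        _ = y1i * p * (y2 * y2i) * m := by rw [← hp2]; simp only [mul_assoc]
        _ = _ := by rw [h.y2y2i, mul_one, mul_assoc]
    rw [this]; exact .y1i _ hm

theorem LL_x1i (hq : q ≠ 0) (ht : t ≠ 0) {m : A} (hm : LL m) : LL (x1i * m) := by
  suffices ∀ m, LL m → LL (x1i * U * m) by
    have h2 := this _ (h.LL_S ht hm)
    rwa [mul_assoc, h.US'] at h2
  clear hm m
  intro m hm
  have hp1 := h.pi_y1 hq
  have hp2 := h.pi_y2
  have hpr : S * x1 * (x1i * U) = 1 := by
    rw [mul_assoc, ← mul_assoc x1, h.x1x1i, one_mul, h.SU]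
  have hrp : x1i * U * (S * x1) = 1 := by
    rw [mul_assoc, h.US', h.x1ix1]
  have base : ∀ m, Lx t S x1 x2 x1i x2i m → LL (x1i * U * m) := by
    intro m hm
    rw [mul_assoc]
    exact .base _ (h.Lx_x1i (h.Lx_U ht hm))
  generalize S * x1 = p at *
  generalize x1i * U = r at *
  have e1 : r * y1 = y2 * r := by
    calc r * y1 = r * (y1 * p) * r := by simp only [mul_assoc, hpr, mul_one]
      _ = _ := by rw [← hp2, ← mul_assoc, hrp, one_mul]
  have e2 : r * y2 = q ^ 2 • (y1 * r) := by
    calc r * y2 = q ^ 2 • (r * ((q⁻¹ ^ 2) • (y2 * p)) * r) := by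
            rw [mul_smul_comm, smul_mul_assoc, smul_smul, ← mul_pow, mul_inv_cancel₀ hq, one_pow,
              one_smul]; simp only [mul_assoc, hpr, mul_one]
      _ = _ := by rw [← hp1, ← mul_assoc, hrp, one_mul]
  induction hm with
  | base m hm => exact base m hm
  | add m n _ _ hm hn => rw [mul_add]; exact .add _ _ hm hn
  | smul c m _ hm => rw [mul_smul_comm]; exact .smul _ _ hm
  | y1 m h1 hm =>
    rw [← mul_assoc, e1, mul_assoc]; exact .y2 _ hm
  | y2 m h1 hm =>
    rw [← mul_assoc, e2, smul_mul_assoc, mul_assoc]; exact .smul _ _ (.y1 _ hm)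
  | y1i m h1 hm =>
    have : r * (y1i * m) = y2i * (r * m) := by
      calc r * (y1i * m) = y2i * (y2 * r) * (y1i * m) := by
            rw [← mul_assoc y2i, h.y2iy2, one_mul]
        _ = y2i * r * (y1 * y1i) * m := by rw [← e1]; simp only [mul_assoc]
        _ = _ := by rw [h.y1y1i, mul_one, mul_assoc]
    rw [this]; exact .y2i _ hm
  | y2i m h1 hm =>
    have : r * (y2i * m) = q⁻¹ ^ 2 • (y1i * (r * m)) := by
      calc r * (y2i * m) = q⁻¹ ^ 2 • (y1i * (q ^ 2 • (y1 * r)) * (y2i * m)) := by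
            rw [mul_smul_comm, smul_mul_assoc, smul_smul, ← mul_pow, inv_mul_cancel₀ hq, one_pow,
              one_smul, ← mul_assoc y1i, h.y1iy1, one_mul]
        _ = q⁻¹ ^ 2 • (y1i * r * (y2 * y2i) * m) := by rw [← e2]; simp only [mul_assoc]
        _ = _ := by rw [h.y2y2i, mul_one, mul_assoc]
    rw [this]; exact .smul _ _ (.y1i _ hm)

theorem x2i_eq : x2i = U * x1i * U := by
  calc x2i = U * x1i * U * x2 * x2i := by
        rw [← h.sx]; simp only [← mul_assoc]
        rw [mul_assoc (U * x1i) U S, h.US, mul_one, mul_assoc U, h.x1ix1, mul_one, h.US, one_mul]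
    _ = _ := by rw [mul_assoc, h.x2x2i, mul_one]

theorem LL_x2 (hq : q ≠ 0) (ht : t ≠ 0) {m : A} (hm : LL m) : LL (x2 * m) := by
  have e : x2 * m = S * (x1 * (S * m)) := by
    conv_lhs => rw [← h.sx, mul_assoc, mul_assoc]
  rw [e]
  exact h.LL_S ht (h.LL_x1 hq ht (h.LL_S ht hm))

theorem LL_x2i (hq : q ≠ 0) (ht : t ≠ 0) {m : A} (hm : LL m) : LL (x2i * m) := by
  have e : x2i * m = U * (x1i * (U * m)) := by
    conv_lhs => rw [h.x2i_eq, mul_assoc, mul_assoc]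
  rw [e]
  exact h.LL_U ht (h.LL_x1i hq ht (h.LL_U ht hm))

omit h in
theorem LL_e : LL (ee t S) := .base _ ⟨1, one_mem _, 0, zero_mem _, by simp⟩

theorem e_x1_e (ht : t ≠ 0) (ht2 : t ^ 2 ≠ -1) :
    (1 + t ^ 2) • (ee t S * (x1 * ee t S)) = (x1 + x2) * ee t S := by
  have := ne2 ht2
  rw [h.e_mul ht]
  simp only [add_mul, h.Ux1' ht, h.Ue ht, mul_smul_comm]
  match_scalars <;> field_simp <;> ring

theorem e_y1_e (ht : t ≠ 0) (ht2 : t ^ 2 ≠ -1) :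
    (1 + t⁻¹ ^ 2) • (ee t S * (y1 * ee t S)) = (y1 + y2) * ee t S := by
  have := ne2 ht2
  rw [h.e_mul ht]
  simp only [add_mul, h.Uy1'' ht, h.Ue ht, mul_smul_comm]
  match_scalars <;> field_simp <;> ring

theorem eL_mem (ht : t ≠ 0) (ht2 : t ^ 2 ≠ -1) (B : Submodule ℂ A)
    (hmul : ∀ a ∈ B, ∀ b ∈ B, a * b ∈ B) (he : ee t S ∈ B)
    (hP1 : (x1 + x2) * ee t S ∈ B) (hP2 : x1 * x2 * ee t S ∈ B) (hP2i : x2i * x1i * ee t S ∈ B)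
    (hQ1 : (y1 + y2) * ee t S ∈ B) (hQ2 : y1 * y2 * ee t S ∈ B) (hQ2i : y2i * y1i * ee t S ∈ B)
    (hR : (y1 * x1 + (t⁻¹ ^ 2) • (y2 * x2)) * ee t S ∈ B) {m : A} (hm : LL m) :
    ee t S * m ∈ B ∧ ee t S * (y1 * m) ∈ B := by
  have n2 := ne2 ht2
  have n3 : 1 + t⁻¹ ^ 2 ≠ 0 := by
    intro h0; apply n2; field_simp at h0; linear_combination h0
  have idem := h.ee_idem ht ht2
  have hdiv : ∀ (c : ℂ) (z : A), c ≠ 0 → c • z ∈ B → z ∈ B := by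
    intro c z hc hz
    have := B.smul_mem c⁻¹ hz
    rwa [smul_smul, inv_mul_cancel₀ hc, one_smul] at this
  have bx : ee t S * (x1 * ee t S) ∈ B := hdiv _ _ n2 (by rw [h.e_x1_e ht ht2]; exact hP1)
  have by1 : ee t S * (y1 * ee t S) ∈ B := hdiv _ _ n3 (by rw [h.e_y1_e ht ht2]; exact hQ1)
  have byx : ee t S * (y1 * x1) * ee t S ∈ B := hdiv _ _ n3 (by rw [h.e_yx_e ht ht2]; exact hR)
  have bsx : ∀ a ∈ SX x1 x2 x1i x2i, a * ee t S ∈ B := by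
    intro a ha
    induction ha using Algebra.adjoin_induction with
    | mem z hz =>
      rcases hz with rfl | rfl | rfl <;> assumption
    | algebraMap r => rw [Algebra.algebraMap_eq_smul_one, smul_mul_assoc, one_mul]
                      exact B.smul_mem _ he
    | add x y _ _ hx hy => rw [add_mul]; exact B.add_mem hx hy
    | mul x y hx' hy' hx hy =>
      have : x * y * ee t S = x * ee t S * (y * ee t S) := by
        rw [mul_assoc x (ee t S), ← mul_assoc (ee t S) y, h.e_SX hy' ht, mul_assoc y, idem,
          mul_assoc]
      rw [this]; exact hmul _ hx _ hy
  have sy : ∀ s : A, S * s = s * S → s * ee t S ∈ B → ∀ z, ee t S * z ∈ B →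
      ee t S * (s * z) ∈ B := by
    intro s hs hb z hz
    have : ee t S * (s * z) = s * ee t S * (ee t S * z) := by
      rw [← mul_assoc, h.ecomm s hs, mul_assoc s _ (_ * z), ← mul_assoc _ _ z, idem, mul_assoc]
    rw [this]; exact hmul _ hb _ hz
  have sy1 := sy _ (h.c_y ht) hQ1
  have sy2 := sy _ h.c_yy hQ2
  have sy3 := sy _ h.c_Ei hQ2i
  have hyc := h.yc
  have y11 : ∀ z, ee t S * z ∈ B → ee t S * (y1 * z) ∈ B → ee t S * (y1 * (y1 * z)) ∈ B := by
    intro z h1 h2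
    have : y1 * (y1 * z) = (y1 + y2) * (y1 * z) - y1 * y2 * z := by
      rw [add_mul, hyc, mul_assoc y2, add_sub_cancel_right]
    rw [this, mul_sub]
    exact B.sub_mem (sy1 _ h2) (sy2 _ h1)
  have yy2 : ∀ z, ee t S * z ∈ B → ee t S * (y1 * z) ∈ B → ee t S * (y2 * z) ∈ B := by
    intro z h1 h2
    have : y2 * z = (y1 + y2) * z - y1 * z := by rw [add_mul, add_sub_cancel_left]
    rw [this, mul_sub]
    exact B.sub_mem (sy1 _ h1) h2
  have ey1i : ∀ z, y1i * z = y2i * y1i * (y2 * z) := by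
    intro z
    calc y1i * z = y2i * y1i * (y1 * y2) * (y1i * z) := by rw [h.EiE, one_mul]
      _ = _ := by
        rw [h.yc]; simp only [mul_assoc]; rw [← mul_assoc y1 y1i, h.y1y1i, one_mul]
  have ey2i : ∀ z, y2i * z = y2i * y1i * (y1 * z) := by
    intro z
    rw [mul_assoc, ← mul_assoc y1i, h.y1iy1, one_mul]
  induction hm with
  | base m hm =>
    obtain ⟨a, ha, b, hb, rfl⟩ := hm
    have f : ∀ a ∈ SX x1 x2 x1i x2i, ∀ w, ee t S * (w * ee t S) ∈ B →
        ee t S * (w * (a * ee t S)) ∈ B := by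
      intro a ha w hw
      have : ee t S * (w * (a * ee t S)) = ee t S * (w * ee t S) * (a * ee t S) := by
        rw [← h.e_SX ha ht]; simp only [mul_assoc]
        rw [← mul_assoc (ee t S) (ee t S), idem]
      rw [this]; exact hmul _ hw _ (bsx a ha)
    refine ⟨?_, ?_⟩
    · rw [mul_add]
      refine B.add_mem ?_ (f b hb x1 bx)
      have := f a ha 1 (by rwa [one_mul, idem])
      rwa [one_mul] at this
    · rw [mul_add, mul_add]
      refine B.add_mem (f a ha y1 by1) ?_
      rw [← mul_assoc y1]
      apply f b hb
      rwa [mul_assoc] at byx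
  | add m n _ _ hm hn =>
    rw [mul_add, mul_add, mul_add]; exact ⟨B.add_mem hm.1 hn.1, B.add_mem hm.2 hn.2⟩
  | smul c m _ hm =>
    rw [mul_smul_comm, mul_smul_comm, mul_smul_comm]
    exact ⟨B.smul_mem _ hm.1, B.smul_mem _ hm.2⟩
  | y1 m _ hm => exact ⟨hm.2, y11 _ hm.1 hm.2⟩
  | y2 m _ hm =>
    refine ⟨yy2 _ hm.1 hm.2, ?_⟩
    rw [← mul_assoc y1]; exact sy2 _ hm.1
  | y1i m _ hm =>
    refine ⟨?_, ?_⟩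
    · rw [ey1i]; exact sy3 _ (yy2 _ hm.1 hm.2)
    · rw [← mul_assoc y1, h.y1y1i, one_mul]; exact hm.1
  | y2i m _ hm =>
    have e : y1 * (y2i * m) = y2i * y1i * (y1 * (y1 * m)) := by
      have e2 : y1 * (y2i * y1i) = y2i * y1i * y1 :=
        inv_comm h.EEi h.EiE (by rw [mul_assoc, hyc])
      rw [ey2i, ← mul_assoc y1, e2]; simp only [mul_assoc]
    refine ⟨?_, ?_⟩
    · rw [ey2i]; exact sy3 _ hm.2
    · rw [e]; exact sy3 _ (y11 _ hm.1 hm.2)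
end
end HR

structure AR {A : Type*} [Ring A] [Algebra ℂ A] (q t : ℂ) (p1 p2 p2i q1 q2 q2i r : A) : Prop where
  p2p2i : p2 * p2i = 1
  p2ip2 : p2i * p2 = 1
  q2q2i : q2 * q2i = 1
  q2iq2 : q2i * q2 = 1
  p2p1 : p2 * p1 = p1 * p2
  q2q1 : q2 * q1 = q1 * q2
  p2q2 : p2 * q2 = (q⁻¹ ^ 4) • (q2 * p2)
  p2q1 : p2 * q1 = (q⁻¹ ^ 2) • (q1 * p2)
  p1q2 : p1 * q2 = (q⁻¹ ^ 2) • (q2 * p1)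
  p1q1 : p1 * q1 = q1 * p1 + (q⁻¹ ^ 2 - 1) • r
  p2r : p2 * r = (q⁻¹ ^ 2) • (r * p2)
  rq2 : r * q2 = (q⁻¹ ^ 2) • (q2 * r)
  p1r : p1 * r = (q⁻¹ ^ 2) • (r * p1) + (1 - q⁻¹ ^ 2) • (q1 * p2)
  rq1 : r * q1 = (q⁻¹ ^ 2) • (q1 * r) + (1 - q⁻¹ ^ 2) • (q2 * p1)
  rr : r * r = ((1 + t ^ 2) * (q⁻¹ ^ 2 + t⁻¹ ^ 2)) • (q2 * p2)
        - (q⁻¹ ^ 2) • (q2 * p1 * p1) - (q⁻¹ ^ 2) • (q1 * q1 * p2)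
        + (q⁻¹ ^ 2) • (q1 * r * p1)

namespace AR
variable {A : Type*} [Ring A] [Algebra ℂ A]

inductive NF (p1 p2 q1 q2 r : A) : A → Prop
  | one : NF p1 p2 q1 q2 r 1
  | r : NF p1 p2 q1 q2 r r
  | add (w z : A) : NF p1 p2 q1 q2 r w → NF p1 p2 q1 q2 r z → NF p1 p2 q1 q2 r (w + z)
  | smul (c : ℂ) (w : A) : NF p1 p2 q1 q2 r w → NF p1 p2 q1 q2 r (c • w)
  | q1 (w : A) : NF p1 p2 q1 q2 r w → NF p1 p2 q1 q2 r (q1 * w)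
  | q2 (w : A) : NF p1 p2 q1 q2 r w → NF p1 p2 q1 q2 r (q2 * w)
  | p1 (w : A) : NF p1 p2 q1 q2 r w → NF p1 p2 q1 q2 r (w * p1)
  | p2 (w : A) : NF p1 p2 q1 q2 r w → NF p1 p2 q1 q2 r (w * p2)

variable {q t : ℂ} {p1 p2 p2i q1 q2 q2i r : A}

theorem NF.sub {w z : A} (hw : NF p1 p2 q1 q2 r w) (hz : NF p1 p2 q1 q2 r z) :
    NF p1 p2 q1 q2 r (w - z) := by
  have : w - z = w + (-1 : ℂ) • z := by rw [neg_one_smul, sub_eq_add_neg]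
  rw [this]; exact .add _ _ hw (.smul _ _ hz)

theorem NF_pow {w : A} (hw : NF p1 p2 q1 q2 r w) (n : ℕ) : NF p1 p2 q1 q2 r (q2 ^ n * w * p2 ^ n) := by
  induction n with
  | zero => simpa using hw
  | succ n ih =>
    have : q2 ^ (n + 1) * w * p2 ^ (n + 1) = q2 * (q2 ^ n * w * p2 ^ n) * p2 := by
      rw [pow_succ', pow_succ p2]; simp only [mul_assoc]
    rw [this]; exact .p2 _ (.q2 _ ih)

section
variable (h : AR q t p1 p2 p2i q1 q2 q2i r)
include h

theorem NF_p1r {w : A} (hw : NF p1 p2 q1 q2 r w) :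
    NF p1 p2 q1 q2 r (p1 * w) ∧ NF p1 p2 q1 q2 r (r * w) := by
  induction hw with
  | one =>
    refine ⟨?_, by rw [mul_one]; exact .r⟩
    have := NF.p1 (p1 := p1) (p2 := p2) (q1 := q1) (q2 := q2) (r := r) _ .one
    rw [one_mul] at this; rwa [mul_one]
  | r =>
    have P1 := NF.p1 (p1 := p1) (p2 := p2) (q1 := q1) (q2 := q2) (r := r) _ .one
    have P2 := NF.p2 (p1 := p1) (p2 := p2) (q1 := q1) (q2 := q2) (r := r) _ .one
    rw [one_mul] at P1 P2
    refine ⟨?_, ?_⟩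
    · rw [h.p1r]; exact .add _ _ (.smul _ _ (.p1 _ .r)) (.smul _ _ (.q1 _ P2))
    · rw [h.rr]
      refine .add _ _ (.sub (.sub (.smul _ _ (.q2 _ P2)) (.smul _ _ ?_)) (.smul _ _ ?_))
        (.smul _ _ (.p1 _ (.q1 _ .r)))
      · exact .p1 _ (.q2 _ P1)
      · rw [mul_assoc]; exact .q1 _ (.q1 _ P2)
  | add w z _ _ hw hz =>
    rw [mul_add, mul_add]; exact ⟨.add _ _ hw.1 hz.1, .add _ _ hw.2 hz.2⟩
  | smul c w _ hw =>
    rw [mul_smul_comm, mul_smul_comm]; exact ⟨.smul _ _ hw.1, .smul _ _ hw.2⟩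
  | q1 w _ hw =>
    rw [← mul_assoc, ← mul_assoc, h.p1q1, h.rq1, add_mul, add_mul]
    simp only [smul_mul_assoc, mul_assoc]
    exact ⟨.add _ _ (.q1 _ hw.1) (.smul _ _ hw.2),
      .add _ _ (.smul _ _ (.q1 _ hw.2)) (.smul _ _ (.q2 _ hw.1))⟩
  | q2 w _ hw =>
    rw [← mul_assoc, ← mul_assoc, h.p1q2, h.rq2]
    simp only [smul_mul_assoc, mul_assoc]
    exact ⟨.smul _ _ (.q2 _ hw.1), .smul _ _ (.q2 _ hw.2)⟩
  | p1 w _ hw => rw [← mul_assoc, ← mul_assoc]; exact ⟨.p1 _ hw.1, .p1 _ hw.2⟩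
  | p2 w _ hw => rw [← mul_assoc, ← mul_assoc]; exact ⟨.p2 _ hw.1, .p2 _ hw.2⟩

theorem NF_p2 {w : A} (hw : NF p1 p2 q1 q2 r w) : NF p1 p2 q1 q2 r (p2 * w) := by
  induction hw with
  | one =>
    have := NF.p2 (p1 := p1) (p2 := p2) (q1 := q1) (q2 := q2) (r := r) _ .one
    rw [one_mul] at this; rwa [mul_one]
  | r => rw [h.p2r]; exact .smul _ _ (.p2 _ .r)
  | add w z _ _ hw hz => rw [mul_add]; exact .add _ _ hw hz
  | smul c w _ hw => rw [mul_smul_comm]; exact .smul _ _ hw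
  | q1 w _ hw =>
    rw [← mul_assoc, h.p2q1, smul_mul_assoc, mul_assoc]; exact .smul _ _ (.q1 _ hw)
  | q2 w _ hw =>
    rw [← mul_assoc, h.p2q2, smul_mul_assoc, mul_assoc]; exact .smul _ _ (.q2 _ hw)
  | p1 w _ hw => rw [← mul_assoc]; exact .p1 _ hw
  | p2 w _ hw => rw [← mul_assoc]; exact .p2 _ hw

theorem p2i_swap {g : A} {c : ℂ} (hc : c ≠ 0) (hg : p2 * g = c • (g * p2)) :
    p2i * g = c⁻¹ • (g * p2i) := by
  calc p2i * g = c⁻¹ • (p2i * (c • (g * p2)) * p2i) := by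
        rw [mul_smul_comm, smul_mul_assoc, smul_smul, inv_mul_cancel₀ hc, one_smul]
        simp only [mul_assoc, h.p2p2i, mul_one]
    _ = _ := by rw [← hg, ← mul_assoc, h.p2ip2, one_mul]

theorem NF_p2i (hq : q ≠ 0) {w : A} (hw : NF p1 p2 q1 q2 r w) :
    NF p1 p2 q1 q2 r (p2i * w * p2) := by
  have hq2 : q⁻¹ ^ 2 ≠ 0 := pow_ne_zero _ (inv_ne_zero hq)
  have hq4 : q⁻¹ ^ 4 ≠ 0 := pow_ne_zero _ (inv_ne_zero hq)
  induction hw with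
  | one => rw [mul_one, h.p2ip2]; exact .one
  | r =>
    rw [h.p2i_swap hq2 h.p2r, smul_mul_assoc, mul_assoc, h.p2ip2, mul_one]
    exact .smul _ _ .r
  | add w z _ _ hw hz => rw [mul_add, add_mul]; exact .add _ _ hw hz
  | smul c w _ hw => rw [mul_smul_comm, smul_mul_assoc]; exact .smul _ _ hw
  | q1 w _ hw =>
    rw [← mul_assoc, h.p2i_swap hq2 h.p2q1, smul_mul_assoc, smul_mul_assoc, mul_assoc, mul_assoc]
    rw [mul_assoc] at hw
    exact .smul _ _ (.q1 _ hw)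
  | q2 w _ hw =>
    rw [← mul_assoc, h.p2i_swap hq4 h.p2q2, smul_mul_assoc, smul_mul_assoc, mul_assoc, mul_assoc]
    rw [mul_assoc] at hw
    exact .smul _ _ (.q2 _ hw)
  | p1 w _ hw =>
    rw [← mul_assoc, mul_assoc _ p1, ← h.p2p1, ← mul_assoc]; exact .p1 _ hw
  | p2 w _ hw => rw [← mul_assoc]; exact .p2 _ hw
end

def GG (p1 p2 q1 q2 r : A) (w : A) : Prop := ∃ n : ℕ, NF p1 p2 q1 q2 r (q2 ^ n * w * p2 ^ n)

theorem GG_one : GG p1 p2 q1 q2 r 1 := ⟨0, by simpa using NF.one⟩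

theorem GG_add {w z : A} (hw : GG p1 p2 q1 q2 r w) (hz : GG p1 p2 q1 q2 r z) :
    GG p1 p2 q1 q2 r (w + z) := by
  obtain ⟨n, hn⟩ := hw
  obtain ⟨m, hm⟩ := hz
  refine ⟨n + m, ?_⟩
  have e : q2 ^ (n + m) * (w + z) * p2 ^ (n + m)
      = q2 ^ m * (q2 ^ n * w * p2 ^ n) * p2 ^ m + q2 ^ n * (q2 ^ m * z * p2 ^ m) * p2 ^ n := by
    have e1 : q2 ^ (n + m) = q2 ^ m * q2 ^ n := by rw [← pow_add, add_comm]
    have e2 : p2 ^ (n + m) = p2 ^ m * p2 ^ n := by rw [← pow_add, add_comm]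
    rw [mul_add, add_mul]
    congr 1
    · rw [e1, pow_add p2]; simp only [mul_assoc]
    · rw [e2, pow_add q2]; simp only [mul_assoc]
  rw [e]
  exact .add _ _ (NF_pow hn m) (NF_pow hm n)

theorem GG_smul (c : ℂ) {w : A} (hw : GG p1 p2 q1 q2 r w) : GG p1 p2 q1 q2 r (c • w) := by
  obtain ⟨n, hn⟩ := hw
  exact ⟨n, by rw [mul_smul_comm, smul_mul_assoc]; exact .smul _ _ hn⟩

theorem pow_swap {g : A} {c : ℂ} (hg : q2 * g = c • (g * q2)) (n : ℕ) :
    q2 ^ n * g = c ^ n • (g * q2 ^ n) := by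
  induction n with
  | zero => simp
  | succ n ih =>
    rw [pow_succ', mul_assoc, ih, mul_smul_comm, ← mul_assoc, hg, smul_mul_assoc, smul_smul,
      mul_assoc, pow_succ]

theorem GG_gen {g w : A} {c : ℂ} (hg : q2 * g = c • (g * q2))
    (hN : ∀ w, NF p1 p2 q1 q2 r w → NF p1 p2 q1 q2 r (g * w)) (hw : GG p1 p2 q1 q2 r w) :
    GG p1 p2 q1 q2 r (g * w) := by
  obtain ⟨n, hn⟩ := hw
  refine ⟨n, ?_⟩
  rw [← mul_assoc, pow_swap hg, smul_mul_assoc, smul_mul_assoc, mul_assoc g, mul_assoc g]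
  exact .smul _ _ (hN _ hn)

theorem swap_inv {g z : A} {c : ℂ} (hc : c ≠ 0) (hg : g * z = c • (z * g)) :
    z * g = c⁻¹ • (g * z) := by
  rw [hg, smul_smul, inv_mul_cancel₀ hc, one_smul]

section
variable (h : AR q t p1 p2 p2i q1 q2 q2i r) (hq : q ≠ 0)
include h hq

theorem GG_p1 {w : A} (hw : GG p1 p2 q1 q2 r w) : GG p1 p2 q1 q2 r (p1 * w) :=
  GG_gen (swap_inv (pow_ne_zero _ (inv_ne_zero hq)) h.p1q2) (fun _ hw => (h.NF_p1r hw).1) hw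
theorem GG_r {w : A} (hw : GG p1 p2 q1 q2 r w) : GG p1 p2 q1 q2 r (r * w) :=
  GG_gen (swap_inv (pow_ne_zero _ (inv_ne_zero hq)) h.rq2) (fun _ hw => (h.NF_p1r hw).2) hw
theorem GG_p2 {w : A} (hw : GG p1 p2 q1 q2 r w) : GG p1 p2 q1 q2 r (p2 * w) :=
  GG_gen (swap_inv (pow_ne_zero _ (inv_ne_zero hq)) h.p2q2) (fun _ hw => h.NF_p2 hw) hw
theorem GG_q1 {w : A} (hw : GG p1 p2 q1 q2 r w) : GG p1 p2 q1 q2 r (q1 * w) :=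
  GG_gen (c := 1) (by rw [one_smul, h.q2q1]) (fun _ hw => .q1 _ hw) hw
theorem GG_q2 {w : A} (hw : GG p1 p2 q1 q2 r w) : GG p1 p2 q1 q2 r (q2 * w) :=
  GG_gen (c := 1) (by rw [one_smul]) (fun _ hw => .q2 _ hw) hw
theorem GG_q2i {w : A} (hw : GG p1 p2 q1 q2 r w) : GG p1 p2 q1 q2 r (q2i * w) := by
  obtain ⟨n, hn⟩ := hw
  refine ⟨n + 1, ?_⟩
  rw [pow_succ, mul_assoc (q2 ^ n), ← mul_assoc q2, h.q2q2i, one_mul, pow_succ, ← mul_assoc]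
  exact .p2 _ hn
theorem GG_p2i {w : A} (hw : GG p1 p2 q1 q2 r w) : GG p1 p2 q1 q2 r (p2i * w) := by
  obtain ⟨n, hn⟩ := hw
  refine ⟨n + 1, ?_⟩
  have e := h.p2i_swap (pow_ne_zero _ (inv_ne_zero hq)) h.p2q2
  have e2 := swap_inv (inv_ne_zero (pow_ne_zero _ (inv_ne_zero hq))) e
  have : q2 ^ (n + 1) * (p2i * w) * p2 ^ (n + 1)
      = (((q⁻¹ ^ 4)⁻¹)⁻¹) ^ n • (q2 * (p2i * (q2 ^ n * w * p2 ^ n) * p2)) := by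
    rw [pow_succ', pow_succ p2, mul_assoc q2, ← mul_assoc (q2 ^ n) p2i, pow_swap e2]
    simp only [smul_mul_assoc, mul_smul_comm, mul_assoc]
  rw [this]
  exact .smul _ _ (.q2 _ (h.NF_p2i hq hn))
end

/-- the linear map `f ↦ f(q's) k f(p's)` on monomials -/
def nn (p1 p2 q1 q2 k : A) : MvPolynomial (Fin 4) ℂ →ₗ[ℂ] A :=
  (MvPolynomial.basisMonomials (Fin 4) ℂ).constr ℂ
    fun s => q1 ^ (s 0) * q2 ^ (s 1) * k * (p1 ^ (s 2) * p2 ^ (s 3))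

theorem nn_mon (k : A) (s : Fin 4 →₀ ℕ) : nn p1 p2 q1 q2 k (MvPolynomial.monomial s 1) =
    q1 ^ (s 0) * q2 ^ (s 1) * k * (p1 ^ (s 2) * p2 ^ (s 3)) := by
  have := (MvPolynomial.basisMonomials (Fin 4) ℂ).constr_basis ℂ
    (fun s => q1 ^ (s 0) * q2 ^ (s 1) * k * (p1 ^ (s 2) * p2 ^ (s 3))) s
  rwa [MvPolynomial.coe_basisMonomials] at this

theorem nn_one (k : A) : nn p1 p2 q1 q2 k 1 = k := by
  have := nn_mon (p1 := p1) (p2 := p2) (q1 := q1) (q2 := q2) k 0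
  simpa using this

/-- to relate two linear maps out of polynomials -/
theorem nn_gen {B : Type*} [AddCommGroup B] [Module ℂ B] (k : A) (L : A →ₗ[ℂ] B)
    (L' : MvPolynomial (Fin 4) ℂ →ₗ[ℂ] B)
    (hL : ∀ s : Fin 4 →₀ ℕ, L (q1 ^ (s 0) * q2 ^ (s 1) * k * (p1 ^ (s 2) * p2 ^ (s 3)))
      = L' (MvPolynomial.monomial s 1)) (f : MvPolynomial (Fin 4) ℂ) :
    L (nn p1 p2 q1 q2 k f) = L' f := by
  have : L ∘ₗ nn p1 p2 q1 q2 k = L' := by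
    apply (MvPolynomial.basisMonomials (Fin 4) ℂ).ext
    intro s
    rw [MvPolynomial.coe_basisMonomials, LinearMap.comp_apply, nn_mon, hL]
  rw [← this]; rfl

theorem nn_ex (hq21 : q2 * q1 = q1 * q2) (hp21 : p2 * p1 = p1 * p2) {w : A}
    (hw : NF p1 p2 q1 q2 r w) :
    ∃ f g, w = nn p1 p2 q1 q2 1 f + nn p1 p2 q1 q2 r g := by
  have key : ∀ (k : A) (i : Fin 4) (L : A →ₗ[ℂ] A),
      (∀ s : Fin 4 →₀ ℕ, L (q1 ^ (s 0) * q2 ^ (s 1) * k * (p1 ^ (s 2) * p2 ^ (s 3)))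
      = nn p1 p2 q1 q2 k (MvPolynomial.monomial (Finsupp.single i 1 + s) 1)) → ∀ f,
      L (nn p1 p2 q1 q2 k f) = nn p1 p2 q1 q2 k (MvPolynomial.X i * f) := by
    intro k i L hL f
    apply nn_gen k L (nn p1 p2 q1 q2 k ∘ₗ LinearMap.mulLeft ℂ (MvPolynomial.X i))
    intro s
    rw [hL, LinearMap.comp_apply, LinearMap.mulLeft_apply, MvPolynomial.X,
      MvPolynomial.monomial_mul, one_mul]
  have k0 := fun k => key k 0 (LinearMap.mulLeft ℂ q1) (by
    intro s; rw [nn_mon]; simp [pow_add, mul_assoc])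
  have k1 := fun k => key k 1 (LinearMap.mulLeft ℂ q2) (by
    intro s; rw [nn_mon]
    have : q2 * q1 ^ (s 0) = q1 ^ (s 0) * q2 := Commute.pow_right hq21 _
    simp [pow_add, mul_assoc]; simp only [← mul_assoc, this])
  have k2 := fun k => key k 2 (LinearMap.mulRight ℂ p1) (by
    intro s; rw [nn_mon]
    have : p2 ^ (s 3) * p1 = p1 * p2 ^ (s 3) := Commute.pow_left hp21 _
    simp [pow_add, mul_assoc, this]; simp only [← mul_assoc]
    rw [mul_assoc _ (p1 ^ _) p1, ← pow_succ, pow_succ', mul_assoc, mul_assoc, mul_assoc, mul_assoc]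
    simp only [mul_assoc])
  have k3 := fun k => key k 3 (LinearMap.mulRight ℂ p2) (by
    intro s; rw [nn_mon]
    simp [pow_add, mul_assoc]
    rw [← pow_succ, pow_succ'])
  simp only [LinearMap.mulLeft_apply, LinearMap.mulRight_apply] at k0 k1 k2 k3
  induction hw with
  | one => exact ⟨1, 0, by rw [nn_one, map_zero, add_zero]⟩
  | r => exact ⟨0, 1, by rw [nn_one, map_zero, zero_add]⟩
  | add w z _ _ hw hz =>
    obtain ⟨f, g, rfl⟩ := hw
    obtain ⟨f', g', rfl⟩ := hz
    exact ⟨f + f', g + g', by rw [map_add, map_add]; abel⟩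
  | smul c w _ hw =>
    obtain ⟨f, g, rfl⟩ := hw
    exact ⟨c • f, c • g, by rw [map_smul, map_smul, smul_add]⟩
  | q1 w _ hw =>
    obtain ⟨f, g, rfl⟩ := hw
    exact ⟨_, _, by rw [mul_add, k0, k0]⟩
  | q2 w _ hw =>
    obtain ⟨f, g, rfl⟩ := hw
    exact ⟨_, _, by rw [mul_add, k1, k1]⟩
  | p1 w _ hw =>
    obtain ⟨f, g, rfl⟩ := hw
    exact ⟨_, _, by rw [add_mul, k2, k2]⟩
  | p2 w _ hw =>
    obtain ⟨f, g, rfl⟩ := hw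
    exact ⟨_, _, by rw [add_mul, k3, k3]⟩
end AR

theorem AR.eval_nn {A B : Type*} [Ring A] [Algebra ℂ A] [AddCommGroup B] [Module ℂ B]
    {p1 p2 q1 q2 : A} (L : A →ₗ[ℂ] B) (α β u v : ℂ)
    (h1 : ∀ w, L (q1 * w) = α • L w) (h2 : ∀ w, L (q2 * w) = β • L w)
    (h3 : ∀ w, L (w * p1) = u • L w) (h4 : ∀ w, L (w * p2) = v • L w) (k : A)
    (f : MvPolynomial (Fin 4) ℂ) :
    L (AR.nn p1 p2 q1 q2 k f) = MvPolynomial.eval ![α, β, u, v] f • L k := by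
  have g1 : ∀ (n : ℕ) w, L (q1 ^ n * w) = α ^ n • L w := by
    intro n; induction n with
    | zero => simp
    | succ n ih => intro w; rw [pow_succ', mul_assoc, h1, ih, smul_smul, pow_succ']
  have g2 : ∀ (n : ℕ) w, L (q2 ^ n * w) = β ^ n • L w := by
    intro n; induction n with
    | zero => simp
    | succ n ih => intro w; rw [pow_succ', mul_assoc, h2, ih, smul_smul, pow_succ']
  have g3 : ∀ (n : ℕ) w, L (w * p1 ^ n) = u ^ n • L w := by
    intro n; induction n with
    | zero => simp
    | succ n ih => intro w; rw [pow_succ, ← mul_assoc, h3, ih, smul_smul, pow_succ']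
  have g4 : ∀ (n : ℕ) w, L (w * p2 ^ n) = v ^ n • L w := by
    intro n; induction n with
    | zero => simp
    | succ n ih => intro w; rw [pow_succ, ← mul_assoc, h4, ih, smul_smul, pow_succ']
  have := AR.nn_gen (p1 := p1) (p2 := p2) (q1 := q1) (q2 := q2) k L
    ((LinearMap.toSpanSingleton ℂ B (L k)) ∘ₗ
      (MvPolynomial.aeval (R := ℂ) ![α, β, u, v]).toLinearMap) (by
      intro s
      rw [← mul_assoc, g4, g3, mul_assoc, g1, g2]
      simp [MvPolynomial.eval_monomial, Finsupp.prod_fintype, Fin.prod_univ_four, smul_smul]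
      congr 1; ring) f
  rw [this]
  simp [MvPolynomial.coe_aeval_eq_eval]

theorem AR_self : AR q t (P1 q t) (P2 q t) (P2i q t) (Q1 q t) (Q2 q t) (Q2i q t) (R q t) := by
  have r : ∀ {x y : FA}, ARel q t x y →
      RingQuot.mkAlgHom ℂ (ARel q t) x = RingQuot.mkAlgHom ℂ (ARel q t) y :=
    fun h => RingQuot.mkAlgHom_rel ℂ h
  constructor
  · have := r .P2P2i; simp only [map_mul, map_add, map_sub, map_smul, map_one] at this; exact this
  · have := r .P2iP2; simp only [map_mul, map_add, map_sub, map_smul, map_one] at this; exact this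
  · have := r .Q2Q2i; simp only [map_mul, map_add, map_sub, map_smul, map_one] at this; exact this
  · have := r .Q2iQ2; simp only [map_mul, map_add, map_sub, map_smul, map_one] at this; exact this
  · have := r .P2P1; simp only [map_mul, map_add, map_sub, map_smul, map_one] at this; exact this
  · have := r .Q2Q1; simp only [map_mul, map_add, map_sub, map_smul, map_one] at this; exact this
  · have := r .P2Q2; simp only [map_mul, map_add, map_sub, map_smul, map_one] at this; exact this
  · have := r .P2Q1; simp only [map_mul, map_add, map_sub, map_smul, map_one] at this; exact this
  · have := r .P1Q2; simp only [map_mul, map_add, map_sub, map_smul, map_one] at this; exact this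
  · have := r .P1Q1; simp only [map_mul, map_add, map_sub, map_smul, map_one] at this; exact this
  · have := r .P2R; simp only [map_mul, map_add, map_sub, map_smul, map_one] at this; exact this
  · have := r .RQ2; simp only [map_mul, map_add, map_sub, map_smul, map_one] at this; exact this
  · have := r .P1R; simp only [map_mul, map_add, map_sub, map_smul, map_one] at this; exact this
  · have := r .RQ1; simp only [map_mul, map_add, map_sub, map_smul, map_one] at this; exact this
  · have := r .RR; simp only [map_mul, map_add, map_sub, map_smul, map_one] at this; exact this

theorem HR_self : HR q t (T q t) (Ti q t) (X1 q t) (X1i q t) (X2 q t) (X2i q t)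
    (Y1 q t) (Y1i q t) (Y2 q t) (Y2i q t) := by
  have r : ∀ {x y : FD}, DRel q t x y →
      RingQuot.mkAlgHom ℂ (DRel q t) x = RingQuot.mkAlgHom ℂ (DRel q t) y :=
    fun h => RingQuot.mkAlgHom_rel ℂ h
  constructor
  · have := r .TTi; simp only [map_mul, map_add, map_sub, map_smul, map_one] at this; exact this
  · have := r .TiT; simp only [map_mul, map_add, map_sub, map_smul, map_one] at this; exact this
  · have := r .X1X1i; simp only [map_mul, map_add, map_sub, map_smul, map_one] at this; exact this
  · have := r .X1iX1; simp only [map_mul, map_add, map_sub, map_smul, map_one] at this; exact this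
  · have := r .X2X2i; simp only [map_mul, map_add, map_sub, map_smul, map_one] at this; exact this
  · have := r .X2iX2; simp only [map_mul, map_add, map_sub, map_smul, map_one] at this; exact this
  · have := r .Y1Y1i; simp only [map_mul, map_add, map_sub, map_smul, map_one] at this; exact this
  · have := r .Y1iY1; simp only [map_mul, map_add, map_sub, map_smul, map_one] at this; exact this
  · have := r .Y2Y2i; simp only [map_mul, map_add, map_sub, map_smul, map_one] at this; exact this
  · have := r .Y2iY2; simp only [map_mul, map_add, map_sub, map_smul, map_one] at this; exact this
  · have := r .TX1T; simp only [map_mul, map_add, map_sub, map_smul, map_one] at this; exact this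
  · have := r .TiY1Ti; simp only [map_mul, map_add, map_sub, map_smul, map_one] at this; exact this
  · have := r .Xcomm; simp only [map_mul, map_add, map_sub, map_smul, map_one] at this; exact this
  · have := r .Ycomm; simp only [map_mul, map_add, map_sub, map_smul, map_one] at this; exact this
  · have := r .YXX; simp only [map_mul, map_add, map_sub, map_smul, map_one] at this; exact this
  · have := r .X1iY2; simp only [map_mul, map_add, map_sub, map_smul, map_one] at this; exact this
  · have := r .hecke
    rwa [map_mul, map_add, map_sub, AlgHom.commutes, AlgHom.commutes, map_zero] at this

theorem gen_ind {G : Type} (rel : FreeAlgebra ℂ G → FreeAlgebra ℂ G → Prop) (K : RingQuot rel → Prop)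
    (hadd : ∀ w z, K w → K z → K (w + z)) (hsmul : ∀ (c : ℂ) w, K w → K (c • w))
    (hg : ∀ (g : G) w, K w → K (RingQuot.mkAlgHom ℂ rel (FreeAlgebra.ι ℂ g) * w))
    (x k : RingQuot rel) (hk : K k) : K (x * k) := by
  obtain ⟨x, rfl⟩ := RingQuot.mkAlgHom_surjective ℂ rel x
  have : ∀ k, K k → K (RingQuot.mkAlgHom ℂ rel x * k) := by
    induction x using FreeAlgebra.induction with
    | grade0 c =>
      intro k hk
      rw [AlgHom.commutes, Algebra.algebraMap_eq_smul_one, smul_mul_assoc, one_mul]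
      exact hsmul _ _ hk
    | grade1 g => exact hg g
    | mul a b ha hb => intro k hk; rw [map_mul, mul_assoc]; exact ha _ (hb _ hk)
    | add a b ha hb => intro k hk; rw [map_add, add_mul]; exact hadd _ _ (ha _ hk) (hb _ hk)
  exact this k hk

theorem all_GG (hq : q ≠ 0) (w : AlgA q t) :
    AR.GG (P1 q t) (P2 q t) (Q1 q t) (Q2 q t) (R q t) w := by
  rw [← mul_one w]
  have h := AR_self q t
  apply gen_ind (ARel q t) (AR.GG (P1 q t) (P2 q t) (Q1 q t) (Q2 q t) (R q t))
  · intro w z; exact AR.GG_add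
  · intro c w; exact AR.GG_smul c
  · intro g w hw
    cases g
    · exact h.GG_p1 hq hw
    · exact h.GG_p2 hq hw
    · exact h.GG_p2i hq hw
    · exact h.GG_q1 hq hw
    · exact h.GG_q2 hq hw
    · exact h.GG_q2i hq hw
    · exact h.GG_r hq hw
  · exact AR.GG_one

def aval {C : Type*} (p1 p2 p2i q1 q2 q2i r : C) : AGen → C
  | .P1 => p1 | .P2 => p2 | .P2i => p2i | .Q1 => q1 | .Q2 => q2 | .Q2i => q2i | .R => r

def dval {C : Type*} (S U x1 x1i x2 x2i y1 y1i y2 y2i : C) : DGen → C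
  | .T => S | .Ti => U | .X1 => x1 | .X1i => x1i | .X2 => x2 | .X2i => x2i
  | .Y1 => y1 | .Y1i => y1i | .Y2 => y2 | .Y2i => y2i

theorem AR_lift {q t : ℂ} {C : Type*} [Ring C] [Algebra ℂ C] {p1 p2 p2i q1 q2 q2i r : C}
    (h : AR q t p1 p2 p2i q1 q2 q2i r) : ∃ φ : AlgA q t →ₐ[ℂ] C,
      φ (P1 q t) = p1 ∧ φ (P2 q t) = p2 ∧ φ (P2i q t) = p2i ∧ φ (Q1 q t) = q1 ∧ φ (Q2 q t) = q2 ∧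
      φ (Q2i q t) = q2i ∧ φ (R q t) = r := by
  let f := FreeAlgebra.lift ℂ (aval p1 p2 p2i q1 q2 q2i r)
  have hf : ∀ g, f (gA g) = aval p1 p2 p2i q1 q2 q2i r g := fun g => FreeAlgebra.lift_ι_apply _ _
  refine ⟨RingQuot.liftAlgHom ℂ ⟨f, ?_⟩, ?_⟩
  · intro x y hxy
    cases hxy <;> simp only [map_mul, map_add, map_sub, map_smul, map_one, hf, aval]
    · exact h.p2p2i
    · exact h.p2ip2
    · exact h.q2q2i
    · exact h.q2iq2
    · exact h.p2p1
    · exact h.q2q1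
    · exact h.p2q2
    · exact h.p2q1
    · exact h.p1q2
    · exact h.p1q1
    · exact h.p2r
    · exact h.rq2
    · exact h.p1r
    · exact h.rq1
    · exact h.rr
  · refine ⟨?_, ?_, ?_, ?_, ?_, ?_, ?_⟩ <;>
    exact (RingQuot.liftAlgHom_mkAlgHom_apply _ _ _ _).trans (hf _)

theorem HR_lift {q t : ℂ} {C : Type*} [Ring C] [Algebra ℂ C] {S U x1 x1i x2 x2i y1 y1i y2 y2i : C}
    (h : HR q t S U x1 x1i x2 x2i y1 y1i y2 y2i) : ∃ φ : DAHA q t →ₐ[ℂ] C,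
      φ (T q t) = S ∧ φ (X1 q t) = x1 ∧ φ (X2 q t) = x2 ∧ φ (Y1 q t) = y1 ∧ φ (Y2 q t) = y2 := by
  let f := FreeAlgebra.lift ℂ (dval S U x1 x1i x2 x2i y1 y1i y2 y2i)
  have hf : ∀ g, f (gD g) = dval S U x1 x1i x2 x2i y1 y1i y2 y2i g :=
    fun g => FreeAlgebra.lift_ι_apply _ _
  refine ⟨RingQuot.liftAlgHom ℂ ⟨f, ?_⟩, ?_⟩
  · intro x y hxy
    cases hxy <;> simp only [map_mul, map_add, map_sub, map_smul, map_one, map_zero,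
      AlgHom.commutes, hf, dval]
    · exact h.SU
    · exact h.US
    · exact h.x1x1i
    · exact h.x1ix1
    · exact h.x2x2i
    · exact h.x2ix2
    · exact h.y1y1i
    · exact h.y1iy1
    · exact h.y2y2i
    · exact h.y2iy2
    · exact h.sx
    · exact h.uy
    · exact h.xc
    · exact h.yc
    · exact h.yxx
    · exact h.xiy
    · exact h.hk
  · refine ⟨?_, ?_, ?_, ?_, ?_⟩ <;>
    exact (RingQuot.liftAlgHom_mkAlgHom_apply _ _ _ _).trans (hf _)

section corner
variable {A : Type*} [Ring A] [Algebra ℂ A] {e : A}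

@[reducible] def cornerAlg (he : IsIdempotentElem e) : Algebra ℂ he.Corner :=
  RingHom.toAlgebra'
    { toFun := fun c => ⟨c • e, ⟨c • e, by
        simp only [mul_smul_comm, smul_mul_assoc, he.eq]⟩⟩
      map_one' := Subtype.ext (one_smul _ _)
      map_mul' := fun a b => Subtype.ext (by
        change (a * b) • e = (a • e) * (b • e)
        rw [smul_mul_smul_comm, he.eq])
      map_zero' := Subtype.ext (zero_smul _ _)
      map_add' := fun a b => Subtype.ext (add_smul _ _ _) }
    (fun c x => Subtype.ext (by
      have := (Subsemigroup.mem_corner_iff he).1 x.2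
      change (c • e) * x.1 = x.1 * (c • e)
      rw [smul_mul_assoc, mul_smul_comm, this.1, this.2]))

theorem corner_smul (he : IsIdempotentElem e) (c : ℂ) (x : he.Corner) :
    letI := cornerAlg he
    (c • x).1 = c • x.1 := by
  letI := cornerAlg he
  have := (Subsemigroup.mem_corner_iff he).1 x.2
  rw [Algebra.smul_def]
  change (c • e) * x.1 = _
  rw [smul_mul_assoc, this.1]

def cmk (he : IsIdempotentElem e) (w : A) (hw : e * (w * e) = w * e) : he.Corner :=
  ⟨w * e, ⟨w, by change e * w * e = w * e; rw [mul_assoc, hw]⟩⟩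

theorem corner_map {q t : ℂ} (he : IsIdempotentElem e) {p1 p2 p2i q1 q2 q2i r : A}
    (E1 : e * (p1 * e) = p1 * e) (E2 : e * (p2 * e) = p2 * e) (E3 : e * (p2i * e) = p2i * e)
    (F1 : e * (q1 * e) = q1 * e) (F2 : e * (q2 * e) = q2 * e) (F3 : e * (q2i * e) = q2i * e)
    (G : e * (r * e) = r * e)
    (p2p2i : p2 * p2i = 1)
    (p2ip2 : p2i * p2 = 1)
    (q2q2i : q2 * q2i = 1)
    (q2iq2 : q2i * q2 = 1)
    (p2p1 : p2 * (p1 * e) = p1 * (p2 * e))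
    (q2q1 : q2 * (q1 * e) = q1 * (q2 * e))
    (p2q2 : p2 * (q2 * e) = (q⁻¹ ^ 4) • (q2 * (p2 * e)))
    (p2q1 : p2 * (q1 * e) = (q⁻¹ ^ 2) • (q1 * (p2 * e)))
    (p1q2 : p1 * (q2 * e) = (q⁻¹ ^ 2) • (q2 * (p1 * e)))
    (p1q1 : p1 * (q1 * e) = q1 * (p1 * e) + (q⁻¹ ^ 2 - 1) • (r * e))
    (p2r : p2 * (r * e) = (q⁻¹ ^ 2) • (r * (p2 * e)))
    (rq2 : r * (q2 * e) = (q⁻¹ ^ 2) • (q2 * (r * e)))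
    (p1r : p1 * (r * e) = (q⁻¹ ^ 2) • (r * (p1 * e)) + (1 - q⁻¹ ^ 2) • (q1 * (p2 * e)))
    (rq1 : r * (q1 * e) = (q⁻¹ ^ 2) • (q1 * (r * e)) + (1 - q⁻¹ ^ 2) • (q2 * (p1 * e)))
    (rr : r * (r * e) = ((1 + t ^ 2) * (q⁻¹ ^ 2 + t⁻¹ ^ 2)) • (q2 * (p2 * e))
        - (q⁻¹ ^ 2) • (q2 * (p1 * (p1 * e))) - (q⁻¹ ^ 2) • (q1 * (q1 * (p2 * e)))
        + (q⁻¹ ^ 2) • (q1 * (r * (p1 * e)))) :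
    ∃ Φ : AlgA q t →ₗ[ℂ] A, (∀ x y, Φ (x * y) = Φ x * Φ y) ∧ Φ 1 = e ∧
      (∀ x, e * Φ x = Φ x) ∧ (∀ x, Φ x * e = Φ x) ∧
      Φ (P1 q t) = p1 * e ∧ Φ (P2 q t) = p2 * e ∧ Φ (P2i q t) = p2i * e ∧
      Φ (Q1 q t) = q1 * e ∧ Φ (Q2 q t) = q2 * e ∧ Φ (Q2i q t) = q2i * e ∧ Φ (R q t) = r * e := by
  letI := cornerAlg he
  have two : ∀ b c : A, e * (b * e) = b * e → e * (c * e) = c * e →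
      e * (b * (c * e)) = b * (c * e) := by
    intro b c hb hc
    rw [← hc, ← mul_assoc b, ← mul_assoc e, hb]
  have H1 := two _ _ E1 E1
  have H2 := two _ _ F1 E2
  have H3 := two _ _ G E1
  have hmul : ∀ x y : he.Corner, (x * y).1 = x.1 * y.1 := fun _ _ => rfl
  have hadd : ∀ x y : he.Corner, (x + y).1 = x.1 + y.1 := fun _ _ => rfl
  have hsub : ∀ x y : he.Corner, (x - y).1 = x.1 - y.1 := fun _ _ => rfl
  have hone : (1 : he.Corner).1 = e := rfl
  have hsmul := corner_smul he
  have hmk : ∀ w hw, (cmk he w hw).1 = w * e := fun _ _ => rfl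
  have hAR : AR q t (cmk he p1 E1) (cmk he p2 E2) (cmk he p2i E3) (cmk he q1 F1) (cmk he q2 F2)
      (cmk he q2i F3) (cmk he r G) := by
    have inv : ∀ a b : A, a * b = 1 → a * (b * e) = e := by
      intro a b hab; rw [← mul_assoc, hab, one_mul]
    constructor <;> apply Subtype.ext <;>
      simp only [hadd, hsub, hsmul, hmul, hone, hmk, mul_assoc, E1, E2, E3, F1, F2, F3, G,
        H1, H2, H3]
    · exact inv _ _ p2p2i
    · exact inv _ _ p2ip2
    · exact inv _ _ q2q2i
    · exact inv _ _ q2iq2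
    · exact p2p1
    · exact q2q1
    · exact p2q2
    · exact p2q1
    · exact p1q2
    · exact p1q1
    · exact p2r
    · exact rq2
    · exact p1r
    · exact rq1
    · exact rr
  obtain ⟨φ, h1, h2, h3, h4, h5, h6, h7⟩ := AR_lift hAR
  refine ⟨{ toFun := fun w => (φ w).1, map_add' := ?_, map_smul' := ?_ }, ?_, ?_, ?_, ?_,
    ?_, ?_, ?_, ?_, ?_, ?_, ?_⟩
  · intro x y; rw [map_add]; rfl
  · intro c x; rw [map_smul, hsmul]; rfl
  · intro x y
    change (φ (x * y)).1 = _
    rw [map_mul]; rfl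
  · change (φ 1).1 = _
    rw [map_one]; rfl
  · intro x; exact ((Subsemigroup.mem_corner_iff he).1 (φ x).2).1
  · intro x; exact ((Subsemigroup.mem_corner_iff he).1 (φ x).2).2
  · exact congrArg Subtype.val h1
  · exact congrArg Subtype.val h2
  · exact congrArg Subtype.val h3
  · exact congrArg Subtype.val h4
  · exact congrArg Subtype.val h5
  · exact congrArg Subtype.val h6
  · exact congrArg Subtype.val h7
end corner

theorem LL_all {q t : ℂ} (hq : q ≠ 0) (ht : t ≠ 0) (y : DAHA q t) :
    HR.InL (HR.Lx t (T q t) (X1 q t) (X2 q t) (X1i q t) (X2i q t))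
      (Y1 q t) (Y1i q t) (Y2 q t) (Y2i q t) (y * HR.ee t (T q t)) := by
  have h := HR_self q t
  apply gen_ind (DRel q t) (HR.InL (HR.Lx t (T q t) (X1 q t) (X2 q t) (X1i q t) (X2i q t))
      (Y1 q t) (Y1i q t) (Y2 q t) (Y2i q t))
  · intro w z; exact .add _ _
  · intro c w; exact .smul _ _
  · intro g w hw
    cases g
    · exact h.LL_S ht hw
    · exact h.LL_U ht hw
    · exact h.LL_x1 hq ht hw
    · exact h.LL_x1i hq ht hw
    · exact h.LL_x2 hq ht hw
    · exact h.LL_x2i hq ht hw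
    · exact .y1 _ hw
    · exact .y1i _ hw
    · exact .y2 _ hw
    · exact .y2i _ hw
  · exact HR.LL_e

theorem inj_aux {q t : ℂ} (hq : q ≠ 0) (ht : t ≠ 0) (ht2 : t ^ 2 ≠ -1)
    (Φ : AlgA q t →ₗ[ℂ] DAHA q t) (hmul : ∀ x y, Φ (x * y) = Φ x * Φ y)
    (h1 : Φ 1 = HR.ee t (T q t)) (hl : ∀ x, HR.ee t (T q t) * Φ x = Φ x)
    (hP1 : Φ (P1 q t) = (X1 q t + X2 q t) * HR.ee t (T q t))
    (hP2 : Φ (P2 q t) = X1 q t * X2 q t * HR.ee t (T q t))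
    (hQ1 : Φ (Q1 q t) = (Y1 q t + Y2 q t) * HR.ee t (T q t))
    (hQ2 : Φ (Q2 q t) = Y1 q t * Y2 q t * HR.ee t (T q t))
    (hR : Φ (R q t) = (Y1 q t * X1 q t + (t⁻¹ ^ 2) • (Y2 q t * X2 q t)) * HR.ee t (T q t))
    (w : AlgA q t) (hw : Φ w = 0) : w = 0 := by
  have n2 := HR.ne2 ht2
  have ha := AR_self q t
  obtain ⟨n, hn⟩ := all_GG q t hq w
  obtain ⟨f, g, hfg⟩ := AR.nn_ex ha.q2q1 ha.p2p1 hn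
  have h0 : Φ (Q2 q t ^ n * w * P2 q t ^ n) = 0 := by
    rw [hmul, hmul, hw, mul_zero, zero_mul]
  have key : ∀ (z : ZZ q) (u v : ℂ), v ≠ 0 →
      MvPolynomial.eval ![z.a + z.b, z.a * z.b, u, v] f • ((1, 0) : ℂ × ℂ)
      + MvPolynomial.eval ![z.a + z.b, z.a * z.b, u, v] g •
        ((t⁻¹ ^ 2 * (z.b * u), z.a - t⁻¹ ^ 2 * z.b) : ℂ × ℂ) = 0 := by
    intro z u v hv
    obtain ⟨ρ, rT, rX1, rX2, rY1, rY2⟩ := HR_lift (rep_HR hq t u v ht hv)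
    have re : ρ (HR.ee t (T q t)) v0 = v0 := by
      rw [HR.ee, map_smul, map_add, map_one, map_smul, rT]
      simp only [LinearMap.smul_apply, LinearMap.add_apply, Module.End.one_apply, rS_v0, smul_smul]
      have e3 : (v0 : VV q) + (t * t) • v0 = (1 + t ^ 2) • v0 := by rw [add_smul, one_smul, pow_two]
      rw [e3, smul_smul, inv_mul_cancel₀ n2, one_smul]
    let L : AlgA q t →ₗ[ℂ] ℂ × ℂ :=
      { toFun := fun w => ρ (Φ w) v0 z
        map_add' := by intro x y; simp
        map_smul' := by intro c x; simp }
    have hL : ∀ w, L w = ρ (Φ w) v0 z := fun _ => rfl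
    have q1' : ∀ w, L (Q1 q t * w) = (z.a + z.b) • L w := by
      intro w
      rw [hL, hmul, hQ1, mul_assoc, hl, map_mul, map_add, rY1, rY2, hL, add_smul]; rfl
    have q2' : ∀ w, L (Q2 q t * w) = (z.a * z.b) • L w := by
      intro w
      rw [hL, hmul, hQ2, mul_assoc, hl, map_mul, map_mul, rY1, rY2, hL, mul_smul]; rfl
    have p1' : ∀ w, L (w * P1 q t) = u • L w := by
      intro w
      have : ρ ((X1 q t + X2 q t) * HR.ee t (T q t)) v0 = u • v0 := by
        rw [map_mul, Module.End.mul_apply, re, map_add, rX1, rX2, LinearMap.add_apply,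
          rx1_v0 hq t u v ht, rx2_v0 hq t u v ht]
        funext z; simp [v0]
      rw [hL, hmul, hP1, map_mul, Module.End.mul_apply, this, map_smul]; rfl
    have p2' : ∀ w, L (w * P2 q t) = v • L w := by
      intro w
      have : ρ (X1 q t * X2 q t * HR.ee t (T q t)) v0 = v • v0 := by
        rw [map_mul, Module.End.mul_apply, re, map_mul, rX1, rX2, Module.End.mul_apply,
          rx12_v0 hq t u v ht]
      rw [hL, hmul, hP2, map_mul, Module.End.mul_apply, this, map_smul]; rfl
    have L1 : L 1 = (1, 0) := by
      rw [hL, h1, re]; rfl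
    have LR : L (R q t) = (t⁻¹ ^ 2 * (z.b * u), z.a - t⁻¹ ^ 2 * z.b) := by
      rw [hL, hR, map_mul, Module.End.mul_apply, re, map_add, map_smul, map_mul, map_mul,
        rX1, rX2, rY1, rY2, LinearMap.add_apply, LinearMap.smul_apply, Module.End.mul_apply,
        Module.End.mul_apply (rm ZZ.b),
        rx1_v0 hq t u v ht, rx2_v0 hq t u v ht]
      apply Prod.ext <;> simp [rm] <;> ring
    have e : L (Q2 q t ^ n * w * P2 q t ^ n) = 0 := by
      rw [hL, h0, map_zero]; rfl
    rw [hfg, map_add, AR.eval_nn L _ _ _ _ q1' q2' p1' p2', AR.eval_nn L _ _ _ _ q1' q2' p1' p2',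
      L1, LR] at e
    exact e
  have hg : g = 0 := by
    apply poly_zero q (t⁻¹ ^ 2)
    intro z hz u v hv
    have := congrArg Prod.snd (key z u v hv)
    simp only [Prod.snd_add, Prod.smul_snd, smul_eq_mul, mul_zero, zero_add, Prod.snd_zero] at this
    exact (mul_eq_zero.1 this).resolve_right (sub_ne_zero.2 hz)
  have hf : f = 0 := by
    apply poly_zero q (t⁻¹ ^ 2)
    intro z hz u v hv
    have := congrArg Prod.fst (key z u v hv)
    rw [hg] at this
    simpa using this
  rw [hf, hg, map_zero, map_zero, add_zero] at hfg
  have i1 : Q2i q t ^ n * Q2 q t ^ n = 1 := by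
    rw [← Commute.mul_pow (show Commute (Q2i q t) (Q2 q t) from ha.q2iq2.trans ha.q2q2i.symm),
      ha.q2iq2, one_pow]
  have i2 : P2 q t ^ n * P2i q t ^ n = 1 := by
    rw [← Commute.mul_pow (show Commute (P2 q t) (P2i q t) from ha.p2p2i.trans ha.p2ip2.symm),
      ha.p2p2i, one_pow]
  calc w = Q2i q t ^ n * Q2 q t ^ n * w * (P2 q t ^ n * P2i q t ^ n) := by
        rw [i1, i2, one_mul, mul_one]
    _ = Q2i q t ^ n * (Q2 q t ^ n * w * P2 q t ^ n) * P2i q t ^ n := by simp only [mul_assoc]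
    _ = 0 := by rw [hfg, mul_zero, zero_mul]

theorem main_thm (q t : ℂ) (hq : q ≠ 0) (ht : t ≠ 0) (ht2 : t ^ 2 ≠ -1) :
    ∃ Φ : AlgA q t →ₗ[ℂ] DAHA q t,
      (∀ x y : AlgA q t, Φ (x * y) = Φ x * Φ y) ∧
      Φ 1 = eSym q t ∧
      Function.Injective Φ ∧
      Set.range Φ = {x : DAHA q t | ∃ y : DAHA q t, x = eSym q t * y * eSym q t} ∧
      Φ (P1 q t) = eSym q t * (X1 q t + X2 q t) * eSym q t ∧
      Φ (P2 q t) = eSym q t * (X1 q t * X2 q t) * eSym q t ∧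
      Φ (Q1 q t) = eSym q t * (Y1 q t + Y2 q t) * eSym q t ∧
      Φ (Q2 q t) = eSym q t * (Y1 q t * Y2 q t) * eSym q t ∧
      Φ (R q t) = eSym q t * ((t⁻¹ ^ 2) • (Y1 q t * X1 q t) + Y2 q t * X2 q t) * eSym q t := by
  have h := HR_self q t
  have hE : eSym q t = HR.ee t (T q t) := rfl
  have idem := h.ee_idem ht ht2
  have se := h.e_s_e ht ht2
  have se' : ∀ s, T q t * s = s * T q t → HR.ee t (T q t) * (s * HR.ee t (T q t))
      = s * HR.ee t (T q t) := fun s hs => by rw [← mul_assoc]; exact se s hs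
  have Re := h.e_R_e ht ht2
  obtain ⟨Φ, hmul, h1, hl, hr, hP1, hP2, hP2i, hQ1, hQ2, hQ2i, hR⟩ :=
    corner_map (q := q) (t := t) (e := HR.ee t (T q t)) idem
      (se' _ (h.c_x ht)) (se' _ h.cSD) (se' _ h.c_Di) (se' _ (h.c_y ht)) (se' _ h.c_yy)
      (se' _ h.c_Ei) (by rw [← Re, ← mul_assoc, ← mul_assoc, idem])
      h.DDi h.DiD h.EEi h.EiE (h.rel_P2P1 hq ht) (h.rel_Q2Q1 hq ht) (h.rel_P2Q2 hq ht)
      (h.rel_P2Q1 hq ht) (h.rel_P1Q2 hq ht) (h.rel_P1Q1 hq ht) (h.rel_P2R hq ht)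
      (h.rel_RQ2 hq ht) (h.rel_P1R hq ht) (h.rel_RQ1 hq ht) (h.rel_RR hq ht)
  rw [hE]
  refine ⟨Φ, hmul, h1, ?_, ?_, ?_, ?_, ?_, ?_, ?_⟩
  · apply (injective_iff_map_eq_zero Φ).2
    exact inj_aux hq ht ht2 Φ hmul h1 hl hP1 hP2 hQ1 hQ2 hR
  · apply Set.Subset.antisymm
    · rintro _ ⟨w, rfl⟩
      exact ⟨Φ w, by rw [hl, hr]⟩
    · rintro _ ⟨y, rfl⟩
      have := (h.eL_mem ht ht2 (LinearMap.range Φ) (by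
        rintro _ ⟨a, rfl⟩ _ ⟨b, rfl⟩; exact ⟨a * b, hmul a b⟩)
        ⟨1, h1⟩ ⟨_, hP1⟩ ⟨_, hP2⟩ ⟨_, hP2i⟩ ⟨_, hQ1⟩ ⟨_, hQ2⟩ ⟨_, hQ2i⟩ ⟨_, hR⟩
        (LL_all hq ht y)).1
      rw [← mul_assoc] at this
      exact this
  · rw [hP1, se _ (h.c_x ht)]
  · rw [hP2, se _ h.cSD]
  · rw [hQ1, se _ (h.c_y ht)]
  · rw [hQ2, se _ h.c_yy]
  · rw [hR, Re]

/-- There is a ℂ-algebra isomorphism `Φ` from `𝒜` onto the spherical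
double affine Hecke algebra `eH_{t,q}e`, determined on generators by
`Φ(P₁) = e(X₁+X₂)e`, `Φ(P₂) = e(X₁X₂)e`, `Φ(Q₁) = e(Y₁+Y₂)e`, `Φ(Q₂) = e(Y₁Y₂)e`,
`Φ(R) = e(t⁻²Y₁X₁ + Y₂X₂)e`.  (Since the unit of `eH_{t,q}e` is `e` rather than the
unit of `H_{t,q}`, the map is formalized as a multiplicative ℂ-linear map with
`Φ(1) = e`, injective, and with image exactly `eH_{t,q}e = {e·y·e : y ∈ H_{t,q}}`.) -/
theorem stmt3 (q t : ℂ) (hq : q ≠ 0) (ht : t ≠ 0) (ht2 : t ^ 2 ≠ -1) :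
    ∃ Φ : AlgA q t →ₗ[ℂ] DAHA q t,
      (∀ x y : AlgA q t, Φ (x * y) = Φ x * Φ y) ∧
      Φ 1 = eSym q t ∧
      Function.Injective Φ ∧
      Set.range Φ = {x : DAHA q t | ∃ y : DAHA q t, x = eSym q t * y * eSym q t} ∧
      Φ (P1 q t) = eSym q t * (X1 q t + X2 q t) * eSym q t ∧
      Φ (P2 q t) = eSym q t * (X1 q t * X2 q t) * eSym q t ∧
      Φ (Q1 q t) = eSym q t * (Y1 q t + Y2 q t) * eSym q t ∧
      Φ (Q2 q t) = eSym q t * (Y1 q t * Y2 q t) * eSym q t ∧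
      Φ (R q t) = eSym q t * ((t⁻¹ ^ 2) • (Y1 q t * X1 q t) + Y2 q t * X2 q t) * eSym q t := by
  exact main_thm q t hq ht ht2
end
end
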